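/- Let r ≥ 4 and let p > 3 be prime, and let V be a quasi-Hermitian variety of PG(r,p^4) whose characteristic vector v^V belongs to C_p. Then no line of PG(r,p^4) meets V in exactly i points for any i with 1 < i < p^2 + 1, and no line of PG(r,p^4) meets V in exactly p^4 - p + 1 points. Consequently every line of PG(r,p^4) meets V in exactly 1, p^2 + 1, or p^4 + 1 points. -/

import Mathlib

/-!
Common framework: `ProjPoint F n` is the set of points of the projective space
PG(n-1, |F|) (so PG(r, q²) corresponds to `n = r + 1` and `Fintype.card F = q ^ 2`).
Projective subspaces of projective dimension `k` are the submodules of `Fin n → F`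
of `finrank` equal to `k + 1`; lines have finrank 2, planes finrank 3 and
hyperplanes finrank `n - 1 = r`.
-/

open Module Matrix

/-- The points of the projective space PG(n-1, |F|): one-dimensional subspaces
of `F^n`. -/
def ProjPoint (F : Type) [Field F] (n : ℕ) : Type :=
  {W : Submodule F (Fin n → F) // finrank F W = 1}

/-- The set of projective points lying in a given subspace `W`. -/
def pointsIn (F : Type) [Field F] (n : ℕ) (W : Submodule F (Fin n → F)) :
    Set (ProjPoint F n) :=
  {P | P.1 ≤ W}

/-- The number of points of `V` lying in the subspace `W`. -/
noncomputable def secant (F : Type) [Field F] (n : ℕ) (V : Set (ProjPoint F n))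
    (W : Submodule F (Fin n → F)) : ℕ :=
  (V ∩ pointsIn F n W).ncard

/-- The characteristic vector of a set of projective points, with values in `F_p`. -/
noncomputable def charVec (F : Type) [Field F] (p n : ℕ) (S : Set (ProjPoint F n)) :
    ProjPoint F n → ZMod p :=
  Set.indicator S 1

/-- `C_p`: the `F_p`-code spanned by the characteristic vectors of hyperplanes. -/
def hypCode (F : Type) [Field F] (p n : ℕ) :
    Submodule (ZMod p) (ProjPoint F n → ZMod p) :=
  Submodule.span (ZMod p)
    {v | ∃ H : Submodule F (Fin n → F), finrank F H = n - 1 ∧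
      v = charVec F p n (pointsIn F n H)}

/-- A quasi-Hermitian variety of PG(r, q²): it has the size of a non-singular
Hermitian variety and the same two intersection numbers with hyperplanes.
(All identities are stated multiplied through by `q² - 1`.) -/
def IsQuasiHermitian (F : Type) [Field F] (q r : ℕ)
    (V : Set (ProjPoint F (r + 1))) : Prop :=
  (V.ncard : ℤ) * ((q : ℤ) ^ 2 - 1)
      = ((q : ℤ) ^ (r + 1) + (-1) ^ r) * ((q : ℤ) ^ r - (-1) ^ r) ∧
  ∀ H : Submodule F (Fin (r + 1) → F), finrank F H = r →
    ((secant F (r + 1) V H : ℤ) * ((q : ℤ) ^ 2 - 1)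
        = ((q : ℤ) ^ r + (-1) ^ (r - 1)) * ((q : ℤ) ^ (r - 1) - (-1) ^ (r - 1)) ∨
     (secant F (r + 1) V H : ℤ) * ((q : ℤ) ^ 2 - 1)
        = ((q : ℤ) ^ 2 - 1)
          + (q : ℤ) ^ 2 * (((q : ℤ) ^ (r - 1) + (-1) ^ r) * ((q : ℤ) ^ (r - 2) - (-1) ^ r)))

/-- The zero set, in PG(n-1,|F|), of the Hermitian form `x ↦ xᵀ A x^(q)`. -/
def hermSet (F : Type) [Field F] (q n : ℕ) (A : Matrix (Fin n) (Fin n) F) :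
    Set (ProjPoint F n) :=
  {P | ∀ x ∈ P.1, ∑ i, ∑ j, x i * A i j * (x j) ^ q = 0}

/-- A non-singular Hermitian variety of PG(n-1, q²). -/
def IsNonsingHermitian (F : Type) [Field F] (q n : ℕ)
    (V : Set (ProjPoint F n)) : Prop :=
  ∃ A : Matrix (Fin n) (Fin n) F, IsUnit A.det ∧
    Aᵀ = A.map (fun a => a ^ q) ∧ V = hermSet F q n A

/-- A singular Hermitian variety of PG(n-1, q²) whose singular space (the radical
of the Hermitian form) has projective dimension `d`. -/
def IsSingularHermitian (F : Type) [Field F] (q n d : ℕ)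
    (S : Set (ProjPoint F n)) : Prop :=
  ∃ A : Matrix (Fin n) (Fin n) F,
    Aᵀ = A.map (fun a => a ^ q) ∧
    finrank F (LinearMap.ker (Matrix.toLin' Aᵀ)) = d + 1 ∧
    S = hermSet F q n A

/-- A `d`-singular quasi-Hermitian variety of PG(r, q²). -/
def IsSingularQuasiHermitian (F : Type) [Field F] (q r d : ℕ)
    (S : Set (ProjPoint F (r + 1))) : Prop :=
  ∃ S₀ : Set (ProjPoint F (r + 1)), IsSingularHermitian F q (r + 1) d S₀ ∧
    S.ncard = S₀.ncard ∧
    ∀ H : Submodule F (Fin (r + 1) → F), finrank F H = r →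
      ∃ H₀ : Submodule F (Fin (r + 1) → F), finrank F H₀ = r ∧
        secant F (r + 1) S H = secant F (r + 1) S₀ H₀

/-- `U` is a classical unital (Hermitian curve) of the plane `π` of PG(n-1, q²):
in some coordinatization `e` of `π`, it is the zero set of a non-degenerate
Hermitian form on `F³`. -/
def IsClassicalUnital (F : Type) [Field F] (q n : ℕ)
    (π : Submodule F (Fin n → F)) (U : Set (ProjPoint F n)) : Prop :=
  ∃ e : (Fin 3 → F) →ₗ[F] (Fin n → F), LinearMap.ker e = ⊥ ∧ LinearMap.range e = π ∧
    ∃ A : Matrix (Fin 3) (Fin 3) F, IsUnit A.det ∧ Aᵀ = A.map (fun a => a ^ q) ∧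
      U = {P | ∃ y : Fin 3 → F, y ≠ 0 ∧ P.1 = Submodule.span F {e y} ∧
        ∑ i, ∑ j, y i * A i j * (y j) ^ q = 0}

/-!
Write `Q = p⁴`. Modulo `p` every line meets `V` in one point, because `V` is a codeword. Averaging
over the planes through a line `l` gives a plane `W ⊇ l` with `|V ∩ W| ≤ p⁶ + |V ∩ l|`.

In a plane, restrict a codeword to the lines through a point outside its support. In affine
coordinates it is given by polynomials `g x` of which the `k`-th moment `∑ x, x ^ k * g x` has
degree at most `k`. The order of vanishing of the Hankel determinant of these moments bounds the
weight of the word from below by the size of a secant. For `V ∩ W` this excludes the secants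
strictly between `p² + 1` and `Q + 1 - p²`, and it shows that a light `V ∩ W` is modulo `p` the sum
of the lines almost contained in it. Counting the intersections of these lines, either they are
concurrent, or some line has `p² + 1 - p` points in `V`, or their multiple points form a subplane of
order `p - 1`, which is impossible in characteristic `p`.

Finally, `p² + 1 - p` and then every number from `2` to `p²` is excluded: such a line `l` would have
`|V ∩ W| ≡ |V ∩ l| + 1` modulo `p² - 1` for all planes `W ⊇ l`, and summing over these planes
contradicts the cardinality of `V`.
-/

section PlaneCounting

open Configuration Configuration.ProjectivePlane Finset
open scoped Classical

variable {P L : Type*} [Membership P L]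

/-- The pencil of lines through the point `x`. -/
noncomputable def linesThrough (L : Type*) [Membership P L] [Fintype L] (x : P) : Finset L :=
  {l | x ∈ l}

/-- The range of points on the line `l`. -/
noncomputable def pointsOn (P : Type*) [Membership P L] [Fintype P] (l : L) : Finset P :=
  {x | x ∈ l}

/-- The number of points of `S` on the line `l`. -/
noncomputable def secantCard (S : Finset P) (l : L) : ℕ :=
  #{x ∈ S | x ∈ l}

/-- The number of lines of `M` through the point `x`; this is `secantCard` in the dual plane. -/
noncomputable def lineDegree (M : Finset L) (x : P) : ℕ :=
  #{l ∈ M | x ∈ l}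

@[simp]
lemma mem_linesThrough [Fintype L] {x : P} {l : L} : l ∈ linesThrough L x ↔ x ∈ l := by
  simp [linesThrough]

@[simp]
lemma mem_pointsOn [Fintype P] {x : P} {l : L} : x ∈ pointsOn P l ↔ x ∈ l := by
  simp [pointsOn]

lemma lineDegree_pos {M : Finset L} {x : P} : 0 < lineDegree M x ↔ ∃ l ∈ M, x ∈ l := by
  simp [lineDegree, card_pos, Finset.Nonempty]

lemma secantCard_pos {S : Finset P} {l : L} : 0 < secantCard S l ↔ ∃ x ∈ S, x ∈ l := by
  simp [secantCard, card_pos, Finset.Nonempty]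

lemma secantCard_inter_add_secantCard_sdiff (S T : Finset P) (l : L) :
    secantCard (S ∩ T) l + secantCard (S \ T) l = secantCard S l := by
  rw [secantCard, secantCard, secantCard, ← card_inter_add_card_sdiff {x ∈ S | x ∈ l} T]
  congr 2 <;> ext x <;> simp only [mem_filter, mem_inter, mem_sdiff] <;> tauto

lemma sum_secantCard_eq_sum_lineDegree (S : Finset P) (M : Finset L) :
    ∑ l ∈ M, secantCard S l = ∑ x ∈ S, lineDegree M x :=
  (sum_card_bipartiteAbove_eq_sum_card_bipartiteBelow (fun x l ↦ x ∈ l)).symm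

lemma secantCard_eq_card_filter_pointsOn [Fintype P] (S : Finset P) (l : L) :
    secantCard S l = #{x ∈ pointsOn P l | x ∈ S} := by
  rw [secantCard]
  congr 1
  ext x
  simp [and_comm]

lemma sum_secantCard_mul_eq [Fintype L] (S : Finset P) (φ : L → ℕ) :
    ∑ l, secantCard S l * φ l = ∑ x ∈ S, ∑ l ∈ linesThrough L x, φ l := by
  simp only [secantCard, card_eq_sum_ones, linesThrough, sum_filter, sum_mul, ite_mul, one_mul,
    zero_mul]
  exact sum_comm

lemma line_eq_of_mem [Nondegenerate P L] {x y : P} (hxy : x ≠ y) {l m : L} (hxl : x ∈ l)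
    (hyl : y ∈ l) (hxm : x ∈ m) (hym : y ∈ m) : l = m :=
  (Nondegenerate.eq_or_eq hxl hyl hxm hym).resolve_left hxy

lemma lineDegree_le_one_of_concurrent [Nondegenerate P L] {N : Finset L} {x y : P}
    (hN : ∀ m ∈ N, x ∈ m) (hyx : y ≠ x) : lineDegree N y ≤ 1 := by
  refine card_le_one.2 fun a ha b hb ↦ ?_
  simp only [mem_filter] at ha hb
  exact line_eq_of_mem hyx ha.2 (hN a ha.1) hb.2 (hN b hb.1)

lemma lineDegree_eq_ite_of_concurrent [Nondegenerate P L] {N : Finset L} {x y : P} {l : L}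
    (hN : ∀ m ∈ N, x ∈ m) (hyx : y ≠ x) (hxl : x ∈ l) (hyl : y ∈ l) :
    lineDegree N y = if l ∈ N then 1 else 0 := by
  have hl {m : L} (hm : m ∈ N) (hym : y ∈ m) : m = l := line_eq_of_mem hyx hym (hN m hm) hyl hxl
  split_ifs with h
  · exact (lineDegree_le_one_of_concurrent hN hyx).antisymm (lineDegree_pos.2 ⟨l, h, hyl⟩)
  · refine Nat.eq_zero_of_not_pos fun hpos ↦ ?_
    obtain ⟨m, hm, hym⟩ := lineDegree_pos.1 hpos
    exact h (hl hm hym ▸ hm)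

variable [ProjectivePlane P L] [Fintype P] [Fintype L]

lemma card_linesThrough (x : P) : #(linesThrough L x) = order P L + 1 := by
  rw [← lineCount_eq L x, lineCount, Nat.card_eq_fintype_card, linesThrough, Fintype.card_subtype]

lemma card_pointsOn (l : L) : #(pointsOn P l) = order P L + 1 := by
  rw [← Dual.order P L]
  exact card_linesThrough (P := Dual L) (L := Dual P) l

lemma lineDegree_linesThrough (x y : P) :
    lineDegree (linesThrough L x) y = if y = x then order P L + 1 else 1 := by
  split_ifs with hyx
  · subst hyx
    rw [← card_linesThrough (L := L) y, lineDegree,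
      filter_true_of_mem fun l hl ↦ mem_linesThrough.1 hl]
  · obtain ⟨l, ⟨hyl, hxl⟩, hunique⟩ := HasLines.existsUnique_line P L y x hyx
    refine card_eq_one.2 ⟨l, ?_⟩
    ext m
    simp only [mem_filter, mem_linesThrough, mem_singleton]
    exact ⟨fun hm ↦ hunique m ⟨hm.2, hm.1⟩, fun hm ↦ hm ▸ ⟨hxl, hyl⟩⟩

lemma sum_secantCard_linesThrough (S : Finset P) (x : P) :
    ∑ l ∈ linesThrough L x, secantCard S l = #S + if x ∈ S then order P L else 0 := by
  have hdeg (y : P) :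
      lineDegree (linesThrough L x) y = 1 + if y = x then order P L else 0 := by
    rw [lineDegree_linesThrough]
    split_ifs <;> omega
  simp [sum_secantCard_eq_sum_lineDegree, hdeg, sum_add_distrib]

lemma sum_lineDegree_pointsOn (M : Finset L) (l : L) :
    ∑ x ∈ pointsOn P l, lineDegree M x = #M + if l ∈ M then order P L else 0 := by
  rw [← Dual.order P L]
  exact sum_secantCard_linesThrough (P := Dual L) (L := Dual P) M l

lemma secantCard_add_card_sdiff (S : Finset P) (l : L) :
    secantCard S l + #(pointsOn P l \ S) = order P L + 1 := by
  rw [secantCard_eq_card_filter_pointsOn, sdiff_eq_filter,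
    card_filter_add_card_filter_not, card_pointsOn]

lemma secantCard_le (S : Finset P) (l : L) : secantCard S l ≤ order P L + 1 := by
  have := secantCard_add_card_sdiff S l
  omega

lemma exists_mem_notMem_of_secantCard_lt {S : Finset P} {l : L}
    (h : secantCard S l < order P L + 1) : ∃ x ∈ l, x ∉ S := by
  have hpos : 0 < #(pointsOn P l \ S) := by
    have := secantCard_add_card_sdiff S l
    omega
  obtain ⟨x, hx⟩ := card_pos.1 hpos
  exact ⟨x, by simpa using hx⟩

lemma exists_line_ne (x : P) (l : L) : ∃ m ≠ l, x ∈ m := by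
  have hcard : 1 < #(linesThrough L x) := by
    rw [card_linesThrough]
    have := one_lt_order P L
    omega
  obtain ⟨m, hm, hne⟩ := exists_mem_ne hcard l
  exact ⟨m, hne, mem_linesThrough.1 hm⟩

lemma exists_line_mem_mem (x y : P) : ∃ l : L, x ∈ l ∧ y ∈ l := by
  by_cases hxy : x = y
  · obtain ⟨l, hl⟩ := card_pos.1 (by rw [card_linesThrough (L := L) x]; omega)
    exact ⟨l, mem_linesThrough.1 hl, hxy ▸ mem_linesThrough.1 hl⟩
  · exact ⟨HasLines.mkLine hxy, HasLines.mkLine_ax hxy⟩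

lemma sum_sq_secantCard (S : Finset P) :
    ∑ l : L, secantCard S l ^ 2 = #S * (#S + order P L) := by
  simp only [sq, sum_secantCard_mul_eq, sum_secantCard_linesThrough]
  rw [sum_congr rfl fun x hx ↦ by rw [if_pos hx], sum_const, smul_eq_mul]

lemma sum_secantCard (S : Finset P) :
    ∑ l : L, secantCard S l = #S * (order P L + 1) := by
  simpa [card_linesThrough] using sum_secantCard_mul_eq S fun _ : L ↦ 1

lemma sum_sq_lineDegree (M : Finset L) :
    ∑ x : P, lineDegree M x ^ 2 = #M * (#M + order P L) := by
  rw [← Dual.order P L]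
  exact sum_sq_secantCard (P := Dual L) (L := Dual P) M

lemma sum_lineDegree (M : Finset L) :
    ∑ x : P, lineDegree M x = #M * (order P L + 1) := by
  rw [← Dual.order P L]
  exact sum_secantCard (P := Dual L) (L := Dual P) M

lemma two_mul_sum_secantCard_add_le (S : Finset P) (M : Finset L) :
    2 * ∑ l ∈ M, secantCard S l + #M ≤ 2 * #S + #M ^ 2 := by
  have hterm (d : ℕ) : 3 * d ≤ 2 + d ^ 2 := by
    rcases d with _ | _ | d <;> nlinarith
  have hsum : 3 * ∑ x ∈ S, lineDegree M x ≤ 2 * #S + ∑ x ∈ S, lineDegree M x ^ 2 := by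
    rw [mul_sum, mul_comm 2, ← smul_eq_mul (#S), ← sum_const, ← sum_add_distrib]
    exact sum_le_sum fun x _ ↦ hterm _
  have hexcess : ∑ x ∈ S, lineDegree M x ^ 2 + ∑ x : P, lineDegree M x
      ≤ ∑ x : P, lineDegree M x ^ 2 + ∑ x ∈ S, lineDegree M x := by
    rw [← sum_add_sum_compl S fun x ↦ lineDegree M x,
      ← sum_add_sum_compl S fun x ↦ lineDegree M x ^ 2]
    have : ∑ x ∈ Sᶜ, lineDegree M x ≤ ∑ x ∈ Sᶜ, lineDegree M x ^ 2 :=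
      sum_le_sum fun x _ ↦ Nat.le_self_pow two_ne_zero _
    omega
  rw [sum_sq_lineDegree, sum_lineDegree] at hexcess
  rw [sum_secantCard_eq_sum_lineDegree]
  nlinarith

lemma card_filter_lineDegree_pos_le {M : Finset L} {l : L} (hl : l ∉ M) :
    #{x ∈ pointsOn P l | 0 < lineDegree M x} ≤ #M := by
  calc #{x ∈ pointsOn P l | 0 < lineDegree M x}
      = ∑ x ∈ pointsOn P l, if 0 < lineDegree M x then 1 else 0 := card_filter _ _
    _ ≤ ∑ x ∈ pointsOn P l, lineDegree M x :=
        sum_le_sum fun x _ ↦ by split_ifs <;> omega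
    _ = #M := by rw [sum_lineDegree_pointsOn, if_neg hl, add_zero]

lemma card_le_of_forall_secantCard_le_of_notMem {S : Finset P} {x : P} (hx : x ∉ S) {l : L}
    (hxl : x ∈ l) {d : ℕ} (h : ∀ m : L, x ∈ m → m ≠ l → secantCard S m ≤ d) :
    #S ≤ order P L * d + secantCard S l := by
  have hsum := sum_secantCard_linesThrough (L := L) S x
  rw [if_neg hx, ← sum_erase_add _ _ (mem_linesThrough.2 hxl)] at hsum
  have hle := sum_le_card_nsmul ((linesThrough L x).erase l) (secantCard S) d fun m hm ↦
    h m (mem_linesThrough.1 (mem_of_mem_erase hm)) (ne_of_mem_erase hm)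
  rw [card_erase_of_mem (mem_linesThrough.2 hxl), card_linesThrough, Nat.add_sub_cancel,
    smul_eq_mul] at hle
  linarith

lemma card_filter_lineDegree_pos_of_concurrent {N : Finset L} {x : P} (hN : ∀ m ∈ N, x ∈ m)
    {l : L} (hl : x ∉ l) : #{y ∈ pointsOn P l | 0 < lineDegree N y} = #N := by
  have hsum := sum_lineDegree_pointsOn N l
  rw [if_neg fun h ↦ hl (hN l h), add_zero] at hsum
  rw [card_filter, ← hsum]
  refine sum_congr rfl fun y hy ↦ ?_
  have := lineDegree_le_one_of_concurrent hN (y := y)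
    fun h ↦ hl (h ▸ mem_pointsOn.1 hy)
  split_ifs <;> omega

lemma card_mul_add_one_le_of_le_lineDegree {M : Finset L} {l : L} (hl : l ∈ M) {T : Finset P}
    {d : ℕ} (hT : ∀ x ∈ T, x ∈ l ∧ d + 1 ≤ lineDegree M x) : #T * d + 1 ≤ #M := by
  have hsum := sum_lineDegree_pointsOn M l
  have hsub : T ⊆ pointsOn P l := fun x hx ↦ mem_pointsOn.2 (hT x hx).1
  have hpos : ∀ x ∈ pointsOn P l \ T, 1 ≤ lineDegree M x := fun x hx ↦
    lineDegree_pos.2 ⟨l, hl, mem_pointsOn.1 (mem_sdiff.1 hx).1⟩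
  have hout := card_nsmul_le_sum _ _ _ hpos
  have hin := card_nsmul_le_sum T _ _ fun x hx ↦ (hT x hx).2
  rw [if_pos hl, ← sum_sdiff hsub] at hsum
  rw [card_sdiff_of_subset hsub, card_pointsOn, smul_eq_mul, mul_one] at hout
  have := card_pointsOn (P := P) l ▸ card_le_card hsub
  rw [smul_eq_mul] at hin
  grind

lemma exists_line_mem_disjoint {M : Finset L} {Z : Finset P} {x : P} (hx : x ∉ Z)
    (h : lineDegree M x + #Z ≤ order P L) :
    ∃ l ∉ M, x ∈ l ∧ ∀ y ∈ l, y ∉ Z := by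
  by_contra! hcon
  have hcover : linesThrough L x ⊆
      {l ∈ M | x ∈ l} ∪ {l ∈ linesThrough L x | 0 < secantCard Z l} := by
    intro l hl
    by_cases hlM : l ∈ M
    · simp_all
    · obtain ⟨y, hyl, hyZ⟩ := hcon l hlM (mem_linesThrough.1 hl)
      exact mem_union_right _ (mem_filter.2 ⟨hl, secantCard_pos.2 ⟨y, hyZ, hyl⟩⟩)
  have hmeet : #{l ∈ linesThrough L x | 0 < secantCard Z l} ≤ #Z :=
    card_filter_lineDegree_pos_le (P := Dual L) (L := Dual P) hx
  have := (card_le_card hcover).trans (card_union_le _ _)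
  rw [card_linesThrough] at this
  unfold lineDegree at h
  omega

lemma lineDegree_le_card_filter {M : Finset L} {l : L} {x : P} (hl : l ∈ M) (hx : x ∉ l) :
    lineDegree M x ≤ #{y ∈ pointsOn P l | 2 ≤ lineDegree M y ∧ ∃ m ∈ M, x ∈ m ∧ y ∈ m} := by
  set N : Finset L := {m ∈ M | x ∈ m}
  have hN : ∀ m ∈ N, x ∈ m := fun m hm ↦ (mem_filter.1 hm).2
  change #N ≤ _
  rw [← card_filter_lineDegree_pos_of_concurrent hN hx]
  refine card_le_card fun y hy ↦ ?_
  obtain ⟨hyl, hpos⟩ := mem_filter.1 hy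
  obtain ⟨m, hm, hym⟩ := lineDegree_pos.1 hpos
  obtain ⟨hmM, hxm⟩ := mem_filter.1 hm
  refine mem_filter.2 ⟨hyl, one_lt_card.2 ⟨l, ?_, m, ?_, ?_⟩, m, hmM, hxm, hym⟩
  · exact mem_filter.2 ⟨hl, mem_pointsOn.1 hyl⟩
  · exact mem_filter.2 ⟨hmM, hym⟩
  · rintro rfl
    exact hx hxm

end PlaneCounting

section LineCodes

open Configuration Configuration.ProjectivePlane Finset
open scoped Classical

variable {P L : Type*} [Membership P L] {p : ℕ}

/-- The characteristic vector of a finite set `S` of points, with values in `F_p`. -/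
noncomputable def indVec (p : ℕ) (S : Finset P) : P → ZMod p :=
  fun x ↦ if x ∈ S then 1 else 0

/-- The support of a word, as a finite set of points. -/
noncomputable def wordSupport [Fintype P] (f : P → ZMod p) : Finset P :=
  {x | f x ≠ 0}

@[simp]
lemma mem_wordSupport [Fintype P] {f : P → ZMod p} {x : P} : x ∈ wordSupport f ↔ f x ≠ 0 := by
  simp [wordSupport]

@[simp]
lemma wordSupport_indVec [Fintype P] [Fact p.Prime] (S : Finset P) :
    wordSupport (indVec p S) = S := by
  ext x
  simp [indVec]

lemma sum_indVec_pointsOn [Fintype P] (M : Finset L) (x : P) :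
    ∑ m ∈ M, indVec p (pointsOn P m) x = lineDegree M x := by
  simp [indVec, lineDegree]

lemma sum_indVec_eq_secantCard [Fintype P] (V : Finset P) (l : L) :
    ∑ x ∈ pointsOn P l, indVec p V x = (secantCard V l : ZMod p) := by
  simp [secantCard_eq_card_filter_pointsOn, filter_mem_eq_inter, indVec]

variable [ProjectivePlane P L] [Fintype P] [Fintype L]

/-- The two properties of the code of a Desarguesian projective plane that the counting arguments
use: it contains the lines, and a word vanishing at the point `l ∩ m` has at least
`s' + s * (n + 1 - s)` support points, where `s`, `s'` are the numbers of those on `l`, `m`. -/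
structure IsLineCode (L : Type*) [Membership P L] [ProjectivePlane P L]
    (C : Submodule (ZMod p) (P → ZMod p)) : Prop where
  indVec_pointsOn_mem (l : L) : indVec p (pointsOn P l) ∈ C
  secantCard_add_mul_le {f : P → ZMod p} (hf : f ∈ C) {x : P} {l m : L} (hxl : x ∈ l)
    (hxm : x ∈ m) (hlm : l ≠ m) (hx : f x = 0) :
    secantCard (wordSupport f) m
      + secantCard (wordSupport f) l * (order P L + 1 - secantCard (wordSupport f) l)
      ≤ #(wordSupport f)

namespace IsLineCode

variable {C : Submodule (ZMod p) (P → ZMod p)} {f : P → ZMod p} {q : ℕ}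

lemma secantCard_mul_le (hC : IsLineCode L C) (hf : f ∈ C) (l : L) :
    secantCard (wordSupport f) l * (order P L + 1 - secantCard (wordSupport f) l)
      ≤ #(wordSupport f) := by
  rcases (secantCard_le (wordSupport f) l).eq_or_lt with h | h
  · simp [h]
  · obtain ⟨x, hxl, hx⟩ := exists_mem_notMem_of_secantCard_lt h
    obtain ⟨m, hne, hxm⟩ := exists_line_ne x l
    exact le_of_add_le_right
      (hC.secantCard_add_mul_le hf hxl hxm hne.symm (by simpa using hx))

lemma exists_lt_secantCard (hC : IsLineCode L C) (hq : order P L = q ^ 2) (hf : f ∈ C) {x : P}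
    (hx : f x ≠ 0) : ∃ l : L, x ∈ l ∧ q < secantCard (wordSupport f) l := by
  by_contra! hle
  have hq1 : 1 < q := by
    have := one_lt_order P L
    nlinarith
  obtain ⟨l, hxl, hmax⟩ := exists_max_image (linesThrough L x) (secantCard (wordSupport f))
    (by rw [← card_pos, card_linesThrough]; omega)
  rw [mem_linesThrough] at hxl
  have hkq := hle l hxl
  have hcount : #(wordSupport f) + q ^ 2 ≤ (q ^ 2 + 1) * secantCard (wordSupport f) l := by
    have := sum_le_card_nsmul _ _ _ hmax
    rwa [sum_secantCard_linesThrough, if_pos (mem_wordSupport.2 hx), card_linesThrough, hq,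
      smul_eq_mul] at this
  have hlow := hC.secantCard_mul_le hf l
  have hlt : secantCard (wordSupport f) l < q ^ 2 + 1 := by nlinarith
  rw [hq] at hlow
  have heq : secantCard (wordSupport f) l = q := by
    zify [hlt.le] at hlow hcount hkq ⊢
    nlinarith
  obtain ⟨y, hy, hyl⟩ : ∃ y ∈ wordSupport f, y ∉ l := by
    by_contra! hsub
    have : secantCard (wordSupport f) l = #(wordSupport f) := by
      rw [secantCard, filter_true_of_mem hsub]
    rw [← this, heq] at hlow
    have : 1 < q ^ 2 + 1 - q := by
      have : 2 * q ≤ q ^ 2 := by nlinarith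
      omega
    nlinarith
  obtain ⟨z, hzl, hz⟩ := exists_mem_notMem_of_secantCard_lt (hq ▸ hlt)
  obtain ⟨m, hzm, hym⟩ := exists_line_mem_mem (L := L) z y
  have hpos : 0 < secantCard (wordSupport f) m := secantCard_pos.2 ⟨y, hy, hym⟩
  have hkey := hC.secantCard_add_mul_le hf hzl hzm (fun h ↦ hyl (h ▸ hym)) (by simpa using hz)
  rw [heq, hq] at hkey
  rw [heq] at hcount
  zify [(by nlinarith : q ≤ q ^ 2 + 1)] at hkey hcount hpos
  nlinarith

lemma exists_le_secantCard_add (hC : IsLineCode L C) (hq : order P L = q ^ 2) (hf : f ∈ C)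
    (hcard : #(wordSupport f) + q < q ^ 3) {x : P} (hx : f x ≠ 0) :
    ∃ l : L, x ∈ l ∧ q ^ 2 + 1 ≤ secantCard (wordSupport f) l + q := by
  obtain ⟨l, hxl, hlt⟩ := hC.exists_lt_secantCard hq hf hx
  refine ⟨l, hxl, ?_⟩
  by_contra! hcon
  have hkey := hC.secantCard_mul_le hf l
  rw [hq] at hkey
  zify [(by omega : secantCard (wordSupport f) l ≤ q ^ 2 + 1)] at *
  nlinarith [mul_nonneg (by linarith : (0 : ℤ) ≤ secantCard (wordSupport f) l - (q + 1))
    (by linarith : (0 : ℤ) ≤ q ^ 2 - q - secantCard (wordSupport f) l)]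

variable [Fact p.Prime] {V : Finset P}

lemma secantCard_le_or_le (hC : IsLineCode L C) (hp3 : 3 < p) (hn : order P L = p ^ 4)
    (hV : indVec p V ∈ C) {l : L} (hs : secantCard V l ≡ 1 [MOD p])
    (hcard : #V ≤ p ^ 6 + secantCard V l) :
    secantCard V l ≤ p ^ 2 + 1 ∨ p ^ 4 + 1 ≤ secantCard V l + p ^ 2 := by
  by_contra! hcon
  obtain ⟨hlow, hhigh⟩ := hcon
  have hlow' : p ^ 2 + 1 + p ≤ secantCard V l := by
    refine Nat.ModEq.add_le_of_lt (Nat.ModEq.trans ?_ hs.symm) hlow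
    simp [Nat.ModEq, Nat.add_mod, Nat.pow_mod]
  have hhigh' : secantCard V l + p ^ 2 + p ≤ p ^ 4 + 1 := by
    refine Nat.ModEq.add_le_of_lt ((hs.add_right _).trans ?_) hhigh
    simp [Nat.ModEq, Nat.add_mod, Nat.pow_mod]
  have hkey := hC.secantCard_mul_le hV l
  rw [wordSupport_indVec, hn] at hkey
  zify [(by omega : secantCard V l ≤ p ^ 4 + 1)] at *
  generalize (secantCard V l : ℤ) = s at *
  set a : ℤ := p ^ 2 + p - 1
  have hconcave : a * (p ^ 4 - a) ≤ s * (p ^ 4 - s) := by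
    nlinarith [mul_nonneg (by linarith : 0 ≤ s - a) (by linarith : 0 ≤ (p : ℤ) ^ 4 - a - s)]
  have ha_lt : 2 * a < 3 * p ^ 2 := by nlinarith
  have ha_sq : 4 * (a * a) < 9 * p ^ 4 := by nlinarith
  have hp4 : 3 * (p : ℤ) ^ 4 ≤ (p - 1) * p ^ 4 :=
    mul_le_mul_of_nonneg_right (by linarith) (by positivity)
  nlinarith

lemma lt_card_of_forall_secantCard_le (hC : IsLineCode L C) (hp3 : 3 < p)
    (hn : order P L = p ^ 4) (hV : indVec p V ∈ C) (hne : V.Nonempty)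
    (hs : ∀ l : L, secantCard V l ≡ 1 [MOD p]) (hle : ∀ l : L, secantCard V l ≤ p ^ 2 + 1) :
    p ^ 6 < #V := by
  obtain ⟨x, hx⟩ := hne
  obtain ⟨l, -, hl⟩ := hC.exists_lt_secantCard (hn.trans (pow_mul p 2 2)) hV
    (by simpa [indVec] using hx)
  rw [wordSupport_indVec] at hl
  have hl_eq : secantCard V l = p ^ 2 + 1 := le_antisymm (hle l) hl
  obtain ⟨z, hzl, hz⟩ : ∃ z ∈ l, z ∉ V := exists_mem_notMem_of_secantCard_lt <| by
    rw [hl_eq, hn]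
    have : p ^ 2 < p ^ 4 := Nat.pow_lt_pow_right (by omega) (by omega)
    omega
  have hkey {m : L} (hzm : z ∈ m) (hml : m ≠ l) :
      (secantCard V m + (p ^ 2 + 1) * (p ^ 4 - p ^ 2) : ℤ) ≤ #V := by
    have := hC.secantCard_add_mul_le hV hzl hzm hml.symm (by simpa [indVec] using hz)
    rw [wordSupport_indVec, hl_eq, hn, Nat.add_sub_add_right] at this
    zify [Nat.pow_le_pow_right (by omega : 0 < p) (by omega : 2 ≤ 4)] at this
    exact this
  by_contra! hsmall
  have hm_le (m : L) (hzm : z ∈ m) (hml : m ≠ l) : secantCard V m ≤ p ^ 2 + 1 - p := by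
    have hlt : secantCard V m < p ^ 2 + 1 := by
      have := hkey hzm hml
      zify at hsmall ⊢
      nlinarith
    have hmod : secantCard V m ≡ p ^ 2 + 1 [MOD p] := by
      refine (hs m).trans ?_
      simp [Nat.ModEq, Nat.add_mod, Nat.pow_mod]
    have := Nat.ModEq.add_le_of_lt hmod hlt
    omega
  have hcount : (#V : ℤ) ≤ p ^ 4 * (p ^ 2 + 1 - p) + (p ^ 2 + 1) := by
    have hle := card_le_of_forall_secantCard_le_of_notMem hz hzl hm_le
    rw [hl_eq, hn] at hle
    zify [(by nlinarith : p ≤ p ^ 2 + 1)] at hle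
    linarith
  obtain ⟨m, hml, hzm⟩ := exists_line_ne z l
  have hm := hkey hzm hml
  zify at hp3
  nlinarith [pow_pos (by linarith : (0 : ℤ) < p) 2, pow_pos (by linarith : (0 : ℤ) < p) 4]

end IsLineCode

lemma secantCard_eq_one_or_of_card {q : ℕ} (hq : order P L = q ^ 2) {S : Finset P}
    (hcard : q ^ 3 < #S) (hpos : ∀ l : L, 0 < secantCard S l)
    (hle : ∀ l : L, secantCard S l ≤ q + 1) (l : L) :
    secantCard S l = 1 ∨ secantCard S l = q + 1 := by
  have hterm (m : L) : 0 ≤ ((secantCard S m : ℤ) - 1) * (q + 1 - secantCard S m) := by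
    have := hpos m
    have := hle m
    exact mul_nonneg (by omega) (by omega)
  have hexpand : ∑ m : L, ((secantCard S m : ℤ) - 1) * (q + 1 - secantCard S m)
      = (q + 2) * ∑ m : L, (secantCard S m : ℤ) - ∑ m : L, (secantCard S m : ℤ) ^ 2
        - Fintype.card L * (q + 1) := by
    rw [mul_sum, ← card_univ, ← nsmul_eq_mul, ← sum_const, ← sum_sub_distrib, ← sum_sub_distrib]
    exact sum_congr rfl fun m _ ↦ by ring
  have hfirst := sum_secantCard (L := L) S
  have hsecond := sum_sq_secantCard (L := L) S
  have hlines := ProjectivePlane.card_lines P L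
  have hq1 : 1 < q := by
    have := one_lt_order P L
    nlinarith
  rw [hq] at hfirst hsecond hlines
  zify at hfirst hsecond hlines hcard hq1
  rw [hfirst, hsecond, hlines] at hexpand
  have hnonpos : ∑ m : L, ((secantCard S m : ℤ) - 1) * (q + 1 - secantCard S m) ≤ 0 := by
    obtain ⟨e, he, hSe⟩ : ∃ e : ℤ, 0 ≤ e ∧ (#S : ℤ) = q ^ 3 + 1 + e :=
      ⟨#S - q ^ 3 - 1, by linarith, by ring⟩
    rw [hexpand, hSe]
    nlinarith [mul_nonneg he (by nlinarith : (0 : ℤ) ≤ q ^ 3 - q ^ 2 - q + e)]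
  have hzero := (sum_eq_zero_iff_of_nonneg fun m _ ↦ hterm m).1
    (hnonpos.antisymm (sum_nonneg fun m _ ↦ hterm m)) l (mem_univ l)
  rcases mul_eq_zero.1 hzero with h | h <;> omega

end LineCodes

section DenseLines

open Configuration Configuration.ProjectivePlane Finset
open scoped Classical

variable {P L : Type*} [Membership P L] [ProjectivePlane P L] [Fintype L]

/-- The lines missing at most `d` of their points in `S`. -/
noncomputable def denseLines (L : Type*) [Membership P L] [ProjectivePlane P L] [Fintype L]
    (d : ℕ) (S : Finset P) : Finset L :=
  {l | order P L + 1 ≤ secantCard S l + d}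

@[simp]
lemma mem_denseLines {d : ℕ} {S : Finset P} {l : L} :
    l ∈ denseLines L d S ↔ order P L + 1 ≤ secantCard S l + d := by
  simp [denseLines]

lemma card_mul_le_sum_secantCard_add {d : ℕ} {S : Finset P} {M : Finset L}
    (hM : M ⊆ denseLines L d S) :
    #M * (order P L + 1) ≤ ∑ l ∈ M, secantCard S l + #M * d := by
  rw [← smul_eq_mul, ← smul_eq_mul (#M) d, ← sum_const, ← sum_const, ← sum_add_distrib]
  exact sum_le_sum fun l hl ↦ mem_denseLines.1 (hM hl)

variable [Fintype P]

lemma card_pointsOn_sdiff_le {d : ℕ} {S : Finset P} {l : L} (hl : l ∈ denseLines L d S) :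
    #(pointsOn P l \ S) ≤ d := by
  have := secantCard_add_card_sdiff S l
  have := mem_denseLines.1 hl
  omega

variable {q : ℕ} {V : Finset P}

lemma card_denseLines_le (hn : order P L = q ^ 2) (hq : 12 ≤ q)
    (hcard : #V ≤ (q + 1) * (q ^ 2 + 1)) : #(denseLines L q V) ≤ q + 2 := by
  by_contra! hcon
  obtain ⟨M, hM, hMcard⟩ := exists_subset_card_eq (show q + 3 ≤ #(denseLines L q V) by omega)
  have hunion := two_mul_sum_secantCard_add_le V M
  have hdense := card_mul_le_sum_secantCard_add hM
  rw [hMcard] at hunion hdense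
  rw [hn] at hdense
  nlinarith

lemma secantCard_le_of_two_le_lineDegree {S : Finset P} (hcard : #(denseLines L q V) ≤ q + 2)
    (hpos : ∀ x ∈ S, 0 < lineDegree (denseLines L q V) x)
    (htwo : ∀ x ∈ S, x ∈ V → 2 ≤ lineDegree (denseLines L q V) x) (l : L) :
    secantCard S l ≤ 2 * q + 2 := by
  rw [secantCard_eq_card_filter_pointsOn]
  by_cases hl : l ∈ denseLines L q V
  · set T : Finset P := {x ∈ pointsOn P l | 2 ≤ lineDegree (denseLines L q V) x}
    have hT : #T * 1 + 1 ≤ #(denseLines L q V) :=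
      card_mul_add_one_le_of_le_lineDegree hl fun x hx ↦ by simpa [T] using hx
    have hsub : {x ∈ pointsOn P l | x ∈ S} ⊆ (pointsOn P l \ V) ∪ T := by
      intro x hx
      obtain ⟨hxl, hxS⟩ := mem_filter.1 hx
      by_cases hxV : x ∈ V
      · exact mem_union_right _ (mem_filter.2 ⟨hxl, htwo x hxS hxV⟩)
      · exact mem_union_left _ (mem_sdiff.2 ⟨hxl, hxV⟩)
    have := (card_le_card hsub).trans (card_union_le _ _)
    have := card_pointsOn_sdiff_le hl
    omega
  · have hsub : {x ∈ pointsOn P l | x ∈ S} ⊆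
        {x ∈ pointsOn P l | 0 < lineDegree (denseLines L q V) x} :=
      fun x hx ↦ mem_filter.2 ⟨(mem_filter.1 hx).1, hpos x (mem_filter.1 hx).2⟩
    have := (card_le_card hsub).trans (card_filter_lineDegree_pos_le hl)
    omega

lemma secantCard_union_sdiff_le {g l : L} (hgl : g ≠ l) :
    secantCard ({y ∈ V | y ∉ g} ∪ (pointsOn P g \ V)) l ≤ secantCard V l + 1 := by
  have hmeet : #{y ∈ pointsOn P l | 0 < lineDegree {g} y} ≤ #{g} :=
    card_filter_lineDegree_pos_le (mt mem_singleton.1 hgl.symm)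
  rw [card_singleton] at hmeet
  rw [secantCard_eq_card_filter_pointsOn, secantCard_eq_card_filter_pointsOn]
  refine (card_le_card fun y hy ↦ ?_).trans
    ((card_union_le _ _).trans (Nat.add_le_add_left hmeet _))
  simp only [mem_union, mem_filter, mem_pointsOn, mem_sdiff, lineDegree_pos, mem_singleton,
    exists_eq_left] at hy ⊢
  tauto

variable {p : ℕ} [Fact p.Prime] {C : Submodule (ZMod p) (P → ZMod p)}

namespace IsLineCode

lemma exists_mem_denseLines (hC : IsLineCode L C) (hn : order P L = q ^ 2) (hq : 5 ≤ q)
    (hV : indVec p V ∈ C) (hgap : ∀ l : L, secantCard V l ≤ q + 1 ∨ l ∈ denseLines L q V)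
    (hne : (denseLines L q V).Nonempty) {x : P} (hx : x ∈ V) : ∃ l ∈ denseLines L q V, x ∈ l := by
  by_contra! hcon
  have hshort : ∀ l ∈ linesThrough L x, secantCard V l ≤ q + 1 := fun l hl ↦
    (hgap l).resolve_right fun h ↦ hcon l h (mem_linesThrough.1 hl)
  have hcount := sum_le_card_nsmul _ _ _ hshort
  rw [sum_secantCard_linesThrough, if_pos hx, card_linesThrough, hn, smul_eq_mul] at hcount
  obtain ⟨g, hg⟩ := hne
  have hxg : x ∉ g := hcon g hg
  set f : P → ZMod p := indVec p V - indVec p (pointsOn P g) with hf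
  have hfC : f ∈ C := C.sub_mem hV (hC.indVec_pointsOn_mem g)
  have hfx : f x ≠ 0 := by simp [hf, indVec, hx, hxg]
  have hsub : wordSupport f ⊆ {y ∈ V | y ∉ g} ∪ (pointsOn P g \ V) := by
    intro y hy
    rw [mem_wordSupport] at hy
    by_cases hyV : y ∈ V <;> by_cases hyg : y ∈ g <;> simp_all [indVec]
  have hcard : #(wordSupport f) + q < q ^ 3 := by
    have hle := (card_le_card hsub).trans (card_union_le _ _)
    have hholes := card_pointsOn_sdiff_le hg
    have hsplit : secantCard V g + #{y ∈ V | y ∉ g} = #V := card_filter_add_card_filter_not _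
    have hdense := mem_denseLines.1 hg
    rw [hn] at hdense
    nlinarith
  obtain ⟨l, hxl, hl⟩ := hC.exists_le_secantCard_add hn hfC hcard hfx
  have hle : secantCard (wordSupport f) l ≤ secantCard V l + 1 :=
    (card_le_card (filter_subset_filter _ hsub)).trans
      (secantCard_union_sdiff_le (ne_of_mem_of_not_mem' hxl hxg).symm)
  have := hshort l (mem_linesThrough.2 hxl)
  nlinarith

-- The difference of `V` and the sum of its dense lines is a word too light to be nonzero.
lemma natCast_lineDegree_denseLines (hC : IsLineCode L C) (hn : order P L = q ^ 2) (hq : 12 ≤ q)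
    (hV : indVec p V ∈ C) (hgap : ∀ l : L, secantCard V l ≤ q + 1 ∨ l ∈ denseLines L q V)
    (hcard : #V ≤ (q + 1) * (q ^ 2 + 1)) (hne : (denseLines L q V).Nonempty) (x : P) :
    (lineDegree (denseLines L q V) x : ZMod p) = indVec p V x := by
  set M := denseLines L q V
  have hMcard : #M ≤ q + 2 := card_denseLines_le hn hq hcard
  by_contra hx
  set f : P → ZMod p := indVec p V - ∑ m ∈ M, indVec p (pointsOn P m) with hf
  have hfC : f ∈ C := C.sub_mem hV (C.sum_mem fun m _ ↦ hC.indVec_pointsOn_mem m)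
  have hf_apply (y : P) : f y = indVec p V y - lineDegree M y := by
    rw [← sum_indVec_pointsOn]
    simp [hf]
  have hpos : ∀ y ∈ wordSupport f, 0 < lineDegree M y := by
    intro y hy
    by_cases hyV : y ∈ V
    · exact lineDegree_pos.2 (hC.exists_mem_denseLines hn (by omega) hV hgap hne hyV)
    · refine Nat.pos_of_ne_zero fun h ↦ mem_wordSupport.1 hy ?_
      simp [hf_apply, h, indVec, hyV]
  have htwo : ∀ y ∈ wordSupport f, y ∈ V → 2 ≤ lineDegree M y := by
    intro y hy hyV
    have hone : lineDegree M y ≠ 1 := fun h ↦ mem_wordSupport.1 hy <| by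
      simp [hf_apply, h, indVec, hyV]
    have := hpos y hy
    omega
  have hsecant : ∀ l ∈ M, secantCard (wordSupport f) l ≤ 2 * q + 2 := fun l _ ↦
    secantCard_le_of_two_le_lineDegree hMcard hpos htwo l
  have hlight : #(wordSupport f) ≤ (q + 2) * (2 * q + 2) := by
    calc #(wordSupport f) = #(wordSupport f) • 1 := by rw [smul_eq_mul, mul_one]
      _ ≤ ∑ y ∈ wordSupport f, lineDegree M y := card_nsmul_le_sum _ _ _ hpos
      _ = ∑ l ∈ M, secantCard (wordSupport f) l := (sum_secantCard_eq_sum_lineDegree _ _).symm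
      _ ≤ #M * (2 * q + 2) := by simpa using sum_le_card_nsmul _ _ _ hsecant
      _ ≤ _ := Nat.mul_le_mul_right _ hMcard
  obtain ⟨l, -, hl⟩ := hC.exists_le_secantCard_add hn hfC (x := x) (by nlinarith)
    (by rw [hf_apply]; exact sub_ne_zero.2 (Ne.symm hx))
  have := secantCard_le_of_two_le_lineDegree hMcard hpos htwo l
  nlinarith

end IsLineCode

end DenseLines

section SmallLineSums

open Configuration Configuration.ProjectivePlane Finset
open scoped Classical

variable {P L : Type*} [Membership P L] {p k : ℕ} {V : Finset P} {M : Finset L}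

/-- A point set `S` and line set `M` carrying a subplane of order `k`. -/
structure IsSubplane (S : Finset P) (M : Finset L) (k : ℕ) : Prop where
  exists_line {x y : P} (hx : x ∈ S) (hy : y ∈ S) (hxy : x ≠ y) : ∃ l ∈ M, x ∈ l ∧ y ∈ l
  exists_point {l m : L} (hl : l ∈ M) (hm : m ∈ M) (hlm : l ≠ m) : ∃ x ∈ S, x ∈ l ∧ x ∈ m
  secantCard_eq {l : L} (hl : l ∈ M) : secantCard S l = k + 1
  exists_config : ∃ x ∈ S, ∃ l ∈ M, ∃ m ∈ M, ∃ g ∈ M, l ≠ m ∧ x ∈ l ∧ x ∈ m ∧ x ∉ g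

/-- The points lying on at least two lines of `M`. -/
noncomputable def multiplePoints [Fintype P] (M : Finset L) : Finset P :=
  {x | 2 ≤ lineDegree M x}

@[simp]
lemma mem_multiplePoints [Fintype P] {x : P} :
    x ∈ multiplePoints M ↔ 2 ≤ lineDegree M x := by
  simp [multiplePoints]

/-- `V` is modulo `p` the sum of the lines in `M`, and these are about `p ^ 2` in number. -/
structure IsSmallLineSum (p : ℕ) (V : Finset P) (M : Finset L) : Prop where
  natCast_lineDegree (x : P) : (lineDegree M x : ZMod p) = indVec p V x
  card_modEq : #M ≡ 1 [MOD p]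
  card_le : #M ≤ p * p + 1

lemma mem_multiplePoints_of_mem_mem [Fintype P] {l m : L} (hl : l ∈ M) (hm : m ∈ M)
    (hlm : l ≠ m) {x : P} (hxl : x ∈ l) (hxm : x ∈ m) : x ∈ multiplePoints M :=
  mem_multiplePoints.2 <|
    one_lt_card.2 ⟨l, mem_filter.2 ⟨hl, hxl⟩, m, mem_filter.2 ⟨hm, hxm⟩, hlm⟩

lemma exists_notMem_of_two_le_secantCard_multiplePoints [Nondegenerate P L] [Fintype P] {g : L}
    (hg : g ∈ M) (h : 2 ≤ secantCard (multiplePoints M) g) (x : P) : ∃ l ∈ M, x ∉ l := by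
  by_cases hxg : x ∈ g
  · obtain ⟨y, hy, hyx⟩ := exists_mem_ne h x
    obtain ⟨hyM, hyg⟩ := mem_filter.1 hy
    obtain ⟨l, hl, hlg⟩ := exists_mem_ne (mem_multiplePoints.1 hyM) g
    obtain ⟨hlM, hyl⟩ := mem_filter.1 hl
    exact ⟨l, hlM, fun hxl ↦ hlg (line_eq_of_mem hyx hyl hxl hyg hxg)⟩
  · exact ⟨g, hg, hxg⟩

namespace IsSmallLineSum

lemma exists_card_eq (hM : IsSmallLineSum p V M) (hp : 1 < p) : ∃ k ≤ p, #M = k * p + 1 := by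
  have hmod : #M % p = 1 := Eq.trans hM.card_modEq (Nat.mod_eq_of_lt hp)
  have hdiv := Nat.div_add_mod' (#M) p
  rw [hmod] at hdiv
  refine ⟨#M / p, ?_, hdiv.symm⟩
  have := hM.card_le
  exact Nat.le_of_mul_le_mul_right (by omega) (by omega : 0 < p)

lemma lineDegree_modEq (hM : IsSmallLineSum p V M) (x : P) :
    lineDegree M x ≡ if x ∈ V then 1 else 0 [MOD p] := by
  rw [← ZMod.natCast_eq_natCast_iff, hM.natCast_lineDegree]
  simp [indVec]

lemma le_lineDegree [Fintype P] (hM : IsSmallLineSum p V M) {x : P} (hx : x ∈ multiplePoints M) :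
    p ≤ lineDegree M x := by
  rw [mem_multiplePoints] at hx
  refine le_of_add_le_right ((hM.lineDegree_modEq x).symm.add_le_of_lt ?_)
  split_ifs <;> omega

end IsSmallLineSum

variable [ProjectivePlane P L] [Fintype P] [Fintype L]

lemma lineDegree_le_secantCard_multiplePoints {l : L} {x : P} (hl : l ∈ M) (hx : x ∉ l) :
    lineDegree M x ≤ secantCard (multiplePoints M) l := by
  rw [secantCard_eq_card_filter_pointsOn]
  refine (lineDegree_le_card_filter hl hx).trans (card_le_card fun y hy ↦ ?_)
  simp only [mem_filter, mem_multiplePoints] at hy ⊢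
  exact ⟨hy.1, hy.2.1⟩

lemma exists_mem_multiplePoints (hM : M.Nonempty) (hnc : ∀ x : P, ∃ l ∈ M, x ∉ l) :
    ∃ x ∈ multiplePoints M, ∃ l ∈ M, ∃ m ∈ M, l ≠ m ∧ x ∈ l ∧ x ∈ m := by
  obtain ⟨l, hl⟩ := hM
  obtain ⟨y, hy⟩ := card_pos.1 (by rw [card_pointsOn (P := P) l]; omega)
  obtain ⟨m, hm, hym⟩ := hnc y
  have hlm : l ≠ m := by
    rintro rfl
    exact hym (mem_pointsOn.1 hy)
  obtain ⟨hxl, hxm⟩ := HasPoints.mkPoint_ax (P := P) hlm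
  exact ⟨_, mem_multiplePoints_of_mem_mem hl hm hlm hxl hxm, l, hl, m, hm, hlm, hxl, hxm⟩

lemma IsLineCode.isSmallLineSum_denseLines [Fact p.Prime] {C : Submodule (ZMod p) (P → ZMod p)}
    (hC : IsLineCode L C) (hp3 : 3 < p) (hn : order P L = p ^ 4)
    (hV : indVec p V ∈ C) (hs : ∀ l : L, secantCard V l ≡ 1 [MOD p])
    (hgap : ∀ l : L, secantCard V l ≤ p ^ 2 + 1 ∨ l ∈ denseLines L (p ^ 2) V)
    (hcard : #V ≤ (p ^ 2 + 1) * (p ^ 4 + 1)) (hne : (denseLines L (p ^ 2) V).Nonempty) :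
    IsSmallLineSum p V (denseLines L (p ^ 2) V) := by
  have hn' : order P L = (p ^ 2) ^ 2 := hn.trans (pow_mul p 2 2)
  have hq : 12 ≤ p ^ 2 := by nlinarith
  have hcard' : #V ≤ (p ^ 2 + 1) * ((p ^ 2) ^ 2 + 1) := by rwa [← pow_mul]
  have hdeg := hC.natCast_lineDegree_denseLines hn' hq hV hgap hcard' hne
  have hmod : #(denseLines L (p ^ 2) V) ≡ 1 [MOD p] := by
    obtain ⟨g, hg⟩ := hne
    have hsum := sum_indVec_eq_secantCard (p := p) V g
    simp only [← hdeg] at hsum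
    rw [← Nat.cast_sum, sum_lineDegree_pointsOn, if_pos hg, ZMod.natCast_eq_natCast_iff, hn]
      at hsum
    refine Nat.ModEq.trans ?_ (hsum.trans (hs g))
    simp [Nat.ModEq, Nat.add_mod, Nat.pow_mod]
  refine ⟨hdeg, hmod, ?_⟩
  by_contra! hcon
  have hmod' : p * p + 1 ≡ #(denseLines L (p ^ 2) V) [MOD p] :=
    Nat.ModEq.trans (by simp [Nat.ModEq, Nat.add_mod]) hmod.symm
  have := hmod'.add_le_of_lt hcon
  have := card_denseLines_le hn' hq hcard'
  nlinarith

namespace IsSmallLineSum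

lemma lineDegree_le (hM : IsSmallLineSum p V M) (hp3 : 3 < p) (hnc : ∀ x : P, ∃ l ∈ M, x ∉ l)
    (x : P) : lineDegree M x ≤ p + 1 := by
  obtain ⟨l, hl, hxl⟩ := hnc x
  have hdeg := lineDegree_le_secantCard_multiplePoints hl hxl
  have hcount : secantCard (multiplePoints M) l * (p - 1) + 1 ≤ #M := by
    refine card_mul_add_one_le_of_le_lineDegree hl fun y hy ↦ ?_
    rw [mem_filter] at hy
    have := hM.le_lineDegree hy.1
    exact ⟨hy.2, by omega⟩
  have := hM.card_le
  obtain ⟨r, rfl⟩ : ∃ r, p = r + 1 := ⟨p - 1, by omega⟩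
  rw [Nat.add_sub_cancel] at hcount
  by_contra! hcon
  nlinarith

lemma lineDegree_eq (hM : IsSmallLineSum p V M) (hp3 : 3 < p) (hnc : ∀ x : P, ∃ l ∈ M, x ∉ l)
    (x : P) : lineDegree M x
      = (if x ∈ V then 1 else 0) + p * (if x ∈ multiplePoints M then 1 else 0) := by
  have hmod := hM.lineDegree_modEq x
  have hle := hM.lineDegree_le hp3 hnc x
  by_cases hx : x ∈ multiplePoints M
  · have hp := hM.le_lineDegree hx
    obtain ⟨b, hb⟩ := Nat.exists_eq_add_of_le hp
    have hb' : b ≡ if x ∈ V then 1 else 0 [MOD p] := by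
      rw [hb] at hmod
      simpa [Nat.ModEq] using hmod
    rw [if_pos hx, hb, mul_one, add_comm]
    congr 1
    exact hb'.eq_of_lt_of_lt (by omega) (by split_ifs <;> omega)
  · rw [if_neg hx, mul_zero, add_zero]
    rw [mem_multiplePoints] at hx
    exact hmod.eq_of_lt_of_lt (by omega) (by split_ifs <;> omega)

lemma sum_lineDegree_eq (hM : IsSmallLineSum p V M) (hp3 : 3 < p)
    (hnc : ∀ x : P, ∃ l ∈ M, x ∉ l) (T : Finset P) :
    ∑ x ∈ T, lineDegree M x = #{x ∈ T | x ∈ V} + p * #{x ∈ T | x ∈ multiplePoints M} := by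
  rw [sum_congr rfl fun x _ ↦ hM.lineDegree_eq hp3 hnc x, sum_add_distrib, ← mul_sum,
    card_filter, card_filter]

lemma secantCard_sdiff_add (hM : IsSmallLineSum p V M) (hp : 1 < p) {l : L} (hl : l ∈ M) :
    secantCard (multiplePoints M \ V) l + secantCard V l = order P L + 1 := by
  rw [← secantCard_add_card_sdiff V l, add_comm, secantCard_eq_card_filter_pointsOn (_ \ _)]
  congr 2
  ext x
  simp only [mem_filter, mem_pointsOn, mem_sdiff, mem_multiplePoints]
  refine ⟨fun h ↦ ⟨h.1, h.2.2⟩, fun ⟨hxl, hxV⟩ ↦ ⟨hxl, ?_, hxV⟩⟩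
  have hmod := hM.lineDegree_modEq x
  rw [if_neg hxV] at hmod
  have hpos := lineDegree_pos.2 ⟨l, hl, hxl⟩
  have := hmod.symm.add_le_of_lt hpos
  omega

lemma secantCard_sdiff_eq_or (hM : IsSmallLineSum p V M) (hp3 : 3 < p)
    (hnc : ∀ x : P, ∃ l ∈ M, x ∉ l) (hk : k ≤ p) (hcard : #M = k * p + 1) {l : L} (hl : l ∈ M) :
    secantCard (multiplePoints M \ V) l = 0 ∧ secantCard (multiplePoints M) l = k ∨
      secantCard (multiplePoints M \ V) l = p ∧ secantCard (multiplePoints M) l = k + 1 := by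
  have hsum := sum_lineDegree_pointsOn M l
  rw [hM.sum_lineDegree_eq hp3 hnc, ← secantCard_eq_card_filter_pointsOn,
    ← secantCard_eq_card_filter_pointsOn, if_pos hl, hcard] at hsum
  have hcompl := hM.secantCard_sdiff_add (by omega) hl
  have hle : secantCard (multiplePoints M \ V) l ≤ secantCard (multiplePoints M) l :=
    card_le_card (filter_subset_filter _ sdiff_subset)
  generalize secantCard (multiplePoints M \ V) l = a at *
  generalize secantCard (multiplePoints M) l = d at *
  have hkd : k ≤ d := by nlinarith
  obtain ⟨c, rfl⟩ := Nat.exists_eq_add_of_le hkd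
  have ha : a = p * c := by nlinarith
  have hc : c < 2 := by nlinarith
  interval_cases c
  · exact Or.inl ⟨by simpa using ha, rfl⟩
  · exact Or.inr ⟨by simpa using ha, rfl⟩

lemma secantCard_multiplePoints_le (hM : IsSmallLineSum p V M) (hp3 : 3 < p)
    (hnc : ∀ x : P, ∃ l ∈ M, x ∉ l) (hk : k ≤ p) (hcard : #M = k * p + 1) {l : L} (hl : l ∈ M) :
    secantCard (multiplePoints M) l ≤ k + 1 := by
  rcases hM.secantCard_sdiff_eq_or hp3 hnc hk hcard hl with ⟨-, h⟩ | ⟨-, h⟩ <;> omega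

lemma eq_or_add_one_eq (hM : IsSmallLineSum p V M) (hp3 : 3 < p) (hnc : ∀ x : P, ∃ l ∈ M, x ∉ l)
    (hk : k ≤ p) (hcard : #M = k * p + 1) : k = p ∨ k + 1 = p := by
  obtain ⟨x, hx, -⟩ := exists_mem_multiplePoints (card_pos.1 (by omega)) hnc
  obtain ⟨l, hl, hxl⟩ := hnc x
  have := hM.le_lineDegree hx
  have := lineDegree_le_secantCard_multiplePoints hl hxl
  have := hM.secantCard_multiplePoints_le hp3 hnc hk hcard hl
  omega

lemma lineDegree_eq_of_add_one_eq (hM : IsSmallLineSum p V M) (hp3 : 3 < p)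
    (hnc : ∀ x : P, ∃ l ∈ M, x ∉ l) (hk : k + 1 = p) (hcard : #M = k * p + 1) {x : P}
    (hx : x ∈ multiplePoints M) : lineDegree M x = p := by
  obtain ⟨l, hl, hxl⟩ := hnc x
  refine le_antisymm ?_ (hM.le_lineDegree hx)
  exact (lineDegree_le_secantCard_multiplePoints hl hxl).trans
    (hk ▸ hM.secantCard_multiplePoints_le hp3 hnc (by omega) hcard hl)

lemma secantCard_multiplePoints_eq_of_add_one_eq (hM : IsSmallLineSum p V M) (hp3 : 3 < p)
    (hnc : ∀ x : P, ∃ l ∈ M, x ∉ l) (hk : k + 1 = p) (hcard : #M = k * p + 1) {l : L}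
    (hl : l ∈ M) : secantCard (multiplePoints M) l = p := by
  have hsdiff : multiplePoints M \ V = multiplePoints M := by
    rw [Finset.sdiff_eq_self_iff_disjoint, disjoint_left]
    intro x hx hxV
    have := hM.lineDegree_eq hp3 hnc x
    rw [hM.lineDegree_eq_of_add_one_eq hp3 hnc hk hcard hx, if_pos hxV, if_pos hx] at this
    omega
  have := hM.secantCard_sdiff_eq_or hp3 hnc (by omega) hcard hl
  rw [hsdiff] at this
  omega

lemma exists_line_of_mem_multiplePoints (hM : IsSmallLineSum p V M) (hp3 : 3 < p)
    (hnc : ∀ x : P, ∃ l ∈ M, x ∉ l) (hk : k + 1 = p) (hcard : #M = k * p + 1) {x y : P}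
    (hx : x ∈ multiplePoints M) (hy : y ∈ multiplePoints M) (hxy : x ≠ y) :
    ∃ l ∈ M, x ∈ l ∧ y ∈ l := by
  obtain ⟨l, hl, hyl, hxl⟩ : ∃ l ∈ M, y ∈ l ∧ x ∉ l := by
    obtain ⟨l, hl, m, hm, hlm⟩ := one_lt_card.1 (mem_multiplePoints.1 hy)
    rw [mem_filter] at hl hm
    by_cases hxl : x ∈ l
    · exact ⟨m, hm.1, hm.2, fun hxm ↦ hlm (line_eq_of_mem hxy hxl hl.2 hxm hm.2)⟩
    · exact ⟨l, hl.1, hl.2, hxl⟩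
  have hsub : {z ∈ pointsOn P l | 2 ≤ lineDegree M z ∧ ∃ m ∈ M, x ∈ m ∧ z ∈ m}
      ⊆ {z ∈ pointsOn P l | z ∈ multiplePoints M} := fun z hz ↦ by
    simp_all only [mem_filter, mem_multiplePoints, and_self]
  -- The `p` lines of `M` through `x` already meet `l` in all of its `p` multiple points.
  have heq := eq_of_subset_of_card_le hsub <| by
    rw [← secantCard_eq_card_filter_pointsOn,
      hM.secantCard_multiplePoints_eq_of_add_one_eq hp3 hnc hk hcard hl,
      ← hM.lineDegree_eq_of_add_one_eq hp3 hnc hk hcard hx]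
    exact lineDegree_le_card_filter hl hxl
  have hy' := heq.symm ▸ mem_filter.2 ⟨mem_pointsOn.2 hyl, hy⟩
  exact (mem_filter.1 hy').2.2

lemma isSubplane_multiplePoints (hM : IsSmallLineSum p V M) (hp3 : 3 < p)
    (hnc : ∀ x : P, ∃ l ∈ M, x ∉ l) (hk : k + 1 = p) (hcard : #M = k * p + 1) :
    IsSubplane (multiplePoints M) M k where
  exists_line := hM.exists_line_of_mem_multiplePoints hp3 hnc hk hcard
  exists_point {l m} hl hm hlm := by
    obtain ⟨hxl, hxm⟩ := HasPoints.mkPoint_ax (P := P) hlm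
    exact ⟨_, mem_multiplePoints_of_mem_mem hl hm hlm hxl hxm, hxl, hxm⟩
  secantCard_eq hl := hk ▸ hM.secantCard_multiplePoints_eq_of_add_one_eq hp3 hnc hk hcard hl
  exists_config := by
    obtain ⟨x, hx, l, hl, m, hm, hlm, hxl, hxm⟩ :=
      exists_mem_multiplePoints (card_pos.1 (by omega)) hnc
    obtain ⟨g, hg, hxg⟩ := hnc x
    exact ⟨x, hx, l, hl, m, hm, g, hg, hlm, hxl, hxm, hxg⟩

lemma lineDegree_eq_of_mem_inter (hM : IsSmallLineSum p V M) (hp3 : 3 < p)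
    (hnc : ∀ x : P, ∃ l ∈ M, x ∉ l) {x : P} (hx : x ∈ multiplePoints M ∩ V) :
    lineDegree M x = p + 1 := by
  rw [mem_inter] at hx
  rw [hM.lineDegree_eq hp3 hnc, if_pos hx.2, if_pos hx.1, mul_one, add_comm]

lemma exists_secantCard_sdiff_eq_zero (hM : IsSmallLineSum p V M) (hp3 : 3 < p)
    (hnc : ∀ x : P, ∃ l ∈ M, x ∉ l) (hcard : #M = p * p + 1) :
    ∃ g ∈ M, secantCard (multiplePoints M \ V) g = 0 := by
  by_contra! hne
  have hone : ∀ l ∈ M, secantCard (multiplePoints M ∩ V) l = 1 := fun l hl ↦ by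
    have := secantCard_inter_add_secantCard_sdiff (multiplePoints M) V l
    have := hM.secantCard_sdiff_eq_or hp3 hnc le_rfl hcard hl
    have := hne l hl
    omega
  have hcount := sum_secantCard_eq_sum_lineDegree (multiplePoints M ∩ V) M
  rw [sum_congr rfl hone, sum_congr rfl fun x ↦ hM.lineDegree_eq_of_mem_inter hp3 hnc,
    sum_const, sum_const, hcard, smul_eq_mul, smul_eq_mul, mul_one] at hcount
  have hdvd : p + 1 ∣ (p + 1) * (p - 1) + 2 :=
    ⟨#(multiplePoints M ∩ V), by
      obtain ⟨t, rfl⟩ : ∃ t, p = t + 1 := ⟨p - 1, by omega⟩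
      rw [Nat.add_sub_cancel]
      linarith⟩
  have := Nat.le_of_dvd two_pos ((Nat.dvd_add_right (Nat.dvd_mul_right _ _)).1 hdvd)
  omega

lemma exists_forall_secantCard_sdiff_eq (hM : IsSmallLineSum p V M) (hp3 : 3 < p)
    (hnc : ∀ x : P, ∃ l ∈ M, x ∉ l) (hcard : #M = p * p + 1) :
    ∃ g ∈ M, secantCard (multiplePoints M \ V) g = 0 ∧ #(multiplePoints M ∩ V) = p ∧
      ∀ l ∈ M.erase g, secantCard (multiplePoints M \ V) l = p := by
  obtain ⟨g, hg, hgA⟩ := hM.exists_secantCard_sdiff_eq_zero hp3 hnc hcard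
  have hinter {l : L} (hl : l ∈ M) (h : secantCard (multiplePoints M \ V) l = 0) :
      secantCard (multiplePoints M ∩ V) l = p := by
    have := secantCard_inter_add_secantCard_sdiff (multiplePoints M) V l
    have := hM.secantCard_sdiff_eq_or hp3 hnc le_rfl hcard hl
    omega
  have hon : ∀ {l : L}, l ∈ M → secantCard (multiplePoints M \ V) l = 0 →
      ∀ x ∈ multiplePoints M ∩ V, x ∈ l := fun {l} hl h x hx ↦ by
    by_contra hxl
    have := lineDegree_le_secantCard_multiplePoints hl hxl
    have := hM.lineDegree_eq_of_mem_inter hp3 hnc hx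
    have := secantCard_inter_add_secantCard_sdiff (multiplePoints M) V l
    have := hinter hl h
    omega
  have hcardB : #(multiplePoints M ∩ V) = p := by
    rw [← hinter hg hgA, secantCard, filter_true_of_mem (hon hg hgA)]
  refine ⟨g, hg, hgA, hcardB, fun l hl ↦ ?_⟩
  obtain ⟨hlg, hl⟩ := mem_erase.1 hl
  have hne : secantCard (multiplePoints M \ V) l ≠ 0 := fun h ↦ by
    obtain ⟨x, hx, y, hy, hxy⟩ := one_lt_card.1 (by omega : 1 < #(multiplePoints M ∩ V))
    exact hlg (line_eq_of_mem hxy (hon hl h x hx) (hon hl h y hy) (hon hg hgA x hx)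
      (hon hg hgA y hy))
  have := hM.secantCard_sdiff_eq_or hp3 hnc le_rfl hcard hl
  omega

lemma card_multiplePoints (hM : IsSmallLineSum p V M) (hp3 : 3 < p)
    (hnc : ∀ x : P, ∃ l ∈ M, x ∉ l) (hcard : #M = p * p + 1) :
    #(multiplePoints M) = p + p ^ 2 := by
  have hdeg : ∀ x ∈ multiplePoints M \ V, lineDegree M x = p := fun x hx ↦ by
    rw [mem_sdiff] at hx
    rw [hM.lineDegree_eq hp3 hnc, if_neg hx.2, if_pos hx.1, mul_one, zero_add]
  obtain ⟨g, hg, hgA, hB, hne⟩ := hM.exists_forall_secantCard_sdiff_eq hp3 hnc hcard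
  have hcount := sum_secantCard_eq_sum_lineDegree (multiplePoints M \ V) M
  rw [← add_sum_erase _ _ hg, sum_congr rfl hdeg, sum_congr rfl hne, sum_const, sum_const,
    card_erase_of_mem hg, hcard, hgA] at hcount
  simp only [smul_eq_mul, Nat.add_sub_cancel] at hcount
  have hA : #(multiplePoints M \ V) = p * p := Nat.mul_right_cancel (by omega : 0 < p)
    (by linarith)
  rw [← card_inter_add_card_sdiff (multiplePoints M) V, hB, hA, sq]

lemma card_add_eq (hM : IsSmallLineSum p V M) (hp3 : 3 < p) (hnc : ∀ x : P, ∃ l ∈ M, x ∉ l)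
    (hcard : #M = p * p + 1) : #V + p ^ 3 + p ^ 2 = (p ^ 2 + 1) * (order P L + 1) := by
  have hsum := hM.sum_lineDegree_eq hp3 hnc univ
  rw [sum_lineDegree, filter_univ_mem, filter_univ_mem, hM.card_multiplePoints hp3 hnc hcard,
    hcard] at hsum
  linarith

lemma exists_secantCard_add_eq (hM : IsSmallLineSum p V M) (hp3 : 3 < p)
    (hn : order P L = p ^ 4) (hnc : ∀ x : P, ∃ l ∈ M, x ∉ l) (hcard : #M = p * p + 1) :
    ∃ l : L, secantCard V l + p = p ^ 2 + 1 := by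
  have hD := hM.card_multiplePoints hp3 hnc hcard
  obtain ⟨x, hxD, hxV⟩ : ∃ x ∈ multiplePoints M, x ∉ V := by
    obtain ⟨g, -, -, hB, -⟩ := hM.exists_forall_secantCard_sdiff_eq hp3 hnc hcard
    by_contra! hsub
    rw [inter_eq_left.2 hsub] at hB
    nlinarith
  have hdeg := hM.lineDegree_eq hp3 hnc x
  rw [if_neg hxV, if_pos hxD] at hdeg
  obtain ⟨l, hlM, hxl, hl⟩ := exists_line_mem_disjoint (M := M) (notMem_erase x (multiplePoints M))
    (by
      rw [card_erase_of_mem hxD, hD, hdeg, hn]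
      have : 4 * p ≤ p ^ 2 := by nlinarith
      have : 2 * p ^ 2 ≤ p ^ 4 := by nlinarith
      omega)
  have hmeet : {y ∈ pointsOn P l | y ∈ multiplePoints M} = {x} := by
    ext y
    simp only [mem_filter, mem_pointsOn, mem_singleton]
    refine ⟨fun ⟨hyl, hy⟩ ↦ ?_, fun h ↦ h ▸ ⟨hxl, hxD⟩⟩
    by_contra hne
    exact hl y hyl (mem_erase.2 ⟨hne, hy⟩)
  have hsum := hM.sum_lineDegree_eq hp3 hnc (pointsOn P l)
  rw [sum_lineDegree_pointsOn, if_neg hlM, hmeet, card_singleton, hcard,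
    ← secantCard_eq_card_filter_pointsOn] at hsum
  exact ⟨l, by linarith⟩

lemma card_add_eq_and_exists_secantCard_add_eq (hM : IsSmallLineSum p V M) (hp3 : 3 < p)
    (hn : order P L = p ^ 4) (hnc : ∀ x : P, ∃ l ∈ M, x ∉ l)
    (hsub : ∀ S : Finset P, ¬ IsSubplane S M (p - 1)) :
    #V + p ^ 3 + p ^ 2 = (p ^ 2 + 1) * (p ^ 4 + 1) ∧
      ∃ l : L, secantCard V l + p = p ^ 2 + 1 := by
  obtain ⟨k, hk, hcard⟩ := hM.exists_card_eq (by omega)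
  rcases hM.eq_or_add_one_eq hp3 hnc hk hcard with rfl | hkp
  · exact ⟨hn ▸ hM.card_add_eq hp3 hnc hcard, hM.exists_secantCard_add_eq hp3 hn hnc hcard⟩
  · obtain rfl : k = p - 1 := by omega
    exact (hsub _ (hM.isSubplane_multiplePoints hp3 hnc hkp hcard)).elim

end IsSmallLineSum

end SmallLineSums

section PlaneSecants

open Configuration Configuration.ProjectivePlane Finset
open scoped Classical

variable {P L : Type*} [Membership P L] [ProjectivePlane P L] [Fintype P] [Fintype L]
variable {p : ℕ} {V : Finset P} {M : Finset L}

namespace IsSmallLineSum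

lemma secantCard_eq_or (hM : IsSmallLineSum p V M) (hp3 : 3 < p) (hn : order P L = p ^ 4)
    (hsub : ∀ S : Finset P, ¬ IsSubplane S M (p - 1)) {g : L} (hg : g ∈ M)
    (hs : secantCard V g ≡ 1 [MOD p]) :
    secantCard V g = p ^ 4 + 1 ∨
      secantCard V g + p = p ^ 4 + 1 ∧ ∃ l : L, secantCard V l + p = p ^ 2 + 1 := by
  have hcompl := hM.secantCard_sdiff_add (by omega) hg
  have hcount : secantCard (multiplePoints M \ V) g * (p - 1) + 1 ≤ #M := by
    refine card_mul_add_one_le_of_le_lineDegree hg fun x hx ↦ ?_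
    rw [mem_filter, mem_sdiff] at hx
    have := hM.le_lineDegree hx.1.1
    exact ⟨hx.2, by omega⟩
  have hdvd : p ∣ secantCard (multiplePoints M \ V) g := by
    rw [← Nat.modEq_zero_iff_dvd]
    refine Nat.ModEq.add_right_cancel hs ?_
    rw [hcompl, hn]
    simp [Nat.ModEq, Nat.add_mod, Nat.pow_mod]
  have hle : secantCard (multiplePoints M \ V) g ≤ secantCard (multiplePoints M) g :=
    card_le_card (filter_subset_filter _ sdiff_subset)
  obtain ⟨j, hj⟩ := hdvd
  rw [hj] at hcompl hcount hle
  rw [hn] at hcompl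
  have hj2 : j < 2 := by
    have := hM.card_le
    obtain ⟨t, rfl⟩ : ∃ t, p = t + 1 := ⟨p - 1, by omega⟩
    rw [Nat.add_sub_cancel] at hcount
    by_contra! hcon
    nlinarith [Nat.mul_le_mul_left ((t + 1) * t) hcon]
  interval_cases j
  · exact Or.inl (by omega)
  · have hnc := exists_notMem_of_two_le_secantCard_multiplePoints hg (by omega)
    exact Or.inr ⟨by omega, (hM.card_add_eq_and_exists_secantCard_add_eq hp3 hn hnc hsub).2⟩

lemma card_eq_of_concurrent (hM : IsSmallLineSum p V M) (hp : 1 < p) {x : P}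
    (hx : ∀ m ∈ M, x ∈ m) {l : L} (hl : l ∉ M) (h2 : 2 ≤ secantCard V l) :
    #V = 1 + secantCard V l * order P L := by
  have hdeg_ne (y : P) (hy : y ≠ x) : lineDegree M y = if y ∈ V then 1 else 0 := by
    have := lineDegree_le_one_of_concurrent hx hy
    exact (hM.lineDegree_modEq y).eq_of_lt_of_lt (by omega) (by split_ifs <;> omega)
  have hdeg_x : lineDegree M x = #M := by rw [lineDegree, filter_true_of_mem hx]
  have hxV : x ∈ V := by
    by_contra hxV
    have hmod := (hM.lineDegree_modEq x).symm.trans (hdeg_x ▸ hM.card_modEq)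
    rw [if_neg hxV] at hmod
    exact zero_ne_one (hmod.eq_of_lt_of_lt (by omega) hp)
  have hxl : x ∉ l := by
    intro hxl
    obtain ⟨y, hy, hyx⟩ := exists_mem_ne h2 x
    obtain ⟨hyV, hyl⟩ := mem_filter.1 hy
    have := hdeg_ne y hyx
    rw [lineDegree_eq_ite_of_concurrent hx hyx hxl hyl, if_neg hl, if_pos hyV] at this
    omega
  have hMl : #M = secantCard V l := by
    have hsum := sum_lineDegree_pointsOn M l
    rw [if_neg hl, add_zero] at hsum
    rw [← hsum, secantCard_eq_card_filter_pointsOn, card_filter]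
    exact sum_congr rfl fun y hy ↦ hdeg_ne y fun h ↦ hxl (h ▸ mem_pointsOn.1 hy)
  have hsum := sum_lineDegree (P := P) M
  have hrest : ∑ y ∈ univ.erase x, lineDegree M y = #(V.erase x) := by
    rw [sum_congr rfl fun y hy ↦ hdeg_ne y (ne_of_mem_erase hy), ← card_filter]
    congr 1
    ext y
    simp
  rw [← add_sum_erase _ _ (mem_univ x), hrest, hdeg_x, hMl, card_erase_of_mem hxV] at hsum
  have := card_pos.2 ⟨x, hxV⟩
  have : secantCard V l * (order P L + 1) = secantCard V l + secantCard V l * order P L := by ring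
  omega

end IsSmallLineSum

lemma exists_mem_denseLines_of_notMem {d : ℕ}
    (hgap : ∀ l : L, secantCard V l ≤ d + 1 ∨ l ∈ denseLines L p V)
    (hcard : (d + 1) * (order P L + 1) < #V) {x : P} (hx : x ∉ V) :
    ∃ l ∈ denseLines L p V, x ∈ l := by
  by_contra! hcon
  have hcount := sum_le_card_nsmul (linesThrough L x) (secantCard V) (d + 1) fun l hl ↦
    (hgap l).resolve_right fun h ↦ hcon l h (mem_linesThrough.1 hl)
  rw [sum_secantCard_linesThrough, if_neg hx, card_linesThrough, smul_eq_mul] at hcount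
  nlinarith

lemma le_card_denseLines {d : ℕ} (hgap : ∀ l : L, secantCard V l ≤ d + 1 ∨ l ∈ denseLines L p V)
    (hcard : (d + 1) * (order P L + 1) < #V) {l : L} (hl : l ∉ denseLines L p V) :
    order P L + 1 ≤ secantCard V l + #(denseLines L p V) := by
  have hsub : pointsOn P l \ V ⊆ {x ∈ pointsOn P l | 0 < lineDegree (denseLines L p V) x} := by
    intro x hx
    obtain ⟨hxl, hxV⟩ := mem_sdiff.1 hx
    exact mem_filter.2 ⟨hxl, lineDegree_pos.2 (exists_mem_denseLines_of_notMem hgap hcard hxV)⟩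
  have := (card_le_card hsub).trans (card_filter_lineDegree_pos_le hl)
  have := secantCard_add_card_sdiff V l
  omega

lemma lineDegree_add_card_linesThrough_sdiff (M : Finset L) (x : P) :
    lineDegree M x + #(linesThrough L x \ M) = order P L + 1 :=
  secantCard_add_card_sdiff (P := Dual L) (L := Dual P) M x |>.trans
    (by rw [Dual.order])

lemma card_add_order_le_add_lineDegree_mul {d : ℕ}
    (hgap : ∀ l : L, secantCard V l ≤ d + 1 ∨ l ∈ denseLines L p V) {x : P} (hx : x ∈ V) :
    #V + order P L
      ≤ (order P L + 1) * (d + 1) + lineDegree (denseLines L p V) x * order P L := by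
  have hterm (m : L) :
      secantCard V m ≤ (d + 1) + if m ∈ denseLines L p V then order P L else 0 := by
    have := secantCard_le V m
    split_ifs with hm
    · omega
    · exact (hgap m).resolve_right hm
  have hcount := sum_le_sum (s := linesThrough L x) fun m _ ↦ hterm m
  rw [sum_secantCard_linesThrough, if_pos hx, sum_add_distrib, sum_const, card_linesThrough,
    ← sum_filter, sum_const, smul_eq_mul, smul_eq_mul] at hcount
  have hdeg : lineDegree (denseLines L p V) x = #{m ∈ linesThrough L x | m ∈ denseLines L p V} :=
    congrArg card (by ext m; simp [and_comm])
  rwa [hdeg]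

lemma le_lineDegree_denseLines (hp3 : 3 < p) (hn : order P L = p ^ 4)
    (hgap : ∀ l : L, secantCard V l ≤ p ^ 2 + 1 ∨ l ∈ denseLines L p V)
    (hcard : (p ^ 2 + 1) * (p ^ 4 + 1) < #V) {l : L} (hl : secantCard V l ≤ p ^ 2) {x : P}
    (hx : x ∈ V) : 2 * p ^ 2 + 2 ≤ lineDegree (denseLines L p V) x := by
  have hp2 : 4 * p ≤ p ^ 2 := by nlinarith
  have hp4 : 16 * p ^ 2 ≤ p ^ 4 := by nlinarith
  have hlD : l ∉ denseLines L p V := by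
    rw [mem_denseLines, hn]
    omega
  obtain ⟨M, hM, hMcard⟩ : ∃ M ⊆ denseLines L p V, #M = 4 * p ^ 2 := by
    have := le_card_denseLines hgap (hn ▸ hcard) hlD
    exact exists_subset_card_eq (by omega)
  have hlarge : 4 * p ^ 2 * (p ^ 4 + 1) + 2 * p ^ 2
      ≤ #V + 8 * p ^ 4 + 4 * p ^ 2 * p := by
    have hunion := two_mul_sum_secantCard_add_le V M
    have hdense := card_mul_le_sum_secantCard_add hM
    rw [hMcard] at hunion hdense
    rw [hn] at hdense
    nlinarith
  have hcount := card_add_order_le_add_lineDegree_mul hgap hx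
  rw [hn] at hcount
  by_contra! hcon
  have hdeg := Nat.mul_le_mul_right (p ^ 4) (Nat.le_of_lt_succ hcon)
  have hp3_le : 4 * p ^ 3 ≤ p ^ 4 := by nlinarith [pow_pos (by omega : 0 < p) 3]
  have hp6_le : 16 * p ^ 4 ≤ p ^ 6 := by nlinarith [pow_pos (by omega : 0 < p) 4]
  nlinarith

lemma card_le_secantCard_add_of_concurrent {N : Finset L} {x : P} (hN : ∀ m ∈ N, x ∈ m) {l : L}
    (hl : x ∉ l) : #N ≤ secantCard V l + secantCard {z | 0 < lineDegree N z ∧ z ∉ V} l := by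
  have hsub : {z ∈ pointsOn P l | 0 < lineDegree N z} ⊆ {z ∈ pointsOn P l | z ∈ V} ∪
      {z ∈ pointsOn P l | z ∈ ({z | 0 < lineDegree N z ∧ z ∉ V} : Finset P)} := by
    intro z
    simp only [mem_filter, mem_union, mem_univ, true_and]
    tauto
  rw [secantCard_eq_card_filter_pointsOn, secantCard_eq_card_filter_pointsOn,
    ← card_filter_lineDegree_pos_of_concurrent hN hl]
  exact (card_le_card hsub).trans (card_union_le _ _)

lemma card_filter_lineDegree_pos_notMem_le {d : ℕ} {N : Finset L} (hN : N ⊆ denseLines L d V) :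
    #{z | 0 < lineDegree N z ∧ z ∉ V} ≤ #N * d := by
  have hsub : ({z | 0 < lineDegree N z ∧ z ∉ V} : Finset P) ⊆ N.biUnion (pointsOn P · \ V) := by
    intro z hz
    obtain ⟨hpos, hzV⟩ := (mem_filter.1 hz).2
    obtain ⟨h, hh, hzh⟩ := lineDegree_pos.1 hpos
    exact mem_biUnion.2 ⟨h, hh, mem_sdiff.2 ⟨mem_pointsOn.2 hzh, hzV⟩⟩
  exact (card_le_card hsub).trans <| card_biUnion_le_card_mul _ _ _ fun h hh ↦
    card_pointsOn_sdiff_le (hN hh)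

lemma card_linesThrough_sdiff_erase_le (hp3 : 3 < p)
    (hgap : ∀ l : L, secantCard V l ≤ p ^ 2 + 1 ∨ l ∈ denseLines L p V) {l : L} {x y : P}
    (hxy : x ≠ y) (hxl : x ∈ l) (hyl : y ∈ l) (hy : y ∈ V)
    (hx : 2 * p ^ 2 + 2 ≤ lineDegree (denseLines L p V) x) :
    #((linesThrough L y \ denseLines L p V).erase l) ≤ 2 * p := by
  set U := (linesThrough L y \ denseLines L p V).erase l
  set N : Finset L := {h ∈ denseLines L p V | x ∈ h}
  set Z : Finset P := {z | 0 < lineDegree N z ∧ z ∉ V}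
  have hN : ∀ h ∈ N, x ∈ h := fun h hh ↦ (mem_filter.1 hh).2
  have hU : ∀ u ∈ U, y ∈ u := fun u hu ↦
    mem_linesThrough.1 (mem_sdiff.1 (mem_of_mem_erase hu)).1
  have hlow : ∀ u ∈ U, #N - (p ^ 2 + 1) ≤ secantCard Z u := by
    intro u hu
    obtain ⟨hul, hu'⟩ := mem_erase.1 hu
    have hxu : x ∉ u := fun hxu ↦ hul (line_eq_of_mem hxy hxu (hU u hu) hxl hyl)
    have hshort := (hgap u).resolve_right (mem_sdiff.1 hu').2
    have hle : #N ≤ secantCard V u + secantCard Z u :=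
      card_le_secantCard_add_of_concurrent hN hxu
    omega
  have hZ : #Z ≤ #N * p := card_filter_lineDegree_pos_notMem_le (filter_subset _ _)
  have hcount : #U * (#N - (p ^ 2 + 1)) ≤ #Z := by
    calc #U * (#N - (p ^ 2 + 1)) ≤ ∑ u ∈ U, secantCard Z u := card_nsmul_le_sum _ _ _ hlow
      _ = ∑ z ∈ Z, lineDegree U z := sum_secantCard_eq_sum_lineDegree _ _
      _ ≤ #Z • 1 := sum_le_card_nsmul _ _ _ fun z hz ↦
        lineDegree_le_one_of_concurrent hU fun h ↦ (mem_filter.1 hz).2.2 (h ▸ hy)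
      _ = #Z := by rw [smul_eq_mul, mul_one]
  change 2 * p ^ 2 + 2 ≤ #N at hx
  obtain ⟨d, hd⟩ := Nat.exists_eq_add_of_le (by omega : p ^ 2 + 1 ≤ #N)
  rw [hd, Nat.add_sub_cancel_left] at hcount
  rw [hd] at hZ hx
  by_contra! hcon
  have := Nat.mul_le_mul_right d (Nat.succ_le_of_lt hcon)
  nlinarith

lemma secantCard_wordSupport_le (hgap : ∀ l : L, secantCard V l ≤ p ^ 2 + 1 ∨ l ∈ denseLines L p V)
    {x : P} (hx : x ∈ V) {f : P → ZMod p}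
    (hf : ∀ y, f y = lineDegree {l ∈ denseLines L p V | x ∈ l} y - indVec p V y) {l : L}
    (hl : x ∈ l) : secantCard (wordSupport f) l
      ≤ (p + 1) + if l ∈ linesThrough L x \ denseLines L p V then p ^ 2 + 1 else 0 := by
  have hfy {y : P} (hyx : y ≠ x) (hyl : y ∈ l) :
      f y = (if l ∈ denseLines L p V then 1 else 0) - if y ∈ V then 1 else 0 := by
    rw [hf, lineDegree_eq_ite_of_concurrent (fun h hh ↦ (mem_filter.1 hh).2) hyx hl hyl, indVec]
    simp [hl]
  by_cases hlD : l ∈ denseLines L p V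
  · have hsub : {y ∈ pointsOn P l | y ∈ wordSupport f} ⊆ insert x (pointsOn P l \ V) := by
      intro y hy
      obtain ⟨hyl, hyf⟩ := mem_filter.1 hy
      by_contra hcon
      obtain ⟨hyx, hyV⟩ := not_or.1 (mt mem_insert.2 hcon)
      rw [mem_sdiff, not_and_not_right] at hyV
      refine mem_wordSupport.1 hyf ?_
      rw [hfy hyx (mem_pointsOn.1 hyl), if_pos hlD, if_pos (hyV hyl), sub_self]
    rw [secantCard_eq_card_filter_pointsOn]
    have := (card_le_card hsub).trans (card_insert_le _ _)
    have := card_pointsOn_sdiff_le hlD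
    omega
  · have hsub : {y ∈ wordSupport f | y ∈ l} ⊆ {y ∈ V | y ∈ l} := by
      intro y hy
      obtain ⟨hyf, hyl⟩ := mem_filter.1 hy
      refine mem_filter.2 ⟨by_contra fun hyV ↦ mem_wordSupport.1 hyf ?_, hyl⟩
      rw [hfy (by rintro rfl; exact hyV hx) hyl, if_neg hlD, if_neg hyV, sub_self]
    rw [if_pos (mem_sdiff.2 ⟨mem_linesThrough.2 hl, hlD⟩)]
    exact (card_le_card hsub).trans (((hgap l).resolve_right hlD).trans (by omega))

lemma IsLineCode.le_card_linesThrough_sdiff [Fact p.Prime] {C : Submodule (ZMod p) (P → ZMod p)}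
    (hC : IsLineCode L C) (hp3 : 3 < p) (hn : order P L = p ^ 4) (hV : indVec p V ∈ C)
    (hgap : ∀ l : L, secantCard V l ≤ p ^ 2 + 1 ∨ l ∈ denseLines L p V) {x : P} (hx : x ∈ V)
    (hne : (linesThrough L x \ denseLines L p V).Nonempty) :
    p ≤ #(linesThrough L x \ denseLines L p V) := by
  by_contra! hcon
  set N : Finset L := {l ∈ denseLines L p V | x ∈ l}
  set f : P → ZMod p := ∑ m ∈ N, indVec p (pointsOn P m) - indVec p V with hf
  have hfC : f ∈ C := C.sub_mem (C.sum_mem fun m _ ↦ hC.indVec_pointsOn_mem m) hV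
  have hf_apply (y : P) : f y = lineDegree N y - indVec p V y := by
    rw [← sum_indVec_pointsOn]
    simp [hf]
  have hsecant {l : L} (hl : x ∈ l) := secantCard_wordSupport_le hgap hx hf_apply hl
  have hfx : f x ≠ 0 := by
    have hdeg := congrArg (Nat.cast (R := ZMod p))
      (lineDegree_add_card_linesThrough_sdiff (denseLines L p V) x)
    push_cast [hn] at hdeg
    have hNx : lineDegree N x = lineDegree (denseLines L p V) x := by
      simp [lineDegree, N, filter_filter]
    have heq : f x = -(#(linesThrough L x \ denseLines L p V) : ZMod p) := by
      rw [hf_apply, hNx, indVec, if_pos hx]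
      rw [ZMod.natCast_self, zero_pow four_ne_zero, zero_add] at hdeg
      linear_combination hdeg
    rw [heq, neg_ne_zero, Ne, ZMod.natCast_eq_zero_iff]
    exact Nat.not_dvd_of_pos_of_lt hne.card_pos hcon
  have hlight : #(wordSupport f) + p ^ 2 < (p ^ 2) ^ 3 := by
    have hcount := sum_le_sum (s := linesThrough L x) fun m hm ↦ hsecant (mem_linesThrough.1 hm)
    rw [sum_secantCard_linesThrough, if_pos (mem_wordSupport.2 hfx), sum_add_distrib, sum_const,
      card_linesThrough, ← sum_filter, sum_const, hn, smul_eq_mul, smul_eq_mul,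
      filter_mem_eq_inter, inter_eq_right.2 sdiff_subset] at hcount
    have := Nat.mul_le_mul_right (p ^ 2 + 1) hcon.le
    have : 4 * p ^ 5 ≤ (p ^ 2) ^ 3 := by nlinarith [pow_pos (by omega : 0 < p) 5]
    nlinarith [pow_pos (by omega : 0 < p) 3, pow_pos (by omega : 0 < p) 4]
  obtain ⟨l, hxl, hl⟩ := hC.exists_le_secantCard_add (hn.trans (pow_mul p 2 2)) hfC hlight hfx
  have hle := (hsecant hxl).trans (Nat.add_le_add_left (ite_le_sup _ _ _) _)
  rw [sup_of_le_left (Nat.zero_le _)] at hle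
  have : 4 * p ≤ p ^ 2 := by nlinarith
  have : 16 * p ^ 2 ≤ (p ^ 2) ^ 2 := by nlinarith
  omega

lemma card_multiplePoints_add_le (M : Finset L) : #(multiplePoints (P := P) M) + #M ≤ #M ^ 2 := by
  have hterm (x : P) : (if x ∈ multiplePoints M then 1 else 0) + lineDegree M x
      ≤ lineDegree M x ^ 2 := by
    split_ifs with hx
    · have := mem_multiplePoints.1 hx
      nlinarith
    · rw [zero_add]
      exact Nat.le_self_pow two_ne_zero _
  have hsum := sum_le_sum fun x (_ : x ∈ univ) ↦ hterm x
  rw [sum_add_distrib, ← card_filter, filter_mem_eq_inter, univ_inter, sum_lineDegree,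
    sum_sq_lineDegree] at hsum
  nlinarith

lemma card_le_of_forall_secantCard_le {t d : ℕ} {x : P} {E : Finset L} (hx : ∀ e ∈ E, x ∉ e)
    (hE : ∀ e ∈ E, secantCard V e ≤ d)
    (hcard : #(linesThrough L x \ denseLines L t V) + (#E * d + #E ^ 2) ≤ order P L) :
    #E ≤ t := by
  set Z : Finset P := (E.biUnion fun e ↦ {y ∈ V | y ∈ e}) ∪ multiplePoints E
  have hxE : lineDegree E x = 0 := card_eq_zero.2 (filter_eq_empty_iff.2 fun e he ↦ hx e he)
  have hxZ : x ∉ Z := by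
    simp only [Z, mem_union, mem_biUnion, mem_filter, mem_multiplePoints, hxE]
    rintro (⟨e, he, -, hxe⟩ | h)
    · exact hx e he hxe
    · omega
  have hZ : #Z ≤ #E * d + #E ^ 2 := by
    have := card_multiplePoints_add_le (P := P) E
    have := card_biUnion_le_card_mul E (fun e ↦ {y ∈ V | y ∈ e}) d hE
    have : #Z ≤ #(E.biUnion fun e ↦ {y ∈ V | y ∈ e}) + #(multiplePoints E) := card_union_le _ _
    omega
  have hdeg : lineDegree (linesThrough L x \ denseLines L t V) x
      ≤ #(linesThrough L x \ denseLines L t V) := card_filter_le _ _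
  obtain ⟨h, hh, hxh, hhZ⟩ := exists_line_mem_disjoint hxZ ((Nat.add_le_add hdeg hZ).trans hcard)
  rw [mem_sdiff, mem_linesThrough, not_and_not_right] at hh
  have hsum := sum_lineDegree_pointsOn (P := P) E h
  rw [if_neg fun he ↦ hx h he hxh, add_zero] at hsum
  have hterm : ∀ y ∈ pointsOn P h, lineDegree E y ≤ if y ∉ V then 1 else 0 := by
    intro y hy
    have hyZ := hhZ y (mem_pointsOn.1 hy)
    simp only [Z, mem_union, mem_biUnion, mem_filter, mem_multiplePoints, not_or] at hyZ
    split_ifs with hyV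
    · by_contra! hpos
      obtain ⟨e, he, hye⟩ := lineDegree_pos.1 hpos
      exact hyZ.1 ⟨e, he, hyV, hye⟩
    · omega
  calc #E = ∑ y ∈ pointsOn P h, lineDegree E y := hsum.symm
    _ ≤ ∑ y ∈ pointsOn P h, if y ∉ V then 1 else 0 := sum_le_sum hterm
    _ = #(pointsOn P h \ V) := by rw [← card_filter, sdiff_eq_filter]
    _ ≤ t := card_pointsOn_sdiff_le (hh hxh)

namespace IsLineCode

variable [Fact p.Prime] {C : Submodule (ZMod p) (P → ZMod p)}

lemma exists_card_eq_forall_notMem_denseLines (hC : IsLineCode L C) (hp3 : 3 < p)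
    (hn : order P L = p ^ 4) (hV : indVec p V ∈ C)
    (hgap : ∀ l : L, secantCard V l ≤ p ^ 2 + 1 ∨ l ∈ denseLines L p V) {l : L}
    (hl : l ∉ denseLines L p V) {y z : P} (hyz : y ≠ z) (hy : y ∈ V ∧ y ∈ l)
    (hz : z ∈ V ∧ z ∈ l) : ∃ E : Finset L, #E = 2 * (p - 1) ∧
      ∀ e ∈ E, e ∉ denseLines L p V ∧ ∀ w ∈ l, w ≠ y → w ≠ z → w ∉ e := by
  set U : P → Finset L := fun w ↦ (linesThrough L w \ denseLines L p V).erase l with hU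
  have hcard {w : P} (hw : w ∈ V ∧ w ∈ l) : p - 1 ≤ #(U w) := by
    have hmem : l ∈ linesThrough L w \ denseLines L p V :=
      mem_sdiff.2 ⟨mem_linesThrough.2 hw.2, hl⟩
    have := hC.le_card_linesThrough_sdiff hp3 hn hV hgap hw.1 ⟨l, hmem⟩
    rw [hU, card_erase_of_mem hmem]
    omega
  have hnotMem {w w' : P} (hne : w' ≠ w) (hw : w ∈ l) (hw' : w' ∈ l) {e : L} (he : e ∈ U w) :
      w' ∉ e := fun hw'e ↦ by
    obtain ⟨hel, he⟩ := mem_erase.1 he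
    exact hel (line_eq_of_mem hne.symm (mem_linesThrough.1 (mem_sdiff.1 he).1) hw'e hw hw')
  have hdisj : Disjoint (U y) (U z) := disjoint_left.2 fun e hey hez ↦
    hnotMem hyz.symm hy.2 hz.2 hey (mem_linesThrough.1 (mem_sdiff.1 (mem_of_mem_erase hez)).1)
  obtain ⟨E, hE, hEcard⟩ : ∃ E ⊆ U y ∪ U z, #E = 2 * (p - 1) := by
    refine exists_subset_card_eq ?_
    rw [card_union_of_disjoint hdisj]
    have := hcard hy
    have := hcard hz
    omega
  refine ⟨E, hEcard, fun e he ↦ ?_⟩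
  rcases mem_union.1 (hE he) with he | he
  · exact ⟨(mem_sdiff.1 (mem_of_mem_erase he)).2, fun w hw hwy _ ↦ hnotMem hwy hy.2 hw he⟩
  · exact ⟨(mem_sdiff.1 (mem_of_mem_erase he)).2, fun w hw _ hwz ↦ hnotMem hwz hz.2 hw he⟩

lemma card_le_of_secantCard_le (hC : IsLineCode L C) (hp3 : 3 < p) (hn : order P L = p ^ 4)
    (hV : indVec p V ∈ C) (hgap : ∀ l : L, secantCard V l ≤ p ^ 2 + 1 ∨ l ∈ denseLines L p V)
    {l : L} (h3 : 3 ≤ secantCard V l) (hle : secantCard V l ≤ p ^ 2) :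
    #V ≤ (p ^ 2 + 1) * (p ^ 4 + 1) := by
  by_contra! hcard
  have hp2 : 4 * p ≤ p ^ 2 := by nlinarith
  have hp4 : 4 * p ^ 3 ≤ p ^ 4 := by nlinarith [pow_pos (by omega : 0 < p) 3]
  have hl : l ∉ denseLines L p V := by
    rw [mem_denseLines, hn]
    nlinarith
  obtain ⟨x, hx, y, hy, z, hz, hxy, hxz, hyz⟩ := two_lt_card.1 (show 2 < #{x ∈ V | x ∈ l} from h3)
  rw [mem_filter] at hx hy hz
  obtain ⟨E, hEcard, hE⟩ :=
    hC.exists_card_eq_forall_notMem_denseLines hp3 hn hV hgap hl hyz hy hz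
  have hUx : #(linesThrough L x \ denseLines L p V) ≤ 2 * p + 1 := by
    have hdeg := le_lineDegree_denseLines hp3 hn hgap hcard hle hy.1
    have := card_linesThrough_sdiff_erase_le hp3 hgap hxy.symm hy.2 hx.2 hx.1 hdeg
    rw [card_erase_of_mem (mem_sdiff.2 ⟨mem_linesThrough.2 hx.2, hl⟩)] at this
    omega
  have := card_le_of_forall_secantCard_le (t := p) (fun e he ↦ (hE e he).2 x hx.2 hxy hxz)
    (fun e he ↦ (hgap e).resolve_right (hE e he).1) (by
      rw [hEcard, hn]
      obtain ⟨k, rfl⟩ : ∃ k, p = k + 1 := ⟨p - 1, by omega⟩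
      rw [Nat.add_sub_cancel]
      nlinarith)
  omega

theorem card_eq_or (hC : IsLineCode L C) (hp3 : 3 < p) (hn : order P L = p ^ 4)
    (hsub : ∀ (S : Finset P) (M : Finset L), ¬ IsSubplane S M (p - 1)) (hV : indVec p V ∈ C)
    (hne : V.Nonempty) (hs : ∀ l : L, secantCard V l ≡ 1 [MOD p])
    (hgap : ∀ l : L, secantCard V l ≤ p ^ 2 + 1 ∨ l ∈ denseLines L p V)
    {l : L} (h2 : 2 ≤ secantCard V l) (hle : secantCard V l ≤ p ^ 2) :
    #V = 1 + secantCard V l * p ^ 4 ∨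
      #V + p ^ 3 + p ^ 2 = (p ^ 2 + 1) * (p ^ 4 + 1) ∧ ∃ m : L, secantCard V m + p = p ^ 2 + 1 := by
  have hmod : p + 1 ≤ secantCard V l := by
    have := (hs l).symm.add_le_of_lt (by omega)
    omega
  have hcard := hC.card_le_of_secantCard_le hp3 hn hV hgap (by omega) hle
  have hgap' (m : L) : secantCard V m ≤ p ^ 2 + 1 ∨ m ∈ denseLines L (p ^ 2) V :=
    (hgap m).imp_right fun h ↦ by
      rw [mem_denseLines] at h ⊢
      nlinarith
  by_cases hD : (denseLines L (p ^ 2) V).Nonempty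
  · have hM := hC.isSmallLineSum_denseLines hp3 hn hV hs hgap' hcard hD
    have hl : l ∉ denseLines L (p ^ 2) V := by
      rw [mem_denseLines, hn]
      nlinarith [pow_pos (by omega : 0 < p) 3]
    by_cases hx : ∃ x : P, ∀ m ∈ denseLines L (p ^ 2) V, x ∈ m
    · obtain ⟨x, hx⟩ := hx
      exact .inl (hn ▸ hM.card_eq_of_concurrent (by omega) hx hl h2)
    · push Not at hx
      exact .inr (hM.card_add_eq_and_exists_secantCard_add_eq hp3 hn hx fun S ↦ hsub S _)
  · have hshort (m : L) := (hgap' m).resolve_right fun hm ↦ hD ⟨m, hm⟩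
    have hlarge := hC.lt_card_of_forall_secantCard_le hp3 hn hV hne hs hshort
    have hpos (m : L) : 0 < secantCard V m := Nat.pos_of_ne_zero fun h ↦ by
      have := hs m
      rw [h] at this
      exact zero_ne_one (this.eq_of_lt_of_lt (by omega) (by omega))
    have := secantCard_eq_one_or_of_card (hn.trans (pow_mul p 2 2)) (by rwa [← pow_mul]) hpos
      hshort l
    omega

end IsLineCode

end PlaneSecants

section Moments

open Finset Polynomial
open scoped Classical

variable {F : Type*} [Field F] [Fintype F]

lemma sum_eval_eq_zero_of_natDegree_lt {h : F[X]} (hd : h.natDegree < Fintype.card F - 1) :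
    ∑ x, h.eval x = 0 := by
  simp only [eval_eq_sum_range]
  rw [sum_comm]
  refine sum_eq_zero fun i hi ↦ ?_
  rw [← mul_sum, FiniteField.sum_pow_lt_card_sub_one F i (by have := mem_range.1 hi; omega),
    mul_zero]

lemma natDegree_sum_pow_mul_one_sub_pow_le (α β γ : F) (n : ℕ) :
    (∑ x, C x ^ n * (1 - (C (α * x + β) + C γ * X) ^ (Fintype.card F - 1))).natDegree ≤ n := by
  set N := Fintype.card F - 1
  have expand (x : F) : C x ^ n * (1 - (C (α * x + β) + C γ * X) ^ N) = C (x ^ n) -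
      ∑ i ∈ range (N + 1),
        C (x ^ n * (α * x + β) ^ i * (γ ^ (N - i) * N.choose i)) * X ^ (N - i) := by
    rw [add_pow, mul_sub, mul_one, mul_sum, map_pow]
    congr! 2
    simp only [map_mul, map_pow, mul_pow, map_natCast]
    ring
  simp only [expand, sum_sub_distrib]
  refine (natDegree_sub_le _ _).trans (max_le ?_ ?_)
  · rw [← map_sum, natDegree_C]
    exact zero_le
  rw [sum_comm]
  refine natDegree_sum_le_of_forall_le _ _ fun i hi ↦ ?_
  rw [← sum_mul, ← map_sum, ← sum_mul]
  by_cases hni : N - i ≤ n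
  · exact (natDegree_C_mul_X_pow_le _ _).trans hni
  -- Here `n + i < N`, so `x ↦ x ^ n * (α x + β) ^ i` sums to zero.
  have vanish : ∑ x, x ^ n * (α * x + β) ^ i = 0 := by
    have hdeg : (X ^ n * (C α * X + C β) ^ i : F[X]).natDegree < N := by
      have hpow : ((C α * X + C β) ^ i).natDegree ≤ i * 1 :=
        natDegree_pow_le_of_le i natDegree_linear_le
      refine natDegree_mul_le.trans_lt ?_
      rw [natDegree_X_pow]
      omega
    simpa only [eval_mul, eval_pow, eval_add, eval_X, eval_C]
      using sum_eval_eq_zero_of_natDegree_lt hdeg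
  simp only [vanish, zero_mul, map_zero, natDegree_zero, zero_le]

/-- The `s × s` Hankel matrix of the moments `∑ x, x ^ k * g x` of a family `g` of polynomials
indexed by the field. Its determinant is a polynomial of small degree that vanishes to high order
wherever few of the `g x` are nonzero. -/
noncomputable def momentMatrix (g : F → F[X]) (s : ℕ) : Matrix (Fin s) (Fin s) F[X] :=
  .of fun i j ↦ ∑ x, C x ^ (i + j : ℕ) * g x

lemma natDegree_det_momentMatrix_le {g : F → F[X]}
    (hg : ∀ n, (∑ x, C x ^ n * g x).natDegree ≤ n) (s : ℕ) :
    (momentMatrix g s).det.natDegree ≤ s * (s - 1) := by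
  rw [det_apply]
  refine natDegree_sum_le_of_forall_le _ _ fun σ _ ↦ ?_
  calc (Equiv.Perm.sign σ • ∏ i, momentMatrix g s (σ i) i).natDegree
      ≤ (∏ i, momentMatrix g s (σ i) i).natDegree := by
        rw [Units.smul_def]
        exact natDegree_smul_le _ _
    _ ≤ ∑ i, (momentMatrix g s (σ i) i).natDegree := natDegree_prod_le _ _
    _ ≤ ∑ i, ((σ i : ℕ) + i) := sum_le_sum fun i _ ↦ hg _
    _ = s * (s - 1) := by
        rw [sum_add_distrib, Equiv.sum_comp σ (fun i : Fin s ↦ (i : ℕ)),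
          Fin.sum_univ_eq_sum_range (fun i ↦ i) s, ← Finset.sum_range_id_mul_two, mul_two]

lemma eval_det_momentMatrix_ne_zero (g : F → F[X]) (y : F) :
    (momentMatrix g #{x | (g x).eval y ≠ 0}).det.eval y ≠ 0 := by
  set S : Finset F := {x | (g x).eval y ≠ 0} with hS
  let e : Fin #S ≃ S := S.equivFin.symm
  let w (i : Fin #S) : F := e i
  have factor : (momentMatrix g #S).map (eval y) =
      (vandermonde w)ᵀ * diagonal (fun i ↦ (g (w i)).eval y) * vandermonde w := by
    ext i j
    let term (x : F) : F := x ^ (i : ℕ) * (g x).eval y * x ^ (j : ℕ)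
    have hterm (x : F) (hx : x ∉ S) : term x = 0 := by
      have : (g x).eval y = 0 := by simpa [hS] using hx
      simp only [term, this, mul_zero, zero_mul]
    calc eval y (∑ x, C x ^ (i + j : ℕ) * g x) = ∑ x, term x := by
          simp only [eval_finsetSum, eval_mul, eval_pow, eval_C]
          exact sum_congr rfl fun x _ ↦ by ring
      _ = ∑ x ∈ S, term x := (sum_subset (subset_univ S) fun x _ hx ↦ hterm x hx).symm
      _ = ∑ k, term (w k) := by
          rw [← sum_coe_sort S term]
          exact (Equiv.sum_comp e fun x ↦ term x).symm
      _ = _ := by rw [mul_apply]; simp only [mul_diagonal, transpose_apply, vandermonde_apply, term]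
  have hdet : (momentMatrix g #S).det.eval y = ((momentMatrix g #S).map (eval y)).det :=
    RingHom.map_det (evalRingHom y) _
  have hw : (vandermonde w).det ≠ 0 :=
    det_vandermonde_ne_zero_iff.2 (Subtype.val_injective.comp e.injective)
  have hdiag : ∏ i, (g (w i)).eval y ≠ 0 :=
    prod_ne_zero_iff.2 fun i _ ↦ (mem_filter.1 (e i).2).2
  rw [hdet, factor, det_mul, det_mul, det_transpose, det_diagonal]
  exact mul_ne_zero (mul_ne_zero hw hdiag) hw

lemma det_momentMatrix_eq_sum (g : F → F[X]) (s : ℕ) :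
    (momentMatrix g s).det = ∑ φ : Fin s → F,
      (∏ i, C (φ i) ^ (i : ℕ) * g (φ i)) * (vandermonde fun i ↦ C (φ i)).det := by
  have hrow : momentMatrix g s =
      fun i : Fin s ↦ ∑ x, (C x ^ (i : ℕ) * g x) • fun j : Fin s ↦ C x ^ (j : ℕ) := by
    ext1 i j
    simp only [momentMatrix, of_apply, Finset.sum_apply, Pi.smul_apply, smul_eq_mul, pow_add]
    exact sum_congr rfl fun x _ ↦ by ring
  let D := (detRowAlternating (n := Fin s) (R := F[X])).toMultilinearMap
  rw [hrow]
  exact (D.map_sum _).trans (sum_congr rfl fun φ _ ↦ D.map_smul_univ _ _)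

lemma X_sub_C_pow_dvd_det_momentMatrix (g : F → F[X]) (s : ℕ) (y : F) :
    (X - C y) ^ (s - #{x | (g x).eval y ≠ 0}) ∣ (momentMatrix g s).det := by
  rw [det_momentMatrix_eq_sum]
  refine dvd_sum fun φ _ ↦ ?_
  by_cases hφ : Function.Injective φ
  swap
  · have : (vandermonde fun i ↦ C (φ i)).det = 0 := by
      rw [← not_ne_iff, det_vandermonde_ne_zero_iff]
      exact fun h ↦ hφ h.of_comp
    rw [this, mul_zero]
    exact dvd_zero _
  have hcount : s - #{x | (g x).eval y ≠ 0} ≤ #{i | (g (φ i)).eval y = 0} := by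
    have hsplit := card_filter_add_card_filter_not (s := univ) fun i ↦ (g (φ i)).eval y = 0
    rw [card_univ, Fintype.card_fin] at hsplit
    have : #{i | (g (φ i)).eval y ≠ 0} ≤ #{x | (g x).eval y ≠ 0} :=
      card_le_card_of_injOn φ (fun i hi ↦ by simpa using hi) hφ.injOn
    simp only [ne_eq] at this ⊢
    omega
  rw [prod_mul_distrib]
  refine dvd_mul_of_dvd_left (dvd_mul_of_dvd_right ?_ _) _
  calc (X - C y) ^ (s - #{x | (g x).eval y ≠ 0})
      ∣ ∏ _i with (g (φ _i)).eval y = 0, (X - C y) := by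
        rw [prod_const]
        exact pow_dvd_pow _ hcount
    _ ∣ ∏ i with (g (φ i)).eval y = 0, g (φ i) :=
        prod_dvd_prod_of_dvd _ _ fun i hi ↦ dvd_iff_isRoot.2 (mem_filter.1 hi).2
    _ ∣ ∏ i, g (φ i) := prod_dvd_prod_of_subset _ _ _ (filter_subset _ _)

lemma sum_card_sub_card_eval_ne_zero_le {g : F → F[X]}
    (hg : ∀ n, (∑ x, C x ^ n * g x).natDegree ≤ n) (y₀ : F) :
    ∑ y, (#{x | (g x).eval y₀ ≠ 0} - #{x | (g x).eval y ≠ 0})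
      ≤ #{x | (g x).eval y₀ ≠ 0} * (#{x | (g x).eval y₀ ≠ 0} - 1) := by
  set s := #{x | (g x).eval y₀ ≠ 0} with hs
  have hdet : (momentMatrix g s).det ≠ 0 := fun h ↦
    eval_det_momentMatrix_ne_zero g y₀ (by rw [← hs, h, eval_zero])
  have hdvd : ∏ y, (X - C y) ^ (s - #{x | (g x).eval y ≠ 0}) ∣ (momentMatrix g s).det :=
    Finset.prod_dvd_of_coprime
      (fun a _ b _ hab ↦
        (isCoprime_X_sub_C_of_isUnit_sub (sub_ne_zero.2 hab).isUnit).pow)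
      fun y _ ↦ X_sub_C_pow_dvd_det_momentMatrix g s y
  calc ∑ y, (s - #{x | (g x).eval y ≠ 0})
      = (∏ y, (X - C y) ^ (s - #{x | (g x).eval y ≠ 0})).natDegree := by
        rw [natDegree_prod_of_monic _ _ fun y _ ↦ (monic_X_sub_C y).pow _]
        simp only [natDegree_pow, natDegree_X_sub_C, mul_one]
    _ ≤ (momentMatrix g s).det.natDegree := natDegree_le_of_dvd hdvd hdet
    _ ≤ s * (s - 1) := natDegree_det_momentMatrix_le hg s

end Moments

section ProjectiveSpace

open Finset Submodule
open scoped Classical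

variable {F : Type} [Field F] {n : ℕ}

namespace ProjPoint

/-- The point of PG(n-1, |F|) with homogeneous coordinates `v`. -/
def ofVec (v : Fin n → F) (hv : v ≠ 0) : ProjPoint F n :=
  ⟨F ∙ v, finrank_span_singleton hv⟩

lemma coe_ofVec (v : Fin n → F) (hv : v ≠ 0) : (ofVec v hv).1 = F ∙ v :=
  rfl

lemma ofVec_le_iff {v : Fin n → F} {hv : v ≠ 0} {W : Submodule F (Fin n → F)} :
    (ofVec v hv).1 ≤ W ↔ v ∈ W :=
  span_singleton_le_iff_mem v W

lemma eq_of_le {X Y : ProjPoint F n} (h : X.1 ≤ Y.1) : X = Y :=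
  Subtype.ext (eq_of_le_of_finrank_eq h (X.2.trans Y.2.symm))

lemma exists_ofVec (X : ProjPoint F n) : ∃ v, ∃ hv : v ≠ 0, ofVec v hv = X := by
  have hX : X.1 ≠ ⊥ := by
    rintro h
    exact zero_ne_one ((finrank_bot F (Fin n → F)).symm.trans (h ▸ X.2))
  obtain ⟨v, hvX, hv⟩ := X.1.exists_mem_ne_zero_of_ne_bot hX
  exact ⟨v, hv, eq_of_le (ofVec_le_iff.2 hvX)⟩

lemma ofVec_eq_ofVec_iff {v w : Fin n → F} {hv : v ≠ 0} {hw : w ≠ 0} :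
    ofVec v hv = ofVec w hw ↔ ∃ c : F, c • w = v := by
  rw [← mem_span_singleton]
  exact ⟨fun h ↦ ofVec_le_iff.1 (congrArg Subtype.val h).le, fun h ↦ eq_of_le (ofVec_le_iff.2 h)⟩

lemma finrank_sup_eq {U : Submodule F (Fin n → F)} {X : ProjPoint F n} (h : ¬X.1 ≤ U) :
    finrank F (U ⊔ X.1 : Submodule F (Fin n → F)) = finrank F U + 1 := by
  have hdim := finrank_sup_add_finrank_inf_eq U X.1
  have hlt : finrank F (U ⊓ X.1 : Submodule F (Fin n → F)) < finrank F X.1 :=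
    finrank_lt_finrank_of_lt (inf_lt_right.2 h)
  have := X.2
  omega

lemma finrank_sup_eq_two {X Y : ProjPoint F n} (h : X ≠ Y) :
    finrank F (X.1 ⊔ Y.1 : Submodule F (Fin n → F)) = 2 := by
  rw [finrank_sup_eq fun hle ↦ h (eq_of_le hle).symm, X.2]

lemma sup_eq_of_le {X Y : ProjPoint F n} (h : X ≠ Y) {l : Submodule F (Fin n → F)}
    (hl : finrank F l = 2) (hX : X.1 ≤ l) (hY : Y.1 ≤ l) : X.1 ⊔ Y.1 = l :=
  eq_of_le_of_finrank_eq (sup_le hX hY) ((finrank_sup_eq_two h).trans hl.symm)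

end ProjPoint

lemma secant_top (V : Set (ProjPoint F n)) : secant F n V ⊤ = V.ncard := by
  rw [secant, Set.inter_eq_left.2 fun X _ ↦ show X.1 ≤ ⊤ from le_top]

section Counting

variable [Fintype F]

noncomputable instance : Fintype (Submodule F (Fin n → F)) := Fintype.ofFinite _

noncomputable instance : Fintype (ProjPoint F n) := by
  unfold ProjPoint
  infer_instance

lemma card_points_le (W : Submodule F (Fin n → F)) :
    #{X : ProjPoint F n | X.1 ≤ W} = ∑ i ∈ range (finrank F W), Fintype.card F ^ i := by
  let equiv : {K : Submodule F W // finrank F K = 1} ≃ {X : ProjPoint F n // X.1 ≤ W} :=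
    { toFun := fun K ↦ ⟨⟨K.1.map W.subtype, (finrank_map_subtype_eq W K.1).trans K.2⟩,
        map_subtype_le W K.1⟩
      invFun := fun X ↦ ⟨X.1.1.comap W.subtype,
        (comapSubtypeEquivOfLe X.2).finrank_eq.trans X.1.2⟩
      left_inv := fun K ↦ Subtype.ext (comap_map_eq_of_injective W.injective_subtype K.1)
      right_inv := fun X ↦ Subtype.ext <| Subtype.ext <|
        (map_comap_subtype W X.1.1).trans (inf_eq_right.2 X.2) }
  rw [← Fintype.card_subtype, ← Nat.card_eq_fintype_card, ← Nat.card_congr equiv,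
    ← Nat.card_congr (Projectivization.equivSubmodule F W),
    Projectivization.card_of_finrank F W rfl, Nat.card_eq_fintype_card]

lemma card_points_le_modEq_one {p : ℕ} (hpF : p ∣ Fintype.card F) {W : Submodule F (Fin n → F)}
    (hW : 1 ≤ finrank F W) : #{X : ProjPoint F n | X.1 ≤ W} ≡ 1 [MOD p] := by
  obtain ⟨k, hk⟩ := Nat.exists_eq_add_of_le' hW
  rw [card_points_le, hk, sum_range_succ', pow_zero]
  exact (Nat.modEq_zero_iff_dvd.2 (dvd_sum fun i _ ↦ dvd_pow hpF i.succ_ne_zero)).add_right 1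

lemma secant_eq_card (V : Set (ProjPoint F n)) (W : Submodule F (Fin n → F)) :
    secant F n V W = #{X | X ∈ V ∧ X.1 ≤ W} := by
  rw [secant, ← Set.ncard_coe_finset]
  congr 1
  ext X
  simp only [coe_filter, mem_univ, true_and]
  rfl

lemma sum_charVec_eq_secant (p : ℕ) (V : Set (ProjPoint F n)) (W : Submodule F (Fin n → F)) :
    ∑ X with X.1 ≤ W, charVec F p n V X = secant F n V W := by
  simp only [charVec, Set.indicator_apply, Pi.one_apply, sum_boole, filter_filter, secant_eq_card,
    and_comm]

lemma sum_points_le_eq_sum_of_mem_hypCode {p : ℕ} (hpF : p ∣ Fintype.card F)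
    {U : Submodule F (Fin n → F)} (hU : 2 ≤ finrank F U) {f : ProjPoint F n → ZMod p}
    (hf : f ∈ hypCode F p n) : ∑ X with X.1 ≤ U, f X = ∑ X with X.1 ≤ ⊤, f X := by
  induction hf using span_induction with
  | mem v hv =>
    obtain ⟨H, hH, rfl⟩ := hv
    have sum_eq (W : Submodule F (Fin n → F)) (hW : 2 ≤ finrank F W) :
        ∑ X with X.1 ≤ W, charVec F p n (pointsIn F n H) X = 1 := by
      have hdim := finrank_sup_add_finrank_inf_eq W H
      have hle := finrank_le (W ⊔ H)
      rw [finrank_fin_fun] at hle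
      have hcard := card_points_le_modEq_one hpF (W := H ⊓ W) (by rw [inf_comm]; omega)
      simp only [le_inf_iff] at hcard
      rw [sum_charVec_eq_secant, secant_eq_card]
      exact_mod_cast (ZMod.natCast_eq_natCast_iff _ _ _).2 hcard
    rw [sum_eq U hU, sum_eq ⊤ (hU.trans (finrank_mono le_top))]
  | zero => simp only [Pi.zero_apply, sum_const_zero]
  | add x y _ _ hx hy => simp only [Pi.add_apply, sum_add_distrib, hx, hy]
  | smul a x _ hx => simp only [Pi.smul_apply, smul_eq_mul, ← mul_sum, hx]

lemma secant_modEq_ncard {p : ℕ} (hpF : p ∣ Fintype.card F) {V : Set (ProjPoint F n)}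
    (hV : charVec F p n V ∈ hypCode F p n) {U : Submodule F (Fin n → F)} (hU : 2 ≤ finrank F U) :
    secant F n V U ≡ V.ncard [MOD p] := by
  have hsum := sum_points_le_eq_sum_of_mem_hypCode hpF hU hV
  rwa [sum_charVec_eq_secant, sum_charVec_eq_secant, secant_top,
    ZMod.natCast_eq_natCast_iff] at hsum

/-- The subspaces of dimension one more than `U` containing `U`. -/
noncomputable def covers (U : Submodule F (Fin n → F)) : Finset (Submodule F (Fin n → F)) :=
  {K | U ≤ K ∧ finrank F K = finrank F U + 1}

lemma mem_covers {U K : Submodule F (Fin n → F)} :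
    K ∈ covers U ↔ U ≤ K ∧ finrank F K = finrank F U + 1 :=
  mem_filter_univ K

lemma sum_secant_covers_add_secant (V : Set (ProjPoint F n)) (U : Submodule F (Fin n → F)) :
    ∑ K ∈ covers U, secant F n V K + secant F n V U = V.ncard + #(covers U) * secant F n V U := by
  have split (W : Submodule F (Fin n → F)) (hW : U ≤ W) : secant F n V W =
      secant F n V U + #{X | (X ∈ V ∧ X.1 ≤ W) ∧ ¬X.1 ≤ U} := by
    rw [secant_eq_card, secant_eq_card, ← card_filter_add_card_filter_not fun X ↦ X.1 ≤ U,
      filter_filter, filter_filter]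
    congr! 3 with X
    exact ⟨fun h ↦ ⟨h.1.1, h.2⟩, fun h ↦ ⟨⟨h.1, h.2.trans hW⟩, h.2⟩⟩
  have fiber : #{X | (X ∈ V ∧ X.1 ≤ ⊤) ∧ ¬X.1 ≤ U} =
      ∑ K ∈ covers U, #{X | (X ∈ V ∧ X.1 ≤ K) ∧ ¬X.1 ≤ U} := by
    rw [card_eq_sum_card_fiberwise (f := fun X : ProjPoint F n ↦ U ⊔ X.1) (t := covers U)]
    · refine sum_congr rfl fun K hK ↦ ?_
      rw [mem_covers] at hK
      rw [filter_filter]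
      congr! 2 with X
      constructor
      · rintro ⟨⟨⟨hXV, -⟩, hXU⟩, rfl⟩
        exact ⟨⟨hXV, le_sup_right⟩, hXU⟩
      · rintro ⟨⟨hXV, hXK⟩, hXU⟩
        exact ⟨⟨⟨hXV, le_top⟩, hXU⟩, eq_of_le_of_finrank_eq (sup_le hK.1 hXK)
          ((ProjPoint.finrank_sup_eq hXU).trans hK.2.symm)⟩
    · intro X hX
      exact mem_covers.2 ⟨le_sup_left, ProjPoint.finrank_sup_eq (mem_filter.1 hX).2.2⟩
  rw [← secant_top V, split ⊤ le_top, fiber, sum_congr rfl fun K hK ↦ split K (mem_covers.1 hK).1,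
    sum_add_distrib, sum_const, smul_eq_mul]
  ring

lemma card_covers (U : Submodule F (Fin n → F)) :
    #(covers U) = ∑ i ∈ range (n - finrank F U), Fintype.card F ^ i := by
  have secant_univ (W : Submodule F (Fin n → F)) :
      secant F n Set.univ W = ∑ i ∈ range (finrank F W), Fintype.card F ^ i := by
    simp only [secant_eq_card, Set.mem_univ, true_and, card_points_le]
  have hcount := sum_secant_covers_add_secant Set.univ U
  rw [sum_congr rfl fun K hK ↦ by rw [secant_univ, (mem_covers.1 hK).2, sum_range_succ],
    ← secant_top, secant_univ, secant_univ, finrank_top, finrank_fin_fun, sum_const,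
    smul_eq_mul] at hcount
  have hpos : 0 < Fintype.card F ^ finrank F U := pow_pos Fintype.card_pos _
  have hle : finrank F U ≤ n := (finrank_le U).trans_eq (finrank_fin_fun F)
  have total := sum_range_add (fun i ↦ Fintype.card F ^ i) (finrank F U) (n - finrank F U)
  simp only [Nat.add_sub_of_le hle, pow_add, ← mul_sum] at total
  refine Nat.eq_of_mul_eq_mul_left hpos ?_
  linarith

end Counting
end ProjectiveSpace

section Frames

open Finset Submodule Polynomial
open scoped Classical

section Triples

variable {K E : Type*} [DivisionRing K] [AddCommGroup E] [Module K E] {a b e : E}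

lemma linearIndependent_triple_iff_notMem :
    LinearIndependent K ![e, a, b] ↔ LinearIndependent K ![a, b] ∧ e ∉ span K {a, b} := by
  have h := linearIndependent_finCons (K := K) (x := e) (v := ![a, b])
  rwa [range_cons_cons_empty] at h

lemma linearIndependent_triple_iff_forall : LinearIndependent K ![e, a, b] ↔
    ∀ z x y : K, z • e + x • a + y • b = 0 → z = 0 ∧ x = 0 ∧ y = 0 := by
  rw [Fintype.linearIndependent_iff]
  simp only [Fin.sum_univ_three, Fin.forall_fin_succ, IsEmpty.forall_iff, and_true]
  exact ⟨fun h z x y ↦ h ![z, x, y], fun h g ↦ h (g 0) (g 1) (g 2)⟩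

lemma triple_coeff_eq (h : LinearIndependent K ![e, a, b]) {x y z x' y' z' : K}
    (heq : z • e + x • a + y • b = z' • e + x' • a + y' • b) : z = z' ∧ x = x' ∧ y = y' := by
  obtain ⟨hz, hx, hy⟩ := linearIndependent_triple_iff_forall.1 h (z - z') (x - x') (y - y') <| by
    rw [← sub_eq_zero] at heq
    rw [← heq]
    simp only [sub_smul]
    abel
  exact ⟨sub_eq_zero.1 hz, sub_eq_zero.1 hx, sub_eq_zero.1 hy⟩

lemma linearIndependent_triple_rotate (h : LinearIndependent K ![e, a, b]) :
    LinearIndependent K ![b, e, a] :=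
  linearIndependent_triple_iff_forall.2 fun y z x h0 ↦ by
    obtain ⟨hz, hx, hy⟩ := linearIndependent_triple_iff_forall.1 h z x y (by rw [← h0]; abel)
    exact ⟨hy, hz, hx⟩

lemma linearIndependent_triple_swap (h : LinearIndependent K ![e, a, b]) :
    LinearIndependent K ![a, e, b] :=
  linearIndependent_triple_iff_forall.2 fun x z y h0 ↦ by
    obtain ⟨hz, hx, hy⟩ := linearIndependent_triple_iff_forall.1 h z x y (by rw [← h0]; abel)
    exact ⟨hx, hz, hy⟩

lemma linearIndependent_triple_add (h : LinearIndependent K ![e, a, b]) :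
    LinearIndependent K ![e, b, e + a] :=
  linearIndependent_triple_iff_forall.2 fun z y x h0 ↦ by
    obtain ⟨hz, hx, hy⟩ := linearIndependent_triple_iff_forall.1 h (z + x) x y <| by
      rw [← h0, add_smul, smul_add]
      abel
    exact ⟨by rwa [hx, add_zero] at hz, hy, hx⟩

end Triples

variable {F : Type} [Field F] {n : ℕ} {a b e : Fin n → F}

lemma finrank_span_pair (h : LinearIndependent F ![a, b]) : finrank F (span F {a, b}) = 2 := by
  have hspan := finrank_span_eq_card h
  rwa [range_cons_cons_empty] at hspan

lemma exists_eq_span_pair {l : Submodule F (Fin n → F)} (hl : finrank F l = 2) (ha : a ≠ 0)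
    (hal : a ∈ l) : ∃ b, LinearIndependent F ![a, b] ∧ l = span F {a, b} := by
  have hlt : F ∙ a < l := lt_of_le_of_ne ((span_singleton_le_iff_mem a l).2 hal) <| by
    rintro rfl
    rw [finrank_span_singleton ha] at hl
    exact absurd hl (by norm_num)
  obtain ⟨b, hbl, hba⟩ := SetLike.exists_of_lt hlt
  have hli : LinearIndependent F ![a, b] :=
    (LinearIndependent.pair_iff' ha).2 fun c hc ↦ hba (mem_span_singleton.2 ⟨c, hc⟩)
  refine ⟨b, hli, (eq_of_le_of_finrank_eq (span_le.2 ?_) ?_).symm⟩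
  · rintro v (rfl | rfl)
    exacts [hal, hbl]
  · exact (finrank_span_pair hli).trans hl.symm

lemma exists_frame {l m : Submodule F (Fin n → F)} (hl : finrank F l = 2) (hm : finrank F m = 2)
    (hlm : l ≠ m) (ha : a ≠ 0) (hal : a ∈ l) (ham : a ∈ m) :
    ∃ b e, LinearIndependent F ![e, a, b] ∧ l = span F {a, b} ∧ m = span F {a, e} := by
  obtain ⟨b, hab, rfl⟩ := exists_eq_span_pair hl ha hal
  obtain ⟨e, hae, rfl⟩ := exists_eq_span_pair hm ha ham
  refine ⟨b, e, linearIndependent_triple_iff_notMem.2 ⟨hab, fun he ↦ hlm ?_⟩, rfl, rfl⟩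
  refine (eq_of_le_of_finrank_eq (span_le.2 ?_) (hm.trans hl.symm)).symm
  rintro v (rfl | rfl)
  exacts [hal, he]

/-- The point with affine coordinates `(x, y)` in the frame `e, a, b`, whose line at infinity is
the one through `a` and `e`. -/
def affinePoint (h : LinearIndependent F ![e, a, b]) (x y : F) : ProjPoint F n :=
  .ofVec (y • e + x • a + (1 : F) • b) fun h0 ↦
    one_ne_zero (linearIndependent_triple_iff_forall.1 h y x 1 h0).2.2

lemma affinePoint_inj (h : LinearIndependent F ![e, a, b]) {x y x' y' : F}
    (heq : affinePoint h x y = affinePoint h x' y') : x = x' ∧ y = y' := by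
  obtain ⟨c, hc⟩ := ProjPoint.ofVec_eq_ofVec_iff.1 heq
  simp only [smul_add, smul_smul] at hc
  obtain ⟨hy, hx, h1⟩ := triple_coeff_eq h hc
  rw [mul_one] at h1
  rw [h1, one_mul] at hx hy
  exact ⟨hx.symm, hy.symm⟩

lemma not_affinePoint_le (h : LinearIndependent F ![e, a, b]) (x y : F) :
    ¬(affinePoint h x y).1 ≤ span F {a, e} := by
  intro hle
  obtain ⟨c, d, hcd⟩ := mem_span_pair.1 (ProjPoint.ofVec_le_iff.1 hle)
  have := triple_coeff_eq h (z := d) (x := c) (y := 0) (z' := y) (x' := x) (y' := 1) <| by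
    rw [← hcd]
    module
  exact zero_ne_one this.2.2

lemma exists_affinePoint_eq (h : LinearIndependent F ![e, a, b]) {X : ProjPoint F n}
    (hX : X.1 ≤ span F {a, b}) (hXa : ¬X.1 ≤ span F {a}) : ∃ x, affinePoint h x 0 = X := by
  obtain ⟨v, hv, rfl⟩ := X.exists_ofVec
  obtain ⟨c, d, rfl⟩ := mem_span_pair.1 (ProjPoint.ofVec_le_iff.1 hX)
  have hd : d ≠ 0 := by
    rintro rfl
    exact hXa (ProjPoint.ofVec_le_iff.2 (mem_span_singleton.2 ⟨c, by module⟩))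
  refine ⟨d⁻¹ * c, ProjPoint.ofVec_eq_ofVec_iff.2 ⟨d⁻¹, ?_⟩⟩
  rw [smul_add, smul_smul, smul_smul, inv_mul_cancel₀ hd, zero_smul, zero_add]

lemma affinePoint_le (h : LinearIndependent F ![e, a, b]) {W : Submodule F (Fin n → F)}
    (ha : a ∈ W) (hb : b ∈ W) {x y : F} (he : y • e ∈ W) : (affinePoint h x y).1 ≤ W :=
  ProjPoint.ofVec_le_iff.2 <| W.add_mem (W.add_mem he (W.smul_mem _ ha)) (W.smul_mem _ hb)

lemma exists_eq_ker {H : Submodule F (Fin n → F)} (hn : n ≠ 0) (hH : finrank F H = n - 1) :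
    ∃ φ : Dual F (Fin n → F), H = LinearMap.ker φ := by
  have hlt : H < ⊤ := lt_top_iff_ne_top.2 <| by
    rintro rfl
    rw [finrank_top, finrank_fin_fun] at hH
    omega
  obtain ⟨φ, hφ, hle⟩ := exists_le_ker_of_lt_top H hlt
  have hker := Dual.finrank_ker_add_one_of_ne_zero hφ
  rw [finrank_fin_fun] at hker
  exact ⟨φ, eq_of_le_of_finrank_eq hle (by omega)⟩

section Words

variable [Fintype F] {p : ℕ} {f : ProjPoint F n → ZMod p}

lemma cast_charVec_ker_ofVec [CharP F p] (φ : Dual F (Fin n → F)) {v : Fin n → F} (hv : v ≠ 0) :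
    ZMod.castHom dvd_rfl F (charVec F p n (pointsIn F n (LinearMap.ker φ)) (.ofVec v hv)) =
      1 - φ v ^ (Fintype.card F - 1) := by
  have hmem : ProjPoint.ofVec v hv ∈ pointsIn F n (LinearMap.ker φ) ↔ φ v = 0 :=
    ProjPoint.ofVec_le_iff
  by_cases h : φ v = 0
  · have hcard : Fintype.card F - 1 ≠ 0 := (Nat.sub_pos_of_lt Fintype.one_lt_card).ne'
    rw [charVec, Set.indicator_of_mem (hmem.2 h), Pi.one_apply, map_one, h, zero_pow hcard,
      sub_zero]
  · rw [charVec, Set.indicator_of_notMem (mt hmem.1 h), map_zero,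
      FiniteField.pow_card_sub_one_eq_one _ h, sub_self]

lemma exists_polynomial_eval_eq [CharP F p] (hf : f ∈ hypCode F p n)
    (h : LinearIndependent F ![e, a, b]) :
    ∃ g : F → F[X], (∀ k, (∑ x, C x ^ k * g x).natDegree ≤ k) ∧
      ∀ x y, (g x).eval y = ZMod.castHom dvd_rfl F (f (affinePoint h x y)) := by
  induction hf using span_induction with
  | mem f hf =>
    obtain ⟨H, hH, rfl⟩ := hf
    obtain ⟨φ, rfl⟩ := exists_eq_ker (by rintro rfl; exact h.ne_zero 0 (Subsingleton.elim _ _)) hH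
    refine ⟨fun x ↦ 1 - (C (φ a * x + φ b) + C (φ e) * X) ^ (Fintype.card F - 1),
      natDegree_sum_pow_mul_one_sub_pow_le _ _ _, fun x y ↦ ?_⟩
    rw [affinePoint, cast_charVec_ker_ofVec]
    simp only [eval_sub, eval_one, eval_pow, eval_add, eval_C, eval_mul, eval_X, map_add, map_smul,
      smul_eq_mul]
    ring
  | zero =>
    exact ⟨0, fun k ↦ by
        simp only [Pi.zero_apply, mul_zero, sum_const_zero, natDegree_zero, zero_le],
      fun x y ↦ by simp only [Pi.zero_apply, eval_zero, map_zero]⟩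
  | add f f' _ _ ih ih' =>
    obtain ⟨g, hdeg, hg⟩ := ih
    obtain ⟨g', hdeg', hg'⟩ := ih'
    refine ⟨g + g', fun k ↦ ?_, fun x y ↦ by simp only [Pi.add_apply, eval_add, map_add, hg, hg']⟩
    simp only [Pi.add_apply, mul_add, sum_add_distrib]
    exact (natDegree_add_le _ _).trans (max_le (hdeg k) (hdeg' k))
  | smul c f _ ih =>
    obtain ⟨g, hdeg, hg⟩ := ih
    refine ⟨fun x ↦ C (ZMod.castHom dvd_rfl F c) * g x, fun k ↦ ?_, fun x y ↦ by
      simp only [eval_mul, eval_C, hg, Pi.smul_apply, smul_eq_mul, map_mul]⟩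
    simp only [mul_left_comm _ (C _) (g _), ← mul_sum]
    exact (natDegree_C_mul_le _ _).trans (hdeg k)

lemma card_affinePoint_ne_zero_eq_secant (h : LinearIndependent F ![e, a, b]) {ha : a ≠ 0}
    (hfa : f (.ofVec a ha) = 0) :
    #{x | f (affinePoint h x 0) ≠ 0} = secant F n f.support (span F {a, b}) := by
  rw [secant_eq_card]
  refine card_bij (fun x _ ↦ affinePoint h x 0) (fun x hx ↦ ?_)
    (fun x _ x' _ heq ↦ (affinePoint_inj h heq).1) fun X hX ↦ ?_
  · refine mem_filter.2 ⟨mem_univ _, (mem_filter.1 hx).2, affinePoint_le h ?_ ?_ ?_⟩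
    · exact subset_span (Set.mem_insert a {b})
    · exact subset_span (Set.mem_insert_of_mem a rfl)
    · rw [zero_smul]
      exact zero_mem _
  · obtain ⟨-, hXf, hXl⟩ := mem_filter.1 hX
    obtain ⟨x, rfl⟩ := exists_affinePoint_eq h hXl fun hXa ↦
      hXf ((ProjPoint.eq_of_le (Y := .ofVec a ha) hXa) ▸ hfa)
    exact ⟨x, mem_filter.2 ⟨mem_univ _, hXf⟩, rfl⟩

lemma secant_add_sum_card_affinePoint_le (h : LinearIndependent F ![e, a, b])
    {W : Submodule F (Fin n → F)} (hW : span F {e, a, b} ≤ W) :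
    secant F n f.support (span F {a, e}) + ∑ y, #{x | f (affinePoint h x y) ≠ 0} ≤
      secant F n f.support W := by
  have heW : e ∈ W := hW (subset_span (by simp))
  have haW : a ∈ W := hW (subset_span (by simp))
  have hbW : b ∈ W := hW (subset_span (by simp))
  have hsum : ∑ y, #{x | f (affinePoint h x y) ≠ 0} =
      #{z : F × F | f (affinePoint h z.1 z.2) ≠ 0} := by
    simp only [card_filter]
    exact (Fintype.sum_prod_type_right' fun x y ↦ if f (affinePoint h x y) ≠ 0 then 1 else 0).symm
  have hinj : Function.Injective fun z : F × F ↦ affinePoint h z.1 z.2 := fun z z' heq ↦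
    Prod.ext_iff.2 (affinePoint_inj h heq)
  rw [hsum, ← card_image_of_injective _ hinj, secant_eq_card, secant_eq_card,
    ← card_union_of_disjoint]
  · refine card_le_card (union_subset (fun X hX ↦ ?_) fun X hX ↦ ?_)
    · obtain ⟨-, hXf, hXm⟩ := mem_filter.1 hX
      refine mem_filter.2 ⟨mem_univ _, hXf, hXm.trans (span_le.2 ?_)⟩
      rintro v (rfl | rfl)
      exacts [haW, heW]
    · obtain ⟨z, hz, rfl⟩ := mem_image.1 hX
      exact mem_filter.2 ⟨mem_univ _, (mem_filter.1 hz).2,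
        affinePoint_le h haW hbW (W.smul_mem _ heW)⟩
  · refine disjoint_left.2 fun X hX hX' ↦ ?_
    obtain ⟨z, -, rfl⟩ := mem_image.1 hX'
    exact not_affinePoint_le h z.1 z.2 (mem_filter.1 hX).2.2

lemma secant_support_add_mul_le [Fact p.Prime] [CharP F p] (hf : f ∈ hypCode F p n)
    {l m W : Submodule F (Fin n → F)} (hl : finrank F l = 2) (hm : finrank F m = 2) (hlm : l ≠ m)
    (hlW : l ≤ W) (hmW : m ≤ W) {R : ProjPoint F n} (hRl : R.1 ≤ l) (hRm : R.1 ≤ m)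
    (hfR : f R = 0) :
    secant F n f.support m +
      secant F n f.support l * (Fintype.card F + 1 - secant F n f.support l) ≤
        secant F n f.support W := by
  obtain ⟨a, ha, rfl⟩ := R.exists_ofVec
  obtain ⟨b, e, h, rfl, rfl⟩ := exists_frame hl hm hlm ha (ProjPoint.ofVec_le_iff.1 hRl)
    (ProjPoint.ofVec_le_iff.1 hRm)
  obtain ⟨g, hdeg, hg⟩ := exists_polynomial_eval_eq hf h
  have hg0 (x y : F) : (g x).eval y ≠ 0 ↔ f (affinePoint h x y) ≠ 0 := by
    rw [hg, _root_.map_ne_zero]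
  have hline := card_affinePoint_ne_zero_eq_secant h hfR
  have hplane := secant_add_sum_card_affinePoint_le (f := f) h (W := W) <| span_le.2 <| by
    rintro v (rfl | rfl | rfl)
    exacts [hmW (subset_span (by simp)), hlW (subset_span (by simp)),
      hlW (subset_span (by simp))]
  have hmoment := sum_card_sub_card_eval_ne_zero_le hdeg 0
  simp only [hg0, hline] at hmoment
  set s := secant F n f.support (span F {a, b})
  have hsum : Fintype.card F * s ≤ ∑ y, (s - #{x | f (affinePoint h x y) ≠ 0}) +
      ∑ y, #{x | f (affinePoint h x y) ≠ 0} := by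
    rw [← sum_add_distrib, ← card_univ, ← smul_eq_mul, ← sum_const]
    exact sum_le_sum fun y _ ↦ le_tsub_add
  have hs : s ≤ Fintype.card F := hline ▸ card_le_univ _
  have hmul : s * (Fintype.card F + 1 - s) + s * (s - 1) ≤ Fintype.card F * s := by
    rcases s.eq_zero_or_pos with h0 | hpos
    · rw [h0, zero_mul, zero_mul, add_zero]
      exact Nat.zero_le _
    · rw [← mul_add, mul_comm]
      exact Nat.mul_le_mul_right _ (by omega)
  omega

end Words
end Frames

section Planes

open Finset Submodule Configuration
open scoped Classical

variable {F : Type} [Field F] {n : ℕ} {W : Submodule F (Fin n → F)}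

/-- The points of PG(n-1, |F|) in the subspace `W`; they are used when `W` is a plane. -/
abbrev PlanePoint (W : Submodule F (Fin n → F)) : Type :=
  {X : ProjPoint F n // X.1 ≤ W}

/-- The lines of PG(n-1, |F|) in the subspace `W`; they are used when `W` is a plane. -/
abbrev PlaneLine (W : Submodule F (Fin n → F)) : Type :=
  {l : Submodule F (Fin n → F) // finrank F l = 2 ∧ l ≤ W}

instance : Membership (PlanePoint W) (PlaneLine W) :=
  ⟨fun l X ↦ X.1.1 ≤ l.1⟩

lemma mem_planeLine_iff {X : PlanePoint W} {l : PlaneLine W} : X ∈ l ↔ X.1.1 ≤ l.1 :=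
  Iff.rfl

lemma exists_mem_notMem_planeLine (hW : finrank F W = 3) (l : PlaneLine W) :
    ∃ v ∈ W, v ∉ l.1 := by
  refine SetLike.exists_of_lt (lt_of_le_of_ne l.2.2 fun h ↦ ?_)
  have := l.2.1
  rw [h, hW] at this
  omega

lemma finrank_inf_eq_one (hW : finrank F W = 3) {l m : PlaneLine W} (hlm : l ≠ m) :
    finrank F (l.1 ⊓ m.1 : Submodule F (Fin n → F)) = 1 := by
  have hdim := finrank_sup_add_finrank_inf_eq l.1 m.1
  have hsup := finrank_mono (sup_le l.2.2 m.2.2)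
  have hinf : finrank F (l.1 ⊓ m.1 : Submodule F (Fin n → F)) < 2 := by
    refine (finrank_lt_finrank_of_lt (inf_lt_left.2 fun hle ↦ hlm ?_)).trans_eq l.2.1
    exact Subtype.ext (eq_of_le_of_finrank_eq hle (l.2.1.trans m.2.1.symm))
  have := l.2.1
  have := m.2.1
  omega

lemma exists_planeLine_notMem (hW : finrank F W = 3) (X : PlanePoint W) :
    ∃ l : PlaneLine W, X ∉ l := by
  obtain ⟨K, hK⟩ := Submodule.exists_isCompl X.1.1
  have hdim := finrank_sup_add_finrank_inf_eq K W
  have hsup : K ⊔ W = ⊤ := eq_top_iff.2 (hK.symm.sup_eq_top ▸ sup_le_sup_left X.2 K)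
  have hadd := finrank_add_eq_of_isCompl hK
  rw [X.1.2] at hadd
  rw [hsup, finrank_top] at hdim
  refine ⟨⟨K ⊓ W, by omega, inf_le_right⟩, fun hX : X.1.1 ≤ K ⊓ W ↦ ?_⟩
  have hbot := hK.disjoint le_rfl (hX.trans inf_le_left)
  have := X.1.2
  rw [le_bot_iff.1 hbot, finrank_bot] at this
  exact zero_ne_one this

lemma exists_linearIndependent_triple (hW : finrank F W = 3) :
    ∃ a ∈ W, ∃ b ∈ W, ∃ c ∈ W, LinearIndependent F ![a, b, c] := by
  let basis := finBasisOfFinrankEq F W hW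
  refine ⟨basis 0, (basis 0).2, basis 1, (basis 1).2, basis 2, (basis 2).2,
    linearIndependent_triple_iff_forall.2 fun x y z h ↦ ?_⟩
  have hzero := Fintype.linearIndependent_iff.1 basis.linearIndependent ![x, y, z] <| by
    rw [Fin.sum_univ_three]
    exact Subtype.ext h
  exact ⟨hzero 0, hzero 1, hzero 2⟩

lemma exists_config_planeLine (hW : finrank F W = 3) :
    ∃ (X₁ X₂ X₃ : PlanePoint W) (l₁ l₂ l₃ : PlaneLine W), X₁ ∉ l₂ ∧ X₁ ∉ l₃ ∧
      X₂ ∉ l₁ ∧ X₂ ∈ l₂ ∧ X₂ ∈ l₃ ∧ X₃ ∉ l₁ ∧ X₃ ∈ l₂ ∧ X₃ ∉ l₃ := by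
  obtain ⟨a, ha, b, hb, c, hc, h⟩ := exists_linearIndependent_triple hW
  have habc := linearIndependent_triple_rotate h
  have hacb := linearIndependent_triple_swap h
  have hcab := linearIndependent_triple_add h
  rw [linearIndependent_triple_iff_notMem] at habc hacb hcab
  have mem_left (u v : Fin n → F) : u ∈ span F {u, v} := subset_span (Set.mem_insert u {v})
  have mem_right (u v : Fin n → F) : v ∈ span F {u, v} := subset_span (Set.mem_insert_of_mem u rfl)
  have span_le_plane {u v : Fin n → F} (hu : u ∈ W) (hv : v ∈ W) : span F {u, v} ≤ W :=
    span_le.2 (Set.pair_subset hu hv)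
  have hbc : b + c ∉ span F {a, b} := fun hmem ↦
    habc.2 ((add_mem_cancel_left (mem_right a b)).1 hmem)
  have ha0 : a ≠ 0 := habc.1.ne_zero 0
  have hb0 : b ≠ 0 := habc.1.ne_zero 1
  have hbc0 : b + c ≠ 0 := fun h0 ↦ hbc (h0 ▸ zero_mem _)
  refine ⟨⟨.ofVec (b + c) hbc0, ProjPoint.ofVec_le_iff.2 (add_mem hb hc)⟩,
    ⟨.ofVec a ha0, ProjPoint.ofVec_le_iff.2 ha⟩,
    ⟨.ofVec b hb0, ProjPoint.ofVec_le_iff.2 hb⟩,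
    ⟨span F {c, a + b}, finrank_span_pair hcab.1, span_le_plane hc (add_mem ha hb)⟩,
    ⟨span F {a, b}, finrank_span_pair habc.1, span_le_plane ha hb⟩,
    ⟨span F {a, c}, finrank_span_pair hacb.1, span_le_plane ha hc⟩, ?_⟩
  simp only [mem_planeLine_iff, ProjPoint.ofVec_le_iff]
  refine ⟨hbc, ?_, hcab.2, mem_left a b, mem_left a c, ?_, mem_right a b, hacb.2⟩
  · exact mt (add_mem_cancel_right (mem_right a c)).1 hacb.2
  · exact fun hmem ↦ hcab.2 ((add_mem_cancel_right hmem).1 (mem_right c (a + b)))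

noncomputable instance [hW : Fact (finrank F W = 3)] :
    ProjectivePlane (PlanePoint W) (PlaneLine W) where
  exists_point l := by
    obtain ⟨v, hvW, hvl⟩ := exists_mem_notMem_planeLine hW.out l
    have hv : v ≠ 0 := fun h0 ↦ hvl (h0 ▸ zero_mem _)
    exact ⟨⟨.ofVec v hv, ProjPoint.ofVec_le_iff.2 hvW⟩,
      mt (ProjPoint.ofVec_le_iff (hv := hv)).1 hvl⟩
  exists_line := exists_planeLine_notMem hW.out
  eq_or_eq {X Y l m} hXl hYl hXm hYm := by
    refine or_iff_not_imp_left.2 fun hXY ↦ Subtype.ext ?_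
    have hne : X.1 ≠ Y.1 := fun h ↦ hXY (Subtype.ext h)
    rw [← ProjPoint.sup_eq_of_le hne l.2.1 hXl hYl, ← ProjPoint.sup_eq_of_le hne m.2.1 hXm hYm]
  mkPoint {l m} hlm := ⟨⟨l.1 ⊓ m.1, finrank_inf_eq_one hW.out hlm⟩, inf_le_left.trans l.2.2⟩
  mkPoint_ax _ := ⟨inf_le_left, inf_le_right⟩
  mkLine {X Y} hXY := ⟨X.1.1 ⊔ Y.1.1,
    ProjPoint.finrank_sup_eq_two fun h ↦ hXY (Subtype.ext h), sup_le X.2 Y.2⟩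
  mkLine_ax _ := ⟨le_sup_left, le_sup_right⟩
  exists_config := exists_config_planeLine hW.out

end Planes

section Subplanes

open Finset Submodule Configuration
open scoped Classical

variable {F : Type} [Field F] {n : ℕ} {W : Submodule F (Fin n → F)}

/-- The vectors spanning a point of the set `S` of points of the plane `W`. -/
def representatives (S : Finset (PlanePoint W)) : Set (Fin n → F) :=
  {u | ∃ X ∈ S, X.1.1 = F ∙ u}

lemma exists_span_singleton_add {a : Fin n → F} {G B : ProjPoint F n}
    (hB : B.1 ≤ F ∙ a ⊔ G.1) (hBa : ¬B.1 ≤ F ∙ a) (hBG : B ≠ G) :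
    ∃ v, G.1 = F ∙ v ∧ B.1 = F ∙ (a + v) := by
  obtain ⟨g, hg, rfl⟩ := G.exists_ofVec
  obtain ⟨b, hb, rfl⟩ := B.exists_ofVec
  rw [ProjPoint.coe_ofVec g hg, ← span_insert, ProjPoint.ofVec_le_iff] at hB
  obtain ⟨c, d, rfl⟩ := mem_span_pair.1 hB
  have hc : c ≠ 0 := by
    rintro rfl
    exact hBG (ProjPoint.ofVec_eq_ofVec_iff.2 ⟨d, by module⟩)
  have hd : d ≠ 0 := by
    rintro rfl
    exact hBa (ProjPoint.ofVec_le_iff.2 (mem_span_singleton.2 ⟨c, by module⟩))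
  have hunit : IsUnit (c⁻¹ * d) := (mul_ne_zero (inv_ne_zero hc) hd).isUnit
  refine ⟨(c⁻¹ * d) • g, (span_singleton_smul_eq hunit g).symm, ?_⟩
  have hscale : a + (c⁻¹ * d) • g = c⁻¹ • (c • a + d • g) := by
    rw [smul_add, smul_smul, smul_smul, inv_mul_cancel₀ hc, one_smul]
  rw [hscale, span_singleton_smul_eq (inv_ne_zero hc).isUnit]
  rfl

namespace IsSubplane

variable {S : Finset (PlanePoint W)} {M : Finset (PlaneLine W)} {k : ℕ}

lemma exists_third_point (hS : IsSubplane S M k) (hk : 2 ≤ k) {A : PlanePoint W} {l g : PlaneLine W}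
    (hl : l ∈ M) (hg : g ∈ M) (hAl : A ∈ l) (hAg : A ∉ g) {a : Fin n → F} (hAa : A.1.1 = F ∙ a) :
    ∃ v ∈ representatives S, a + v ∈ representatives S ∧ l.1 = span F {a, v} := by
  obtain ⟨G, hG, hGl, hGg⟩ := hS.exists_point hl hg fun h ↦ hAg (h ▸ hAl)
  have hAG : A ≠ G := fun h ↦ hAg (h ▸ hGg)
  have hlt : #({A, G} : Finset (PlanePoint W)) < secantCard S l := by
    rw [hS.secantCard_eq hl]
    exact card_le_two.trans_lt (Nat.lt_succ_of_le hk)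
  obtain ⟨B, hB, hBAG⟩ := exists_mem_notMem_of_card_lt_card hlt
  rw [mem_insert, mem_singleton, not_or] at hBAG
  obtain ⟨hBS, hBl⟩ := mem_filter.1 hB
  have hl_eq := ProjPoint.sup_eq_of_le (fun h ↦ hAG (Subtype.ext h)) l.2.1 hAl hGl
  obtain ⟨v, hGv, hBv⟩ := exists_span_singleton_add (a := a) (G := G.1) (B := B.1)
    (by rw [← hAa, hl_eq]; exact hBl)
    (fun h ↦ hBAG.1 (Subtype.ext (ProjPoint.eq_of_le (h.trans_eq hAa.symm))))
    fun h ↦ hBAG.2 (Subtype.ext h)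
  refine ⟨v, ⟨G, hG, hGv⟩, ⟨B, hBS, hBv⟩, ?_⟩
  rw [← hl_eq, hAa, hGv, ← span_insert]

lemma exists_quadrangle (hS : IsSubplane S M k) (hk : 2 ≤ k) : ∃ a v w : Fin n → F,
    LinearIndependent F ![w, a, v] ∧ a ∈ representatives S ∧ v ∈ representatives S ∧
      w ∈ representatives S ∧ a + v ∈ representatives S ∧ a + w ∈ representatives S ∧
      ∃ l ∈ M, l.1 = span F {a, v} := by
  obtain ⟨A, hA, l, hl, m, hm, g, hg, hlm, hAl, hAm, hAg⟩ := hS.exists_config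
  obtain ⟨a, ha0, hAa⟩ := A.1.exists_ofVec
  have hAa : A.1.1 = F ∙ a := (congrArg Subtype.val hAa).symm
  obtain ⟨v, hv, hav, hlv⟩ := hS.exists_third_point hk hl hg hAl hAg hAa
  obtain ⟨w, hw, haw, hmw⟩ := hS.exists_third_point hk hm hg hAm hAg hAa
  have hli : LinearIndependent F ![a, v] := (LinearIndependent.pair_iff' ha0).2 fun c hc ↦ by
    have hdim := l.2.1
    rw [hlv, ← hc, span_insert, sup_eq_left.2 (span_singleton_smul_le F c a),
      finrank_span_singleton ha0] at hdim
    exact absurd hdim (by norm_num)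
  refine ⟨a, v, w, linearIndependent_triple_iff_notMem.2 ⟨hli, fun hwl ↦ hlm ?_⟩,
    ⟨A, hA, hAa⟩, hv, hw, hav, haw, l, hl, hlv⟩
  refine (Subtype.ext (eq_of_le_of_finrank_eq ?_ (m.2.1.trans l.2.1.symm))).symm
  rw [hmw, hlv]
  exact span_le.2 (Set.pair_subset (subset_span (Set.mem_insert a {v})) hwl)

variable [Fact (finrank F W = 3)]

lemma mem_representatives_of_mem_span_pair (hS : IsSubplane S M k) {u u' t t' z : Fin n → F}
    (hu : u ∈ representatives S) (hu' : u' ∈ representatives S) (ht : t ∈ representatives S)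
    (ht' : t' ∈ representatives S) (hut : u ∉ span F {t, t'}) (hz : z ≠ 0)
    (hzu : z ∈ span F {u, u'}) (hzt : z ∈ span F {t, t'}) : z ∈ representatives S := by
  obtain ⟨X, hX, hXu⟩ := hu
  obtain ⟨X', hX', hXu'⟩ := hu'
  obtain ⟨T, hT, hTt⟩ := ht
  obtain ⟨T', hT', hTt'⟩ := ht'
  let Z : ProjPoint F n := .ofVec z hz
  have hXT : ¬X.1.1 ≤ T.1.1 ⊔ T'.1.1 := by
    rwa [hXu, hTt, hTt', ← span_insert, span_singleton_le_iff_mem]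
  have hZX : Z.1 ≤ X.1.1 ⊔ X'.1.1 := by
    rwa [hXu, hXu', ← span_insert, ProjPoint.ofVec_le_iff]
  have hZT : Z.1 ≤ T.1.1 ⊔ T'.1.1 := by
    rwa [hTt, hTt', ← span_insert, ProjPoint.ofVec_le_iff]
  have hXX' : X ≠ X' := by
    rintro rfl
    rw [sup_idem] at hZX
    exact hXT (ProjPoint.eq_of_le hZX ▸ hZT)
  by_cases hTT' : T = T'
  · subst hTT'
    rw [sup_idem] at hZT
    exact ⟨T, hT, congrArg Subtype.val (ProjPoint.eq_of_le hZT).symm⟩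
  · obtain ⟨l, hl, hXl, hX'l⟩ := hS.exists_line hX hX' hXX'
    obtain ⟨m, hm, hTm, hT'm⟩ := hS.exists_line hT hT' hTT'
    have hXm : X ∉ m := fun h ↦ hXT <| by
      rwa [ProjPoint.sup_eq_of_le (fun h ↦ hTT' (Subtype.ext h)) m.2.1 hTm hT'm]
    have hlm : l ≠ m := fun h ↦ hXm (h ▸ hXl)
    obtain ⟨Y, hY, hYl, hYm⟩ := hS.exists_point hl hm hlm
    let Z' : PlanePoint W := ⟨Z, hZX.trans (sup_le X.2 X'.2)⟩
    have hYZ : Y = Z' := (Nondegenerate.eq_or_eq hYl (show Z' ∈ l from hZX.trans (sup_le hXl hX'l))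
      hYm (show Z' ∈ m from hZT.trans (sup_le hTm hT'm))).resolve_right hlm
    exact ⟨Y, hY, congrArg (fun X : PlanePoint W ↦ X.1.1) hYZ⟩

-- The quadrangle `a`, `v`, `w`, `a + v + w` coordinatizes the subplane: `a + v + w` and
-- `w - j • v` are auxiliary intersection points in the step from `a + j • v` to `a + (j + 1) • v`.
lemma add_natCast_smul_mem_representatives (hS : IsSubplane S M k) {a v w : Fin n → F}
    (h : LinearIndependent F ![w, a, v]) (ha : a ∈ representatives S)
    (hv : v ∈ representatives S) (hw : w ∈ representatives S) (hav : a + v ∈ representatives S)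
    (haw : a + w ∈ representatives S) (j : ℕ) : a + (j : F) • v ∈ representatives S := by
  have havw : a + v + w ∈ representatives S := by
    refine hS.mem_representatives_of_mem_span_pair hv haw hav hw (fun hmem ↦ ?_) (fun h0 ↦ ?_)
      (mem_span_pair.2 ⟨1, 1, by module⟩) (mem_span_pair.2 ⟨1, 1, by module⟩)
    · obtain ⟨c, d, hcd⟩ := mem_span_pair.1 hmem
      obtain ⟨-, hc, hc'⟩ := triple_coeff_eq h (z := d) (x := c) (y := c) (z' := 0) (x' := 0)
        (y' := 1) (by linear_combination (norm := module) hcd)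
      exact zero_ne_one (hc.symm.trans hc')
    · exact one_ne_zero (linearIndependent_triple_iff_forall.1 h 1 1 1 (by rw [← h0]; module)).1
  induction j with
  | zero => rwa [Nat.cast_zero, zero_smul, add_zero]
  | succ j ih =>
    have hwv : w - (j : F) • v ∈ representatives S := by
      refine hS.mem_representatives_of_mem_span_pair haw ih hv hw (fun hmem ↦ ?_) (fun h0 ↦ ?_)
        (mem_span_pair.2 ⟨1, -1, by module⟩) (mem_span_pair.2 ⟨-(j : F), 1, by module⟩)
      · obtain ⟨c, d, hcd⟩ := mem_span_pair.1 hmem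
        exact zero_ne_one (triple_coeff_eq h (z := d) (x := 0) (y := c) (z' := 1) (x' := 1)
          (y' := 0) (by linear_combination (norm := module) hcd)).2.1
      · exact one_ne_zero (linearIndependent_triple_iff_forall.1 h 1 0 (-(j : F))
          (by rw [← h0]; module)).1
    refine hS.mem_representatives_of_mem_span_pair havw hwv ha hv (fun hmem ↦ ?_) (fun h0 ↦ ?_)
      (mem_span_pair.2 ⟨1, -1, by push_cast; module⟩)
      (mem_span_pair.2 ⟨1, ((j + 1 : ℕ) : F), by module⟩)
    · obtain ⟨c, d, hcd⟩ := mem_span_pair.1 hmem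
      exact zero_ne_one (triple_coeff_eq h (z := 0) (x := c) (y := d) (z' := 1) (x' := 1)
        (y' := 1) (by linear_combination (norm := module) hcd)).1
    · exact one_ne_zero (linearIndependent_triple_iff_forall.1 h 0 1 ((j + 1 : ℕ) : F)
        (by rw [← h0]; module)).2.1

end IsSubplane

lemma not_isSubplane [Fact (finrank F W = 3)] {p : ℕ} [CharP F p] (hp : 3 ≤ p)
    (S : Finset (PlanePoint W)) (M : Finset (PlaneLine W)) : ¬IsSubplane S M (p - 1) := by
  intro hS
  obtain ⟨a, v, w, h, ha, hv, hw, hav, haw, l, hl, hlv⟩ := hS.exists_quadrangle (by omega)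
  obtain ⟨G, hG, hGv⟩ := hv
  choose X hXS hX using hS.add_natCast_smul_mem_representatives h ha ⟨G, hG, hGv⟩ hw hav haw
  have hinj : Set.InjOn X (range p) := fun i hi j hj hij ↦ by
    obtain ⟨c, hc⟩ := mem_span_singleton.1 <|
      (span_singleton_le_iff_mem _ _).1 ((hX i).symm.trans (hij ▸ hX j)).le
    obtain ⟨-, hc1, hcij⟩ := triple_coeff_eq h (z := 0) (x := c) (y := c * j) (z' := 0) (x' := 1)
      (y' := i) (by linear_combination (norm := module) hc)
    rw [hc1, one_mul, CharP.natCast_eq_natCast F p] at hcij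
    exact (Nat.ModEq.eq_of_lt_of_lt hcij (mem_range.1 hj) (mem_range.1 hi)).symm
  have hmaps : Set.MapsTo X (range p) ({Y ∈ S | Y ∈ l}.erase G : Finset (PlanePoint W)) := by
    intro j _
    refine mem_erase.2 ⟨fun hXG ↦ ?_, mem_filter.2 ⟨hXS j, ?_⟩⟩
    · obtain ⟨c, hc⟩ := mem_span_singleton.1 <|
        (span_singleton_le_iff_mem _ _).1 ((hX j).symm.trans (hXG ▸ hGv)).le
      exact zero_ne_one (triple_coeff_eq h (z := 0) (x := 0) (y := c) (z' := 0) (x' := 1)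
        (y' := j) (by linear_combination (norm := module) hc)).2.1
    · rw [mem_planeLine_iff, hX, hlv, span_singleton_le_iff_mem]
      exact mem_span_pair.2 ⟨1, j, by rw [one_smul]⟩
  have hGl : G ∈ ({Y ∈ S | Y ∈ l} : Finset (PlanePoint W)) := by
    refine mem_filter.2 ⟨hG, ?_⟩
    rw [mem_planeLine_iff, hGv, hlv]
    exact span_mono (Set.subset_insert a {v})
  have hle := card_le_card_of_injOn X hmaps hinj
  have hcard : #{Y ∈ S | Y ∈ l} = p - 1 + 1 := hS.secantCard_eq hl
  rw [card_range, card_erase_of_mem hGl, hcard] at hle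
  omega

end Subplanes

section PlaneCodes

open Finset Submodule Configuration Configuration.ProjectivePlane
open scoped Classical

variable {F : Type} [Field F] [Fintype F] {n p : ℕ} {V : Set (ProjPoint F n)}
  {W : Submodule F (Fin n → F)}

/-- The points of `W` in `V`, as a set of points of the plane `W`. -/
noncomputable def trace (W : Submodule F (Fin n → F)) (V : Set (ProjPoint F n)) :
    Finset (PlanePoint W) :=
  {X | X.1 ∈ V}

@[simp]
lemma mem_trace {X : PlanePoint W} : X ∈ trace W V ↔ X.1 ∈ V :=
  mem_filter_univ X

lemma card_filter_trace {U : Submodule F (Fin n → F)} (hU : U ≤ W) :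
    #{X ∈ trace W V | X.1.1 ≤ U} = secant F n V U := by
  rw [secant_eq_card, ← card_map (Function.Embedding.subtype _)]
  congr 1
  ext X
  simp only [mem_map, mem_filter, mem_univ, true_and, mem_trace, Function.Embedding.subtype_apply]
  exact ⟨fun ⟨Y, hY, hYX⟩ ↦ hYX ▸ hY, fun hX ↦ ⟨⟨X, hX.2.trans hU⟩, hX, rfl⟩⟩

lemma card_trace : #(trace W V) = secant F n V W := by
  rw [← card_filter_trace le_rfl, filter_true_of_mem fun X _ ↦ X.2]

lemma secantCard_trace (l : PlaneLine W) : secantCard (trace W V) l = secant F n V l.1 :=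
  card_filter_trace l.2.2

lemma order_planePoint [Fact (finrank F W = 3)] :
    order (PlanePoint W) (PlaneLine W) = Fintype.card F := by
  obtain ⟨-, -, -, l, -⟩ := exists_config (P := PlanePoint W) (L := PlaneLine W)
  have hpoints : pointsOn (PlanePoint W) l = ({X ∈ trace W Set.univ | X.1.1 ≤ l.1} : Finset _) := by
    ext X
    simp [mem_planeLine_iff]
  have hcard := card_pointsOn (P := PlanePoint W) l
  rw [hpoints, card_filter_trace l.2.2, secant_eq_card] at hcard
  simp only [Set.mem_univ, true_and, card_points_le, l.2.1, sum_range_succ, range_zero, sum_empty,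
    pow_zero, pow_one] at hcard
  omega

/-- The restriction of the code of the hyperplanes of PG(n-1, |F|) to the subspace `W`. -/
noncomputable def planeCode (p : ℕ) (W : Submodule F (Fin n → F)) :
    Submodule (ZMod p) (PlanePoint W → ZMod p) :=
  (hypCode F p n).map (LinearMap.funLeft (ZMod p) (ZMod p) Subtype.val)

lemma indVec_trace : indVec p (trace W V) = charVec F p n V ∘ Subtype.val := by
  ext X
  simp [indVec, charVec, Set.indicator_apply]

lemma indVec_trace_mem (hV : charVec F p n V ∈ hypCode F p n) :
    indVec p (trace W V) ∈ planeCode p W :=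
  ⟨_, hV, indVec_trace.symm⟩

lemma wordSupport_comp_val (f : ProjPoint F n → ZMod p) :
    wordSupport (f ∘ Subtype.val : PlanePoint W → ZMod p) = trace W f.support := by
  ext X
  simp

omit [Fintype F] in
lemma exists_finrank_eq_inf_eq {U : Submodule F (Fin n → F)} (hUW : U ≤ W)
    (hrank : finrank F W = finrank F U + 1) :
    ∃ H : Submodule F (Fin n → F), finrank F H = n - 1 ∧ H ⊓ W = U := by
  obtain ⟨v, hvW, hvU⟩ := SetLike.exists_of_lt
    (lt_of_le_of_ne hUW (by rintro rfl; omega))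
  obtain ⟨φ, hφ, hle⟩ := exists_le_ker_of_notMem hvU
  have hker := Dual.finrank_ker_add_one_of_ne_zero (f := φ) (by rintro rfl; exact hφ rfl)
  rw [finrank_fin_fun] at hker
  refine ⟨LinearMap.ker φ, by omega, (eq_of_le_of_finrank_le (le_inf hle hUW) ?_).symm⟩
  have hlt : LinearMap.ker φ ⊓ W < W := inf_lt_right.2 fun h ↦ hφ (h hvW)
  have := finrank_lt_finrank_of_lt hlt
  omega

lemma isLineCode_planeCode [Fact (finrank F W = 3)] [Fact p.Prime] [CharP F p] :
    IsLineCode (PlaneLine W) (planeCode p W) where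
  indVec_pointsOn_mem l := by
    obtain ⟨H, hH, hHl⟩ := exists_finrank_eq_inf_eq l.2.2
      ((Fact.out : finrank F W = 3).trans (congrArg (· + 1) l.2.1.symm))
    have hpoints : pointsOn (PlanePoint W) l = trace W (pointsIn F n H) := by
      ext X
      simp only [mem_pointsOn, mem_planeLine_iff, ← hHl, le_inf_iff, X.2, and_true, mem_trace]
      rfl
    rw [hpoints]
    exact indVec_trace_mem (subset_span ⟨H, hH, rfl⟩)
  secantCard_add_mul_le := by
    rintro _ ⟨f, hf, rfl⟩ R l m hRl hRm hlm hfR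
    have hsupp := wordSupport_comp_val (W := W) f
    rw [show LinearMap.funLeft (ZMod p) (ZMod p) Subtype.val f = f ∘ Subtype.val from rfl, hsupp,
      secantCard_trace, secantCard_trace, card_trace, order_planePoint]
    exact secant_support_add_mul_le hf l.2.1 m.2.1 (Subtype.coe_injective.ne hlm) l.2.2 m.2.2
      hRl hRm hfR

section Lines

variable [Fact p.Prime] {l : Submodule F (Fin n → F)}

lemma secant_le_or_le (hp3 : 3 < p) (hF : Fintype.card F = p ^ 4)
    (hV : charVec F p n V ∈ hypCode F p n) (hW : finrank F W = 3) (hl : finrank F l = 2)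
    (hlW : l ≤ W) (hs : secant F n V l ≡ 1 [MOD p])
    (hcard : secant F n V W ≤ p ^ 6 + secant F n V l) :
    secant F n V l ≤ p ^ 2 + 1 ∨ p ^ 4 + 1 ≤ secant F n V l + p ^ 2 := by
  have := Fact.mk hW
  have := charP_of_card_eq_prime_pow hF
  have hgap := (isLineCode_planeCode (p := p)).secantCard_le_or_le hp3 (order_planePoint.trans hF)
    (indVec_trace_mem (W := W) hV) (l := ⟨l, hl, hlW⟩)
  rw [secantCard_trace, card_trace] at hgap
  exact hgap hs hcard

lemma secant_eq_or_of_le_secant_add (hp3 : 3 < p) (hF : Fintype.card F = p ^ 4)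
    (hV : charVec F p n V ∈ hypCode F p n) (hW : finrank F W = 3) (hl : finrank F l = 2)
    (hlW : l ≤ W)
    (hs : ∀ m : Submodule F (Fin n → F), finrank F m = 2 → secant F n V m ≡ 1 [MOD p])
    (hgap : ∀ m : Submodule F (Fin n → F), finrank F m = 2 →
      secant F n V m ≤ p ^ 2 + 1 ∨ p ^ 4 + 1 ≤ secant F n V m + p ^ 2)
    (hcard : secant F n V W ≤ (p ^ 2 + 1) * (p ^ 4 + 1))
    (hle : p ^ 4 + 1 ≤ secant F n V l + p ^ 2) :
    secant F n V l = p ^ 4 + 1 ∨ secant F n V l + p = p ^ 4 + 1 ∧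
      ∃ m : Submodule F (Fin n → F), finrank F m = 2 ∧ secant F n V m + p = p ^ 2 + 1 := by
  have := Fact.mk hW
  have := charP_of_card_eq_prime_pow hF
  have horder : order (PlanePoint W) (PlaneLine W) = p ^ 4 := order_planePoint.trans hF
  have hmem_dense (m : PlaneLine W) : m ∈ denseLines (PlaneLine W) (p ^ 2) (trace W V) ↔
      p ^ 4 + 1 ≤ secant F n V m.1 + p ^ 2 := by
    rw [mem_denseLines, secantCard_trace, horder]
  have hl_mem := (hmem_dense ⟨l, hl, hlW⟩).2 hle
  have hsum := isLineCode_planeCode.isSmallLineSum_denseLines hp3 horder (indVec_trace_mem hV)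
    (fun m ↦ secantCard_trace m ▸ hs m.1 m.2.1)
    (fun m ↦ by rw [hmem_dense, secantCard_trace]; exact hgap m.1 m.2.1)
    (card_trace.trans_le hcard) ⟨_, hl_mem⟩
  have hsecant := hsum.secantCard_eq_or hp3 horder
    (fun S ↦ not_isSubplane hp3.le S _) hl_mem
    (secantCard_trace (V := V) ⟨l, hl, hlW⟩ ▸ hs l hl)
  simp only [secantCard_trace] at hsecant
  exact hsecant.imp_right (And.imp_right fun ⟨m, hm⟩ ↦ ⟨m.1, m.2.1, hm⟩)

lemma secant_plane_eq_or (hp3 : 3 < p) (hF : Fintype.card F = p ^ 4)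
    (hV : charVec F p n V ∈ hypCode F p n) (hW : finrank F W = 3) (hl : finrank F l = 2)
    (hlW : l ≤ W)
    (hs : ∀ m : Submodule F (Fin n → F), finrank F m = 2 → secant F n V m ≡ 1 [MOD p])
    (hgap : ∀ m : Submodule F (Fin n → F), finrank F m = 2 →
      secant F n V m ≤ p ^ 2 + 1 ∨ p ^ 4 + 1 ≤ secant F n V m + p)
    (h2 : 2 ≤ secant F n V l) (hle : secant F n V l ≤ p ^ 2) :
    secant F n V W = 1 + secant F n V l * p ^ 4 ∨
      secant F n V W + p ^ 3 + p ^ 2 = (p ^ 2 + 1) * (p ^ 4 + 1) ∧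
        ∃ m : Submodule F (Fin n → F), finrank F m = 2 ∧ secant F n V m + p = p ^ 2 + 1 := by
  have := Fact.mk hW
  have := charP_of_card_eq_prime_pow hF
  have horder : order (PlanePoint W) (PlaneLine W) = p ^ 4 := order_planePoint.trans hF
  have hl_secant : secantCard (trace W V) (⟨l, hl, hlW⟩ : PlaneLine W) = secant F n V l :=
    secantCard_trace _
  have hne : (trace W V).Nonempty := by
    refine Finset.nonempty_of_ne_empty fun h ↦ ?_
    rw [h, secantCard, filter_empty, card_empty] at hl_secant
    omega
  have hcard := isLineCode_planeCode.card_eq_or hp3 horder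
    (fun S _ ↦ not_isSubplane hp3.le S _) (indVec_trace_mem hV) hne
    (fun m ↦ secantCard_trace m ▸ hs m.1 m.2.1)
    (fun m ↦ by rw [mem_denseLines, secantCard_trace, horder]; exact hgap m.1 m.2.1)
    (hl_secant ▸ h2) (hl_secant ▸ hle)
  simp only [secantCard_trace, card_trace] at hcard
  exact hcard.imp_right (And.imp_right fun ⟨m, hm⟩ ↦ ⟨m.1, m.2.1, hm⟩)

end Lines
end PlaneCodes

section HermitianCardinality

/-- `v` is the number of points of a non-singular Hermitian variety of PG(r, q²), in the form
multiplied through by `q² - 1`. -/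
def IsHermitianCard (q r v : ℕ) : Prop :=
  (v : ℤ) * ((q : ℤ) ^ 2 - 1) = ((q : ℤ) ^ (r + 1) + (-1) ^ r) * ((q : ℤ) ^ r - (-1) ^ r)

lemma modEq_of_mul_sq_sub_one_eq {q v : ℤ} (hq : q ^ 2 - 1 ≠ 0) {a b : ℕ} (ha : Odd a)
    (h : v * (q ^ 2 - 1) = (q ^ a + 1) * (q ^ b - 1)) : v ≡ b [ZMOD q - 1] := by
  have hodd := geom_sum_mul (-q) a
  have hgeom := geom_sum_mul q b
  rw [ha.neg_pow] at hodd
  have hv : v = (∑ i ∈ Finset.range a, (-q) ^ i) * ∑ i ∈ Finset.range b, q ^ i :=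
    mul_right_cancel₀ hq (by linear_combination h + (q ^ b - 1) * hodd
      - (q + 1) * (∑ i ∈ Finset.range a, (-q) ^ i) * hgeom)
  have hq1 : q ≡ 1 [ZMOD q - 1] := (Int.modEq_sub q 1)
  have hsum_neg : ∑ i ∈ Finset.range a, (-q) ^ i ≡ 1 [ZMOD q - 1] := by
    have := Int.ModEq.sum (s := Finset.range a) fun i _ ↦ hq1.neg.pow i
    rwa [neg_one_geom_sum, if_neg (Nat.not_even_iff_odd.2 ha)] at this
  have hsum : ∑ i ∈ Finset.range b, q ^ i ≡ b [ZMOD q - 1] := by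
    simpa using Int.ModEq.sum (s := Finset.range b) fun i _ ↦ hq1.pow i
  simpa [hv] using hsum_neg.mul hsum

namespace IsHermitianCard

variable {q r v : ℕ}

lemma modEq_one (hv : IsHermitianCard q r v) (hr : r ≠ 0) : v ≡ 1 [MOD q] := by
  have hsign : (-1 : ℤ) ^ r * (-1) ^ r = 1 := by rw [← mul_pow, neg_one_mul, neg_neg, one_pow]
  obtain ⟨k, rfl⟩ := Nat.exists_eq_add_one_of_ne_zero hr
  refine (Int.natCast_modEq_iff.1 (Int.modEq_iff_dvd.2 ?_))
  refine ⟨(q : ℤ) ^ k * ((q : ℤ) ^ (k + 2) + (-1) ^ (k + 1))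
    - (-1) ^ (k + 1) * (q : ℤ) ^ (k + 1) - v * q, ?_⟩
  unfold IsHermitianCard at hv
  push_cast
  linear_combination hv - hsign

lemma modEq_or (hv : IsHermitianCard q r v) (hq : 2 ≤ q) :
    v ≡ r [MOD q - 1] ∨ v ≡ r + 1 [MOD q - 1] := by
  have hq0 : (q : ℤ) ^ 2 - 1 ≠ 0 := by nlinarith
  have hcast : ((q - 1 : ℕ) : ℤ) = q - 1 := by omega
  simp only [← Int.natCast_modEq_iff, hcast]
  unfold IsHermitianCard at hv
  rcases r.even_or_odd with hr | hr
  · left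
    refine modEq_of_mul_sq_sub_one_eq hq0 hr.add_one ?_
    rwa [hr.neg_one_pow] at hv
  · right
    refine modEq_of_mul_sq_sub_one_eq hq0 hr ?_
    rw [hr.neg_one_pow] at hv
    linear_combination hv

lemma lt_geom_sum_mul (hv : IsHermitianCard q r v) (hq : 2 ≤ q) (hr : 4 ≤ r) :
    v < (∑ i ∈ Finset.range (r - 1), (q ^ 2) ^ i) * (q ^ 3 + 1) := by
  obtain ⟨k, rfl⟩ := Nat.exists_eq_add_of_le' hr
  have hq' : (2 : ℤ) ≤ q := by exact_mod_cast hq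
  have hgeom := geom_sum_mul ((q : ℤ) ^ 2) (k + 4 - 1)
  zify
  refine lt_of_mul_lt_mul_right ?_ (by nlinarith : (0 : ℤ) ≤ (q : ℤ) ^ 2 - 1)
  rw [hv, mul_right_comm, hgeom, show k + 4 - 1 = k + 3 from rfl]
  obtain ⟨a, ha⟩ : ∃ a : ℤ, a = (q : ℤ) ^ k := ⟨_, rfl⟩
  have ha1 : 1 ≤ a := ha ▸ one_le_pow₀ (by omega)
  have hpow1 : (q : ℤ) ^ (k + 4 + 1) = a * q ^ 5 := by rw [ha]; ring
  have hpow : (q : ℤ) ^ (k + 4) = a * q ^ 4 := by rw [ha]; ring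
  have hpow2 : ((q : ℤ) ^ 2) ^ (k + 3) = a ^ 2 * q ^ 6 := by rw [ha]; ring
  have hlead : 2 * (a * (q : ℤ) ^ 5) ≤ a ^ 2 * q ^ 6 := by
    calc 2 * (a * (q : ℤ) ^ 5) ≤ q * (a * q ^ 5) := by gcongr
      _ = a * 1 * q ^ 6 := by ring
      _ ≤ a * a * q ^ 6 := by gcongr
      _ = a ^ 2 * q ^ 6 := by ring
  have hcube : (q : ℤ) ^ 3 ≤ a * q ^ 5 := by
    calc (q : ℤ) ^ 3 ≤ q ^ 5 := by gcongr <;> omega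
      _ ≤ a * q ^ 5 := le_mul_of_one_le_left (by positivity) ha1
  have hfour : 0 < a * (q : ℤ) ^ 4 := by positivity
  have hfive : a * (q : ℤ) ^ 4 ≤ a * q ^ 5 := by gcongr <;> omega
  have hthree : 0 < (q : ℤ) ^ 3 := by positivity
  rw [hpow1, hpow, hpow2]
  rcases neg_one_pow_eq_or ℤ (k + 4) with h | h <;> rw [h] <;> linarith

end IsHermitianCard
end HermitianCardinality

section Covers

open Finset
open scoped Classical

variable {F : Type} [Field F] [Fintype F] {n : ℕ} {V : Set (ProjPoint F n)}
  {U : Submodule F (Fin n → F)} {k : ℕ}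

lemma exists_mem_covers_secant_le (h : V.ncard < #(covers U) * (k + 1)) :
    ∃ K ∈ covers U, secant F n V K ≤ k + secant F n V U := by
  by_contra! hlt
  have hsum := sum_secant_covers_add_secant V U
  have hle : #(covers U) * (k + secant F n V U + 1) ≤ ∑ K ∈ covers U, secant F n V K := by
    simpa only [smul_eq_mul] using card_nsmul_le_sum (covers U) (secant F n V) _ hlt
  linarith

lemma ncard_modEq_of_secant_covers_modEq
    (h : ∀ K ∈ covers U, secant F n V K ≡ secant F n V U + 1 [MOD k]) :
    V.ncard ≡ #(covers U) + secant F n V U [MOD k] := by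
  have hsum : ∑ K ∈ covers U, secant F n V K ≡ #(covers U) * (secant F n V U + 1) [MOD k] := by
    simpa only [sum_const, smul_eq_mul] using Nat.ModEq.sum h
  refine Nat.ModEq.add_right_cancel' (#(covers U) * secant F n V U) ?_
  rw [← sum_secant_covers_add_secant]
  convert hsum.add_right (secant F n V U) using 1
  ring

lemma card_covers_modEq (hk : Fintype.card F ≡ 1 [MOD k]) :
    #(covers U) ≡ n - finrank F U [MOD k] := by
  rw [card_covers]
  simpa using Nat.ModEq.sum (s := range (n - finrank F U)) fun i _ ↦ hk.pow i

lemma secant_le_card_add_one (hU : finrank F U = 2) : secant F n V U ≤ Fintype.card F + 1 := by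
  rw [secant_eq_card]
  calc #{X | X ∈ V ∧ X.1 ≤ U} ≤ #{X : ProjPoint F n | X.1 ≤ U} :=
        card_le_card (monotone_filter_right _ fun _ _ h ↦ h.2)
    _ = Fintype.card F + 1 := by rw [card_points_le, hU, geom_sum_two]

end Covers

section Lines

open Finset
open scoped Classical

variable {F : Type} [Field F] [Fintype F] {p r : ℕ} {V : Set (ProjPoint F (r + 1))}
  {l : Submodule F (Fin (r + 1) → F)}

lemma exists_plane_secant_le (hp : 2 ≤ p) (hr : 4 ≤ r) (hF : Fintype.card F = p ^ 4)
    (hcard : IsHermitianCard (p ^ 2) r V.ncard) (hl : finrank F l = 2) :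
    ∃ W, l ≤ W ∧ finrank F W = 3 ∧ secant F (r + 1) V W ≤ p ^ 6 + secant F (r + 1) V l := by
  have hlt := hcard.lt_geom_sum_mul (by nlinarith) hr
  have hcovers : #(covers l) = ∑ i ∈ range (r - 1), ((p ^ 2) ^ 2) ^ i := by
    rw [card_covers, hl, hF, ← pow_mul]
    rfl
  rw [← hcovers, ← pow_mul] at hlt
  obtain ⟨W, hW, hle⟩ := exists_mem_covers_secant_le hlt
  rw [mem_covers, hl] at hW
  exact ⟨W, hW.1, hW.2, hle⟩

lemma secant_line_modEq_one (hr : r ≠ 0) (hF : Fintype.card F = p ^ 4)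
    (hV : charVec F p (r + 1) V ∈ hypCode F p (r + 1))
    (hcard : IsHermitianCard (p ^ 2) r V.ncard) (hl : finrank F l = 2) :
    secant F (r + 1) V l ≡ 1 [MOD p] :=
  (secant_modEq_ncard (hF ▸ dvd_pow_self p four_ne_zero) hV hl.ge).trans
    ((hcard.modEq_one hr).of_dvd (dvd_pow_self p two_ne_zero))

lemma sq_modEq_one (hp : p ≠ 0) : p ^ 2 ≡ 1 [MOD p ^ 2 - 1] :=
  Nat.modEq_sub (Nat.one_le_pow 2 p (Nat.pos_of_ne_zero hp))

lemma pow_four_modEq_one (hp : p ≠ 0) : p ^ 4 ≡ 1 [MOD p ^ 2 - 1] := by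
  simpa only [← pow_mul, one_pow] using (sq_modEq_one hp).pow 2

lemma modEq_add_one_of_eq_one_add_mul {s t : ℕ} (hp : p ≠ 0) (h : t = 1 + s * p ^ 4) :
    t ≡ s + 1 [MOD p ^ 2 - 1] := by
  rw [h, add_comm s]
  simpa only [mul_one] using ((pow_four_modEq_one hp).mul_left s).add_left 1

lemma secant_modEq_or_of_secant_planes_modEq (hp : 2 ≤ p) (hr : r ≠ 0)
    (hF : Fintype.card F = p ^ 4) (hcard : IsHermitianCard (p ^ 2) r V.ncard)
    (hl : finrank F l = 2)
    (hplanes : ∀ W, l ≤ W → finrank F W = 3 →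
      secant F (r + 1) V W ≡ secant F (r + 1) V l + 1 [MOD p ^ 2 - 1]) :
    1 ≡ secant F (r + 1) V l [MOD p ^ 2 - 1] ∨ 2 ≡ secant F (r + 1) V l [MOD p ^ 2 - 1] := by
  obtain ⟨k, rfl⟩ := Nat.exists_eq_add_one_of_ne_zero hr
  have hcovers : #(covers l) ≡ k [MOD p ^ 2 - 1] := by
    have h := card_covers_modEq (U := l) (hF ▸ pow_four_modEq_one (by omega : p ≠ 0))
    rwa [hl] at h
  have hncard : V.ncard ≡ k + secant F (k + 1 + 1) V l [MOD p ^ 2 - 1] := by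
    refine (ncard_modEq_of_secant_covers_modEq fun K hK ↦ ?_).trans (hcovers.add_right _)
    rw [mem_covers, hl] at hK
    exact hplanes K hK.1 hK.2
  exact (hcard.modEq_or (by nlinarith)).imp
    (fun h ↦ Nat.ModEq.add_left_cancel' k (h.symm.trans hncard))
    (fun h ↦ Nat.ModEq.add_left_cancel' k (h.symm.trans hncard))

lemma eq_or_eq_of_secant_planes_modEq (hp : 2 ≤ p) (hr : r ≠ 0) (hF : Fintype.card F = p ^ 4)
    (hcard : IsHermitianCard (p ^ 2) r V.ncard) (hl : finrank F l = 2)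
    (h2 : 2 ≤ secant F (r + 1) V l) (hle : secant F (r + 1) V l ≤ p ^ 2)
    (hplanes : ∀ W, l ≤ W → finrank F W = 3 →
      secant F (r + 1) V W ≡ secant F (r + 1) V l + 1 [MOD p ^ 2 - 1]) :
    secant F (r + 1) V l = p ^ 2 ∨ secant F (r + 1) V l = 2 := by
  rcases secant_modEq_or_of_secant_planes_modEq hp hr hF hcard hl hplanes with h | h
  · have := h.add_le_of_lt h2
    omega
  · refine or_iff_not_imp_right.2 fun hne ↦ ?_
    have := h.add_le_of_lt (lt_of_le_of_ne h2 (Ne.symm hne))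
    omega

lemma not_secant_planes_modEq (hp : 2 < p) (hr : r ≠ 0) (hF : Fintype.card F = p ^ 4)
    (hV : charVec F p (r + 1) V ∈ hypCode F p (r + 1))
    (hcard : IsHermitianCard (p ^ 2) r V.ncard) (hl : finrank F l = 2)
    (h2 : 2 ≤ secant F (r + 1) V l) (hle : secant F (r + 1) V l ≤ p ^ 2) :
    ¬∀ W, l ≤ W → finrank F W = 3 →
      secant F (r + 1) V W ≡ secant F (r + 1) V l + 1 [MOD p ^ 2 - 1] := by
  intro hplanes
  have hs := secant_line_modEq_one hr hF hV hcard hl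
  rcases eq_or_eq_of_secant_planes_modEq hp.le hr hF hcard hl h2 hle hplanes with h | h
  · have hdvd : p ∣ 1 := (hs.dvd_iff dvd_rfl).1 (h ▸ dvd_pow_self p two_ne_zero)
    exact absurd (Nat.le_of_dvd one_pos hdvd) (by omega)
  · have hdvd : p ∣ 2 - 1 := (Nat.modEq_iff_dvd' one_le_two).1 (h ▸ hs).symm
    exact absurd (Nat.le_of_dvd one_pos hdvd) (by omega)

section Prime

variable [Fact p.Prime]

lemma secant_line_le_or_le (hp3 : 3 < p) (hr : 4 ≤ r) (hF : Fintype.card F = p ^ 4)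
    (hV : charVec F p (r + 1) V ∈ hypCode F p (r + 1))
    (hcard : IsHermitianCard (p ^ 2) r V.ncard) (hl : finrank F l = 2) :
    secant F (r + 1) V l ≤ p ^ 2 + 1 ∨ p ^ 4 + 1 ≤ secant F (r + 1) V l + p ^ 2 := by
  obtain ⟨W, hlW, hW, hle⟩ := exists_plane_secant_le (by omega) hr hF hcard hl
  exact secant_le_or_le hp3 hF hV hW hl hlW
    (secant_line_modEq_one (by omega) hF hV hcard hl) hle

lemma secant_line_le_or_eq (hp3 : 3 < p) (hr : 4 ≤ r) (hF : Fintype.card F = p ^ 4)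
    (hV : charVec F p (r + 1) V ∈ hypCode F p (r + 1))
    (hcard : IsHermitianCard (p ^ 2) r V.ncard) (hl : finrank F l = 2) :
    secant F (r + 1) V l ≤ p ^ 2 + 1 ∨ secant F (r + 1) V l = p ^ 4 + 1 ∨
      secant F (r + 1) V l + p = p ^ 4 + 1 ∧ ∃ m : Submodule F (Fin (r + 1) → F),
        finrank F m = 2 ∧ secant F (r + 1) V m + p = p ^ 2 + 1 := by
  refine (secant_line_le_or_le hp3 hr hF hV hcard hl).imp_right fun hlong ↦ ?_
  obtain ⟨W, hlW, hW, hle⟩ := exists_plane_secant_le (by omega) hr hF hcard hl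
  have hl_le : secant F (r + 1) V l ≤ p ^ 4 + 1 := hF ▸ secant_le_card_add_one hl
  refine secant_eq_or_of_le_secant_add hp3 hF hV hW hl hlW
    (fun m hm ↦ secant_line_modEq_one (by omega) hF hV hcard hm)
    (fun m hm ↦ secant_line_le_or_le hp3 hr hF hV hcard hm) ?_ hlong
  nlinarith

lemma secant_plane_line_eq_or (hp3 : 3 < p) (hr : 4 ≤ r) (hF : Fintype.card F = p ^ 4)
    (hV : charVec F p (r + 1) V ∈ hypCode F p (r + 1))
    (hcard : IsHermitianCard (p ^ 2) r V.ncard) {W : Submodule F (Fin (r + 1) → F)}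
    (hW : finrank F W = 3) (hl : finrank F l = 2) (hlW : l ≤ W)
    (h2 : 2 ≤ secant F (r + 1) V l) (hle : secant F (r + 1) V l ≤ p ^ 2) :
    secant F (r + 1) V W = 1 + secant F (r + 1) V l * p ^ 4 ∨
      secant F (r + 1) V W + p ^ 3 + p ^ 2 = (p ^ 2 + 1) * (p ^ 4 + 1) ∧
        ∃ m : Submodule F (Fin (r + 1) → F),
          finrank F m = 2 ∧ secant F (r + 1) V m + p = p ^ 2 + 1 := by
  refine secant_plane_eq_or hp3 hF hV hW hl hlW
    (fun m hm ↦ secant_line_modEq_one (by omega) hF hV hcard hm) (fun m hm ↦ ?_) h2 hle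
  rcases secant_line_le_or_eq hp3 hr hF hV hcard hm with h | h | ⟨h, -⟩ <;> omega

lemma secant_line_add_ne (hp3 : 3 < p) (hr : 4 ≤ r) (hF : Fintype.card F = p ^ 4)
    (hV : charVec F p (r + 1) V ∈ hypCode F p (r + 1))
    (hcard : IsHermitianCard (p ^ 2) r V.ncard) (hl : finrank F l = 2) :
    secant F (r + 1) V l + p ≠ p ^ 2 + 1 := by
  intro hs
  have hp2 : 3 * p < p ^ 2 := by nlinarith
  have h2 : 2 ≤ secant F (r + 1) V l := by omega
  have hle : secant F (r + 1) V l ≤ p ^ 2 := by omega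
  refine not_secant_planes_modEq (by omega) (by omega) hF hV hcard hl h2 hle fun W hlW hW ↦ ?_
  rcases secant_plane_line_eq_or hp3 hr hF hV hcard hW hl hlW h2 hle with h | ⟨h, -⟩
  · exact modEq_add_one_of_eq_one_add_mul (by omega) h
  · have hsq : p ^ 2 ≡ 1 [MOD p ^ 2 - 1] := sq_modEq_one (by omega)
    have hcube : p * p ^ 2 + p ^ 2 ≡ p + 1 [MOD p ^ 2 - 1] := by
      simpa only [mul_one] using (hsq.mul_left p).add hsq
    refine Nat.ModEq.add_right_cancel' (p + 1) ?_
    calc secant F (r + 1) V W + (p + 1)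
        ≡ secant F (r + 1) V W + (p * p ^ 2 + p ^ 2) [MOD p ^ 2 - 1] :=
          (hcube.add_left _).symm
      _ = (p ^ 2 + 1) * (p ^ 4 + 1) := by rw [← h]; ring
      _ ≡ (p ^ 2 + 1) * (1 + 1) [MOD p ^ 2 - 1] :=
          ((pow_four_modEq_one (by omega)).add_right 1).mul_left _
      _ = p ^ 2 + p ^ 2 + 2 := by ring
      _ ≡ 1 + p ^ 2 + 2 [MOD p ^ 2 - 1] := (hsq.add_right _).add_right 2
      _ = secant F (r + 1) V l + 1 + (p + 1) := by omega

lemma secant_line_lt_two (hp3 : 3 < p) (hr : 4 ≤ r) (hF : Fintype.card F = p ^ 4)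
    (hV : charVec F p (r + 1) V ∈ hypCode F p (r + 1))
    (hcard : IsHermitianCard (p ^ 2) r V.ncard) (hl : finrank F l = 2)
    (hle : secant F (r + 1) V l ≤ p ^ 2) : secant F (r + 1) V l < 2 := by
  by_contra! h2
  refine not_secant_planes_modEq (by omega) (by omega) hF hV hcard hl h2 hle fun W hlW hW ↦ ?_
  rcases secant_plane_line_eq_or hp3 hr hF hV hcard hW hl hlW h2 hle with h | ⟨-, m, hm, h⟩
  · exact modEq_add_one_of_eq_one_add_mul (by omega) h
  · exact absurd h (secant_line_add_ne hp3 hr hF hV hcard hm)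

end Prime

end Lines

theorem stmt19_general {p r : ℕ} (hp : p.Prime) (hp3 : 3 < p) (hr : 4 ≤ r)
    {F : Type} [Field F] [Fintype F] (hF : Fintype.card F = p ^ 4)
    {V : Set (ProjPoint F (r + 1))} (hcard : IsHermitianCard (p ^ 2) r V.ncard)
    (hcode : charVec F p (r + 1) V ∈ hypCode F p (r + 1)) :
    ∀ ℓ : Submodule F (Fin (r + 1) → F), finrank F ℓ = 2 →
      (∀ i : ℕ, 1 < i → i < p ^ 2 + 1 → secant F (r + 1) V ℓ ≠ i) ∧
      secant F (r + 1) V ℓ ≠ p ^ 4 - p + 1 ∧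
      (secant F (r + 1) V ℓ = 1 ∨ secant F (r + 1) V ℓ = p ^ 2 + 1 ∨
        secant F (r + 1) V ℓ = p ^ 4 + 1) := by
  intro ℓ hℓ
  have := Fact.mk hp
  have hp2 : 3 * p < p ^ 2 := by nlinarith
  have hp4 : 2 * p ^ 2 < p ^ 4 := by nlinarith
  suffices h : secant F (r + 1) V ℓ = 1 ∨ secant F (r + 1) V ℓ = p ^ 2 + 1 ∨
      secant F (r + 1) V ℓ = p ^ 4 + 1 from
    ⟨fun i hi hi' ↦ by omega, by omega, h⟩
  have hmod := secant_line_modEq_one (by omega) hF hcode hcard hℓ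
  have hpos : secant F (r + 1) V ℓ ≠ 0 := fun h0 ↦
    hp.not_dvd_one ((hmod.dvd_iff dvd_rfl).1 (h0 ▸ dvd_zero p))
  have hshort := secant_line_lt_two hp3 hr hF hcode hcard hℓ
  rcases secant_line_le_or_eq hp3 hr hF hcode hcard hℓ with h | h | ⟨-, m, hm, h⟩
  · omega
  · exact Or.inr (Or.inr h)
  · exact absurd h (secant_line_add_ne hp3 hr hF hcode hcard hm)

/-- in PG(r, p⁴) (so `q = p²`), no line meets `V` in exactly `i`
points with `1 < i < p² + 1`, and no line meets `V` in exactly `p⁴ - p + 1` points;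
consequently every line meets `V` in exactly `1`, `p² + 1` or `p⁴ + 1` points. -/
theorem stmt19 (p r : ℕ) (hp : p.Prime) (hp3 : 3 < p) (hr : 4 ≤ r)
    (F : Type) [Field F] [Fintype F] (hF : Fintype.card F = p ^ 4)
    (V : Set (ProjPoint F (r + 1))) (hV : IsQuasiHermitian F (p ^ 2) r V)
    (hcode : charVec F p (r + 1) V ∈ hypCode F p (r + 1)) :
    ∀ ℓ : Submodule F (Fin (r + 1) → F), finrank F ℓ = 2 →
      (∀ i : ℕ, 1 < i → i < p ^ 2 + 1 → secant F (r + 1) V ℓ ≠ i) ∧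
      secant F (r + 1) V ℓ ≠ p ^ 4 - p + 1 ∧
      (secant F (r + 1) V ℓ = 1 ∨ secant F (r + 1) V ℓ = p ^ 2 + 1 ∨
        secant F (r + 1) V ℓ = p ^ 4 + 1) :=
  stmt19_general hp hp3 hr hF hV.1 hcode
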